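/- Assume E + D ≪ 1. Then there exists R ∈ (1/2, 3/2) such that: (a) ∫_{∂B_R}∫₀^{1−τ} (f^R)² ≲ τ^{−d} E; (b) there exist densities ρ̄^R_± on ∂B_R with ∫_{∂B_R}(ρ̄^R_±)² ≲ E and W²_{∂B_R}(ρ̄^R_±, f̄^R_±) ≲ E^{(d+3)/(d+2)}; (c) there exists a density ρ̄^{R,lay}_+ on ∂B_R with ∫_{∂B_R}(ρ̄^{R,lay}_+)² ≲ τ² E + D and W²_{∂B_R}(ρ̄^{R,lay}_+, f̄^{R,lay}_+) ≲ τ³ E^{(d+3)/(d+2)} + τ E^{1/(d+2)} D; and (d) sup_{∂B_R} ρ̄^R_± ≲ E^{1/(d+2)}. -/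

import Mathlib

/-!
# A good radius for the fluxes of an optimal transport map

An optimal map is monotone on a conull set `G` of starting points (`exists_monotone_set`): otherwise
exchanging two small sets of starting points by a translation lowers the cost (`not_opt_of_swap`).
Monotonicity turns a displacement `m` at one point into a displacement of at least `m / 6` on a
nearby ball of radius comparable to `m`, so the displacement inside `B_{7/4}` is at most a multiple
`M` of `E ^ (1 / (d + 2))`, and a trajectory that reaches the closed ball of radius `3/2` starts
in `B_{7/4}`. These facts are collected in `GoodMap` (`exists_goodMap`) and are all that the flux
estimates use about `T`.

A trajectory with velocity `v = T x - x` crosses, during a set of times of length `ℓ`, a set of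
radii of measure at most `ℓ |v|`. Hence the flux through `∂B_R` of a quantity `F`, averaged over
`R ∈ (1/2, 3/2)`, is at most `ℓ ∫ F |v|` (`Crossing.average`).

* For the cumulated fluxes `f̄_±` the starting points are projected radially to `∂B_R`. They are
  within `|v| ≤ M` of the crossing points, so the projected density is at most a multiple of `M`,
  and the bathtub inequality bounds its square integral by the first moment of the distance to
  `∂B_R` (`bathtub`, `radial_density`, `projection_lemma`, `flux_density`). On average over `R` the
  square integral is at most `∫ |v|² ≤ E` and the transport cost `∫ |v|³ ≤ M E`.
* In the terminal layer the starting point is replaced by a partner `y` of the endpoint `T x` under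
  a near-optimal coupling of `μ|_O` with the uniform measure, which has bounded density and lies
  within `τ |v| + |T x - y|` of the crossing point (`lay_density`, `lay_flux`).
* For the space-time flux, `T_t` expands distances by at least `1 - t` on `G`, so the interpolant
  has density at most `(1 - t) ^ (-d)` (`GoodMap.push_bound`). Testing the crossing law against a
  function in polar coordinates and using Young's inequality gives an `L²` bound by duality
  (`Crossing.trace`, `signed_flux`).

Finally seven quantities have been bounded on average over `R`, and the first moment method gives
one radius that is good for all of them (`exists_good_radius`).
-/

open MeasureTheory Measure Set Metric
open scoped ENNReal NNReal Topology RealInnerProductSpace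

noncomputable section

abbrev Ed (d : ℕ) : Type := EuclideanSpace ℝ (Fin d)

/-- Squared Euclidean `L²`-Wasserstein distance, as an infimum over couplings. -/
def W2sq {d : ℕ} (μ ν : Measure (Ed d)) : ℝ≥0∞ :=
  sInf { c | ∃ π : Measure (Ed d × Ed d), π.map Prod.fst = μ ∧ π.map Prod.snd = ν ∧
      c = ∫⁻ p, ENNReal.ofReal (‖p.1 - p.2‖ ^ 2) ∂π }

/-- Geodesic distance on the sphere `∂B_R` (for points on the sphere). -/
def geoDist {d : ℕ} (R : ℝ) (x y : Ed d) : ℝ := R * Real.arccos (⟪x, y⟫ / R ^ 2)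

/-- Squared Wasserstein distance on the sphere `∂B_R` with respect to the geodesic distance. -/
def W2geoSq {d : ℕ} (R : ℝ) (μ ν : Measure (Ed d)) : ℝ≥0∞ :=
  sInf { c | ∃ π : Measure (Ed d × Ed d), π.map Prod.fst = μ ∧ π.map Prod.snd = ν ∧
      c = ∫⁻ p, ENNReal.ofReal ((geoDist R p.1 p.2) ^ 2) ∂π }

/-- `T` is the optimal transport map from `χ_Ω dx` to `μ`. -/
def IsOptMap {d : ℕ} (Ω : Set (Ed d)) (μ : Measure (Ed d)) (T : Ed d → Ed d) : Prop :=
  Measurable T ∧ Measure.map T (volume.restrict Ω) = μ ∧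
  ∀ S : Ed d → Ed d, Measurable S → Measure.map S (volume.restrict Ω) = μ →
    ∫⁻ x in Ω, ENNReal.ofReal (‖T x - x‖ ^ 2) ≤ ∫⁻ x in Ω, ENNReal.ofReal (‖S x - x‖ ^ 2)

/-- McCann interpolation `T_t = (1−t)id + tT`, i.e. the trajectory `X(x,t)`. -/
def Tt {d : ℕ} (T : Ed d → Ed d) (t : ℝ) (x : Ed d) : Ed d := (1 - t) • x + t • T x

/-- Entrance time `t^R_−` of the trajectory through `x` into `B̄_R` (`= 1` if it misses). -/
def tmin {d : ℕ} (T : Ed d → Ed d) (R : ℝ) (x : Ed d) : ℝ :=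
  sInf ({t ∈ Icc (0:ℝ) 1 | Tt T t x ∈ closedBall (0 : Ed d) R} ∪ {1})

/-- Exit time `t^R_+` of the trajectory through `x` from `B̄_R` (`= 0` if it misses). -/
def tmax {d : ℕ} (T : Ed d → Ed d) (R : ℝ) (x : Ed d) : ℝ :=
  sSup ({t ∈ Icc (0:ℝ) 1 | Tt T t x ∈ closedBall (0 : Ed d) R} ∪ {0})

/-- Cumulated outgoing flux `f̄^R_+` through `∂B_R` up to time `1−τ`. -/
def Fbarplus {d : ℕ} (Ω : Set (Ed d)) (T : Ed d → Ed d) (R τ : ℝ) : Measure (Ed d) :=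
  Measure.map (fun x => Tt T (tmax T R x) x)
    (volume.restrict {x ∈ Ω | 0 ≤ tmin T R x ∧ tmin T R x < tmax T R x ∧ tmax T R x < 1 - τ})

/-- Cumulated incoming flux `f̄^R_−` through `∂B_R` up to time `1−τ`. -/
def Fbarminus {d : ℕ} (Ω : Set (Ed d)) (T : Ed d → Ed d) (R τ : ℝ) : Measure (Ed d) :=
  Measure.map (fun x => Tt T (tmin T R x) x)
    (volume.restrict {x ∈ Ω | tmin T R x < tmax T R x ∧ 0 < tmin T R x ∧ tmin T R x < 1 - τ})

/-- Terminal-layer outgoing flux `f̄^{R,lay}_+` through `∂B_R` in `(1−τ,1)`. -/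
def Fbarlay {d : ℕ} (Ω : Set (Ed d)) (T : Ed d → Ed d) (R τ : ℝ) : Measure (Ed d) :=
  Measure.map (fun x => Tt T (tmax T R x) x)
    (volume.restrict {x ∈ Ω | tmin T R x < 1 - τ ∧ 1 - τ < tmax T R x ∧ tmax T R x < 1})

/-- The surface measure on the sphere `∂B_R ⊂ ℝ^d`. -/
def sphMeas (d : ℕ) (R : ℝ) : Measure (Ed d) :=
  (μH[(d:ℝ) - 1]).restrict (sphere (0 : Ed d) R)

/-! ### Monotonicity of optimal maps -/

/-- The map exchanging `A` with its translate `A + h` by translation, and fixing everything else. -/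
def swapMap {d : ℕ} (A : Set (Ed d)) (h : Ed d) (z : Ed d) : Ed d :=
  open Classical in if z ∈ A then z + h else if z - h ∈ A then z - h else z

lemma swapMap_measurable {d : ℕ} {A : Set (Ed d)} (hA : MeasurableSet A) (h : Ed d) :
    Measurable (swapMap A h) := by
  classical
  unfold swapMap
  refine Measurable.ite hA (by fun_prop) (Measurable.ite ?_ (by fun_prop) measurable_id)
  exact (measurable_sub_const h) hA

lemma swapMap_of_mem {d : ℕ} {A : Set (Ed d)} {h z : Ed d} (hz : z ∈ A) :
    swapMap A h z = z + h := by simp [swapMap, hz]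

lemma swapMap_of_mem' {d : ℕ} {A : Set (Ed d)} {h z : Ed d}
    (hdisj : ∀ z ∈ A, z + h ∉ A) (hz : z - h ∈ A) :
    swapMap A h z = z - h := by
  have : z ∉ A := by simpa using hdisj _ hz
  simp [swapMap, hz, this]

lemma swapMap_of_notMem {d : ℕ} {A : Set (Ed d)} {h z : Ed d} (hz : z ∉ A) (hz' : z - h ∉ A) :
    swapMap A h z = z := by simp [swapMap, hz, hz']

lemma swapMap_invol {d : ℕ} {A : Set (Ed d)} {h : Ed d} (hdisj : ∀ z ∈ A, z + h ∉ A) (z : Ed d) :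
    swapMap A h (swapMap A h z) = z := by
  by_cases hz : z ∈ A
  · rw [swapMap_of_mem hz, swapMap_of_mem' hdisj (by simpa using hz)]; simp
  · by_cases hz' : z - h ∈ A
    · rw [swapMap_of_mem' hdisj hz', swapMap_of_mem hz']; simp
    · rw [swapMap_of_notMem hz hz', swapMap_of_notMem hz hz']

lemma swapMap_measurePreserving {d : ℕ} {Ω A : Set (Ed d)} {h : Ed d}
    (hA : MeasurableSet A) (hAΩ : A ⊆ Ω) (hAΩ' : ∀ z ∈ A, z + h ∈ Ω)
    (hdisj : ∀ z ∈ A, z + h ∉ A) :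
    MeasurePreserving (swapMap A h) (volume.restrict Ω) (volume.restrict Ω) := by
  refine ⟨swapMap_measurable hA h, ?_⟩
  ext s hs
  have hB : MeasurableSet ((fun z => z - h) ⁻¹' A) := (measurable_sub_const h) hA
  rw [Measure.map_apply (swapMap_measurable hA h) hs,
    Measure.restrict_apply ((swapMap_measurable hA h) hs), Measure.restrict_apply hs]
  set φ := swapMap A h
  set B := (fun z => z - h) ⁻¹' A with hBdef
  have hBΩ : B ⊆ Ω := fun z hz => by simpa using hAΩ' _ hz
  have hAB : Disjoint A B := by
    rw [Set.disjoint_left]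
    intro z hz hz'
    have := hdisj _ hz'
    simp only [sub_add_cancel] at this
    exact this hz
  have key : ∀ u : Set (Ed d), volume (u ∩ Ω)
      = volume (u ∩ A) + volume (u ∩ B) + volume (u ∩ (Ω \ (A ∪ B))) := by
    intro u
    rw [← measure_inter_add_sdiff (u ∩ Ω) (hA.union hB)]
    have h1 : u ∩ Ω ∩ (A ∪ B) = (u ∩ A) ∪ (u ∩ B) := by
      ext z; simp only [mem_inter_iff, mem_union]
      constructor
      · tauto
      · rintro (h | h)
        · exact ⟨⟨h.1, hAΩ h.2⟩, Or.inl h.2⟩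
        · exact ⟨⟨h.1, hBΩ h.2⟩, Or.inr h.2⟩
    have h2 : (u ∩ Ω) \ (A ∪ B) = u ∩ (Ω \ (A ∪ B)) := by
      ext z; simp only [mem_inter_iff, mem_sdiff, mem_union]; tauto
    rw [h1, h2, ← measure_inter_add_sdiff ((u ∩ A) ∪ (u ∩ B)) hA]
    congr 2
    · congr 1; ext z; have : z ∈ A → z ∉ B := fun hz => Set.disjoint_left.1 hAB hz
      simp only [mem_inter_iff, mem_union]; tauto
    · congr 1; ext z; have : z ∈ A → z ∉ B := fun hz => Set.disjoint_left.1 hAB hz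
      simp only [mem_inter_iff, mem_union, mem_sdiff]; tauto
  rw [key, key]
  have e1 : volume (φ ⁻¹' s ∩ A) = volume (s ∩ B) := by
    rw [← measure_preimage_add_right volume h (s ∩ B)]
    congr 1; ext z
    simp only [mem_inter_iff, mem_preimage, hBdef, add_sub_cancel_right]
    constructor
    · rintro ⟨h1, h2⟩; exact ⟨by rwa [← swapMap_of_mem h2], h2⟩
    · rintro ⟨h1, h2⟩; exact ⟨by rwa [← swapMap_of_mem h2] at h1, h2⟩
  have e2 : volume (φ ⁻¹' s ∩ B) = volume (s ∩ A) := by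
    rw [← measure_preimage_add_right volume (-h) (s ∩ A)]
    congr 1; ext z
    simp only [mem_inter_iff, mem_preimage, hBdef, ← sub_eq_add_neg]
    constructor
    · rintro ⟨h1, h2⟩; exact ⟨by rwa [← swapMap_of_mem' hdisj h2], h2⟩
    · rintro ⟨h1, h2⟩; exact ⟨by rwa [← swapMap_of_mem' hdisj h2] at h1, h2⟩
  have e3 : φ ⁻¹' s ∩ (Ω \ (A ∪ B)) = s ∩ (Ω \ (A ∪ B)) := by
    ext z
    simp only [mem_inter_iff, mem_preimage, mem_sdiff, mem_union, not_or]
    refine and_congr_left fun hz => ?_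
    rw [show φ z = z from swapMap_of_notMem hz.2.1 hz.2.2]
  rw [e1, e2, e3, add_comm (volume (s ∩ B))]

/-- Optimality excludes a set `A` of positive measure on which exchanging `A` and `A + h`
would strictly lower the transport cost. -/
lemma not_opt_of_swap {d : ℕ} {Ω A : Set (Ed d)} {μ : Measure (Ed d)} {T : Ed d → Ed d} {h : Ed d}
    (hA : MeasurableSet A) (hAΩ : A ⊆ Ω) (hAΩ' : ∀ z ∈ A, z + h ∈ Ω)
    (hdisj : ∀ z ∈ A, z + h ∉ A) (hT : IsOptMap Ω μ T)
    (hfin : ∫⁻ x in Ω, ENNReal.ofReal (‖T x - x‖ ^ 2) ≠ ∞)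
    (hneg : ∀ z ∈ A, ⟪T (z + h) - T z, h⟫ < 0) : volume A = 0 := by
  by_contra hA0
  obtain ⟨hTm, hTμ, hTopt⟩ := hT
  set φ := swapMap A h with hφ
  have hφm : Measurable φ := swapMap_measurable hA h
  have hmp : MeasurePreserving φ (volume.restrict Ω) (volume.restrict Ω) :=
    swapMap_measurePreserving hA hAΩ hAΩ' hdisj
  have hS := hTopt (T ∘ φ) (hTm.comp hφm)
    (by rw [← Measure.map_map hTm hφm, hmp.map_eq, hTμ])
  have hm : Measurable fun x : Ed d => ENNReal.ofReal (‖T x - x‖ ^ 2) := by fun_prop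
  have hm' : Measurable fun x : Ed d => ENNReal.ofReal (‖T (φ x) - x‖ ^ 2) := by fun_prop
  have hc1 := hmp.lintegral_comp hm
  have hc2 := hmp.lintegral_comp hm'
  simp only [show ∀ x, φ (φ x) = x from swapMap_invol hdisj] at hc2
  -- Averaging the cost over the involution makes the comparison pointwise.
  have hlt : ∫⁻ x in Ω, (ENNReal.ofReal (‖T (φ x) - x‖ ^ 2) + ENNReal.ofReal (‖T x - φ x‖ ^ 2))
      < ∫⁻ x in Ω, (ENNReal.ofReal (‖T x - x‖ ^ 2) + ENNReal.ofReal (‖T (φ x) - φ x‖ ^ 2)) := by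
    have hid : ∀ x, ‖T (φ x) - x‖ ^ 2 + ‖T x - φ x‖ ^ 2
        = ‖T x - x‖ ^ 2 + ‖T (φ x) - φ x‖ ^ 2 + 2 * ⟪T (φ x) - T x, φ x - x⟫ := by
      intro x
      simp only [@norm_sub_sq_real, inner_sub_left, inner_sub_right]
      ring
    have hle : ∀ x, ⟪T (φ x) - T x, φ x - x⟫ ≤ 0 := by
      intro x
      by_cases hx : x ∈ A
      · simpa [hφ, swapMap_of_mem hx] using (hneg x hx).le
      · by_cases hx' : x - h ∈ A
        · have := (hneg _ hx').le
          simp only [sub_add_cancel] at this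
          rw [hφ, swapMap_of_mem' hdisj hx', ← inner_neg_neg]
          simpa using this
        · simp [hφ, swapMap_of_notMem hx hx']
    have hle' : ∀ x, ENNReal.ofReal (‖T (φ x) - x‖ ^ 2) + ENNReal.ofReal (‖T x - φ x‖ ^ 2)
        ≤ ENNReal.ofReal (‖T x - x‖ ^ 2) + ENNReal.ofReal (‖T (φ x) - φ x‖ ^ 2) := by
      intro x
      rw [← ENNReal.ofReal_add (by positivity) (by positivity),
        ← ENNReal.ofReal_add (by positivity) (by positivity), hid]
      exact ENNReal.ofReal_le_ofReal (by linarith [hle x])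
    refine lintegral_strict_mono_of_ae_le_of_ae_lt_on (s := A) ?_ ?_ (ae_of_all _ hle') ?_ ?_
    · exact (hm.add (hm.comp hφm)).aemeasurable
    · refine ne_of_lt (lt_of_le_of_lt (lintegral_mono hle') ?_)
      rw [lintegral_add_left hm, hc1]
      exact ENNReal.add_lt_top.2 ⟨hfin.lt_top, hfin.lt_top⟩
    · rwa [Measure.restrict_apply hA, inter_eq_left.2 hAΩ]
    · refine ae_of_all _ fun x hx => ?_
      rw [← ENNReal.ofReal_add (by positivity) (by positivity),
        ← ENNReal.ofReal_add (by positivity) (by positivity)]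
      have h1 := hneg x hx
      have h2 := hid x
      rw [show φ x = x + h from swapMap_of_mem hx] at h2 ⊢
      simp only [add_sub_cancel_left] at h2
      rw [ENNReal.ofReal_lt_ofReal_iff_of_nonneg (by positivity)]
      linarith
  rw [lintegral_add_left hm', lintegral_add_left hm, hc1, hc2] at hlt
  simp only [Function.comp] at hS
  exact absurd (add_le_add hS hS) (not_le.2 hlt)

lemma cost_ne_top {d : ℕ} {Ω : Set (Ed d)} {μ : Measure (Ed d)} {T : Ed d → Ed d}
    (hΩb : Bornology.IsBounded Ω) (hΩ : MeasurableSet Ω)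
    (hK : ∃ K : Set (Ed d), IsCompact K ∧ μ Kᶜ = 0) (hT : IsOptMap Ω μ T) :
    ∫⁻ x in Ω, ENNReal.ofReal (‖T x - x‖ ^ 2) ≠ ∞ := by
  obtain ⟨K, hKc, hK0⟩ := hK
  obtain ⟨r, hr⟩ := hΩb.subset_closedBall 0
  obtain ⟨s, hs⟩ := hKc.isBounded.subset_closedBall 0
  have h1 : ∀ᵐ x ∂(volume.restrict Ω), T x ∈ K := by
    rw [← hT.2.1, Measure.map_apply hT.1 hKc.measurableSet.compl] at hK0
    exact hK0
  have h2 : ∀ᵐ x ∂(volume.restrict Ω),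
      ENNReal.ofReal (‖T x - x‖ ^ 2) ≤ ENNReal.ofReal ((s + r) ^ 2) := by
    filter_upwards [h1, ae_restrict_mem hΩ] with x hx hxΩ
    have a1 := hs hx
    have a2 := hr hxΩ
    rw [mem_closedBall_zero_iff] at a1 a2
    refine ENNReal.ofReal_le_ofReal ?_
    have := norm_sub_le (T x) x
    gcongr
    linarith
  refine ne_of_lt (lt_of_le_of_lt (lintegral_mono_ae h2) ?_)
  rw [setLIntegral_const]
  exact ENNReal.mul_lt_top ENNReal.ofReal_lt_top hΩb.measure_lt_top

/-- An optimal map is monotone on a set of full measure: it suffices to discard the points which,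
for some member `U` of a countable basis, lie in `T ⁻¹' U` without being density points of it. -/
lemma exists_monotone_set {d : ℕ} {Ω : Set (Ed d)} {μ : Measure (Ed d)} {T : Ed d → Ed d}
    (hΩb : Bornology.IsBounded Ω) (hΩ : MeasurableSet Ω)
    (hK : ∃ K : Set (Ed d), IsCompact K ∧ μ Kᶜ = 0) (hT : IsOptMap Ω μ T) :
    ∃ G : Set (Ed d), MeasurableSet G ∧ G ⊆ Ω ∧ volume (Ω \ G) = 0 ∧
      ∀ x ∈ G, ∀ y ∈ G, 0 ≤ ⟪T x - T y, x - y⟫ := by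
  have hfin := cost_ne_top hΩb hΩ hK hT
  obtain ⟨B, hBc, -, hB⟩ := TopologicalSpace.exists_countable_basis (Ed d)
  have hae : ∀ᵐ x ∂(volume : Measure (Ed d)), ∀ U ∈ B, Filter.Tendsto
      (fun r => volume ((Ω ∩ T ⁻¹' U) ∩ closedBall x r) / volume (closedBall x r)) (𝓝[>] 0)
        (𝓝 ((Ω ∩ T ⁻¹' U).indicator 1 x)) := by
    rw [ae_ball_iff hBc]
    intro U hU
    exact Besicovitch.ae_tendsto_measure_inter_div_of_measurableSet volume
      (hΩ.inter (hT.1 (hB.isOpen hU).measurableSet))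
  rw [ae_iff] at hae
  set N := toMeasurable volume {x : Ed d | ¬ ∀ U ∈ B, Filter.Tendsto
      (fun r => volume ((Ω ∩ T ⁻¹' U) ∩ closedBall x r) / volume (closedBall x r)) (𝓝[>] 0)
        (𝓝 ((Ω ∩ T ⁻¹' U).indicator 1 x))}
  have hN0 : volume N = 0 := by rw [measure_toMeasurable]; exact hae
  -- at the remaining points `T ⁻¹' V` has density one for every neighbourhood `V` of `T x`
  have hdens : ∀ x ∈ Ω \ N, ∀ V ∈ 𝓝 (T x), ∃ U : Set (Ed d), IsOpen U ∧ U ⊆ V ∧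
      ∀ᶠ r in 𝓝[>] (0:ℝ), volume (closedBall x r) <
        2 * volume ((Ω ∩ T ⁻¹' U) ∩ closedBall x r) := by
    intro x hx V hV
    obtain ⟨U, hU, hxU, hUV⟩ := hB.mem_nhds_iff.1 hV
    refine ⟨U, hB.isOpen hU, hUV, ?_⟩
    have hx' : ∀ U ∈ B, Filter.Tendsto
      (fun r => volume ((Ω ∩ T ⁻¹' U) ∩ closedBall x r) / volume (closedBall x r)) (𝓝[>] 0)
        (𝓝 ((Ω ∩ T ⁻¹' U).indicator 1 x)) := by
      by_contra hcon
      exact hx.2 (subset_toMeasurable _ _ hcon)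
    have h1 := hx' U hU
    rw [indicator_of_mem (show x ∈ Ω ∩ T ⁻¹' U from ⟨hx.1, hxU⟩)] at h1
    have h2 := h1.eventually (lt_mem_nhds (show (2:ℝ≥0∞)⁻¹ < 1 by simp))
    filter_upwards [h2, self_mem_nhdsWithin] with r hr hr0
    have hpos : volume (closedBall x r) ≠ 0 := (measure_closedBall_pos _ _ hr0).ne'
    have hfi : volume (closedBall x r) ≠ ∞ := measure_closedBall_lt_top.ne
    rw [ENNReal.lt_div_iff_mul_lt (Or.inl hpos) (Or.inl hfi)] at hr
    have := ENNReal.mul_lt_mul_right (a := 2) (by simp) (by simp) hr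
    rwa [← mul_assoc, ENNReal.mul_inv_cancel (by simp) (by simp), one_mul] at this
  refine ⟨Ω \ N, hΩ.diff (measurableSet_toMeasurable _ _), sdiff_subset, ?_, ?_⟩
  · rw [sdiff_sdiff_right_self]; exact measure_mono_null inter_subset_right hN0
  intro x hx y hy
  by_contra! hneg
  set h := y - x with hh
  have hne : h ≠ 0 := by
    intro h0
    rw [sub_eq_zero] at h0
    simp [h0] at hneg
  have hnegh : ⟪T y - T x, h⟫ < 0 := by
    rw [hh, ← inner_neg_neg]; simpa using hneg
  have hcont : Continuous fun p : Ed d × Ed d => ⟪p.2 - p.1, h⟫ := by fun_prop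
  have hnb := hcont.continuousAt.preimage_mem_nhds (x := (T x, T y)) (Iio_mem_nhds hnegh)
  obtain ⟨V, hV, V', hV', hVV⟩ := mem_nhds_prod_iff.1 hnb
  obtain ⟨U, hUo, hUV, hU⟩ := hdens x hx V hV
  obtain ⟨U', hUo', hUV', hU'⟩ := hdens y hy V' hV'
  have hsmall : ∀ᶠ r in 𝓝[>] (0:ℝ), 2 * r < ‖h‖ := by
    have : Filter.Tendsto (fun r : ℝ => 2 * r) (𝓝[>] 0) (𝓝 0) := by
      have : Filter.Tendsto (fun r : ℝ => 2 * r) (𝓝 0) (𝓝 (2 * 0)) := by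
        exact (continuous_const.mul continuous_id).tendsto _
      simpa using this.mono_left nhdsWithin_le_nhds
    exact this.eventually (gt_mem_nhds (norm_pos_iff.2 hne))
  obtain ⟨r, hr1, hr2, hr3, hr0⟩ :=
    (hU.and (hU'.and (hsmall.and self_mem_nhdsWithin))).exists
  set A₁ := (Ω ∩ T ⁻¹' U) ∩ closedBall x r
  set A₂ := (Ω ∩ T ⁻¹' U') ∩ closedBall y r
  have hA₁ : MeasurableSet A₁ := (hΩ.inter (hT.1 hUo.measurableSet)).inter measurableSet_closedBall
  have hA₂ : MeasurableSet A₂ := (hΩ.inter (hT.1 hUo'.measurableSet)).inter measurableSet_closedBall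
  set A₃ := (fun z => z + h) ⁻¹' A₂
  have hA₃ : MeasurableSet A₃ := (measurable_add_const h) hA₂
  have hvol : volume (closedBall y r) = volume (closedBall x r) := by
    rw [Measure.addHaar_closedBall_center volume y, Measure.addHaar_closedBall_center volume x]
  have h3 : volume A₃ = volume A₂ := measure_preimage_add_right volume h A₂
  have hA₃s : A₃ ⊆ closedBall x r := by
    intro z hz
    have := hz.2
    rw [mem_closedBall, dist_eq_norm] at this ⊢
    convert this using 2
    simp only [hh]; abel
  have h0 := not_opt_of_swap (A := A₁ ∩ A₃) (h := h) (hA₁.inter hA₃)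
    (fun z hz => hz.1.1.1) (fun z hz => hz.2.1.1) ?_ hT hfin ?_
  · have hdisj : volume (A₁ ∪ A₃) = volume A₁ + volume A₃ := by
      rw [← measure_union_add_inter A₁ hA₃, h0, add_zero]
    have hle : volume (A₁ ∪ A₃) ≤ volume (closedBall x r) :=
      measure_mono (union_subset inter_subset_right hA₃s)
    rw [hdisj, h3] at hle
    rw [hvol] at hr2
    have := ENNReal.add_lt_add hr1 hr2
    rw [← mul_add, ← two_mul] at this
    exact absurd (mul_le_mul_right hle 2) (not_le.2 this)
  · intro z hz hz'
    have b1 := hz.1.2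
    have b2 := hz'.1.2
    rw [mem_closedBall, dist_eq_norm] at b1 b2
    have : ‖h‖ ≤ ‖z + h - x‖ + ‖z - x‖ := by
      have := norm_sub_le (z + h - x) (z - x)
      simpa using this
    linarith
  · intro z hz
    exact hVV (mk_mem_prod (hUV hz.1.1.2) (hUV' hz.2.1.2))

/-! ### Displacement bound and good maps -/

/-- If `x` is displaced by `m`, monotonicity forces a displacement of at least `m / 6` on a ball
of radius `r` lying next to `x` in the direction of `T x - x`. -/
lemma energy_lower_bound {d : ℕ} {G : Set (Ed d)} {T : Ed d → Ed d}
    (hG0 : volume (ball (0 : Ed d) 2 \ G) = 0)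
    (hmono : ∀ x ∈ G, ∀ y ∈ G, 0 ≤ ⟪T x - T y, x - y⟫) {x : Ed d} (hx : x ∈ G)
    (hx2 : ‖x‖ < 7 / 4) {r : ℝ} (hr : 0 < r) (hr1 : r ≤ 1 / 12) (hr2 : 18 * r ≤ ‖T x - x‖) :
    ENNReal.ofReal ((‖T x - x‖ / 6) ^ 2) * (ENNReal.ofReal (r ^ d) * volume (ball (0 : Ed d) 1)) ≤
      ∫⁻ x in ball (0 : Ed d) 2, ENNReal.ofReal (‖T x - x‖ ^ 2) := by
  set m := ‖T x - x‖ with hm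
  have hm0 : 0 < m := by linarith
  set e := m⁻¹ • (T x - x) with he
  have hev : T x - x = m • e := by rw [he, smul_smul, mul_inv_cancel₀ hm0.ne', one_smul]
  have hen : ‖e‖ = 1 := by
    rw [he, norm_smul, norm_inv, Real.norm_of_nonneg hm0.le, ← hm, inv_mul_cancel₀ hm0.ne']
  set c := x + (2 * r) • e with hc
  have hsub : ball c r ⊆ ball (0 : Ed d) 2 := by
    intro y hy
    rw [mem_ball_zero_iff]
    rw [mem_ball, dist_eq_norm] at hy
    have h1 : ‖y‖ ≤ ‖y - c‖ + (‖x‖ + ‖(2 * r) • e‖) := by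
      calc ‖y‖ = ‖(y - c) + (x + (2 * r) • e)‖ := by rw [hc]; congr 1; abel
        _ ≤ _ := (norm_add_le _ _).trans (by gcongr; exact norm_add_le _ _)
    rw [norm_smul, hen, Real.norm_of_nonneg (by positivity)] at h1
    linarith
  have hpt : ∀ y ∈ ball c r, y ∈ G → (m / 6) ^ 2 ≤ ‖T y - y‖ ^ 2 := by
    intro y hy hyG
    rw [mem_ball, dist_eq_norm] at hy
    have hyx : y - x = (2 * r) • e + (y - c) := by rw [hc]; abel
    have h1 : ‖y - x‖ ≤ 3 * r := by
      rw [hyx]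
      refine (norm_add_le _ _).trans ?_
      rw [norm_smul, hen, Real.norm_of_nonneg (by positivity)]; linarith
    have h2 : r ≤ ⟪e, y - x⟫ := by
      rw [hyx, inner_add_right, inner_smul_right, real_inner_self_eq_norm_sq, hen]
      have := abs_real_inner_le_norm e (y - c)
      rw [hen] at this
      have := neg_abs_le ⟪e, y - c⟫
      linarith
    have h3 := hmono y hyG x hx
    have h4 : T y - T x = (T y - y) + (y - x) - m • e := by rw [← hev]; abel
    rw [h4, inner_sub_left, inner_add_left, real_inner_self_eq_norm_sq, inner_smul_left] at h3
    simp only [conj_trivial] at h3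
    have h5 := real_inner_le_norm (T y - y) (y - x)
    have h6 : m * r ≤ ‖T y - y‖ * (3 * r) + (3 * r) ^ 2 := by
      have : m * r ≤ m * ⟪e, y - x⟫ := by gcongr
      have : ‖T y - y‖ * ‖y - x‖ ≤ ‖T y - y‖ * (3 * r) := by gcongr
      have : ‖y - x‖ ^ 2 ≤ (3 * r) ^ 2 := by gcongr
      linarith
    have h7 : m ≤ ‖T y - y‖ * 3 + 9 * r := by
      have : r * m ≤ r * (‖T y - y‖ * 3 + 9 * r) := by nlinarith
      exact le_of_mul_le_mul_left this hr
    have : m / 6 ≤ ‖T y - y‖ := by linarith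
    gcongr
  have hae : ∀ᵐ y ∂(volume.restrict (ball c r)), y ∈ G := by
    rw [ae_iff, Measure.restrict_apply₀']
    · refine measure_mono_null ?_ hG0
      rintro y ⟨h1, h2⟩
      exact ⟨hsub h2, h1⟩
    · exact measurableSet_ball.nullMeasurableSet
  calc _ = ∫⁻ y in ball c r, ENNReal.ofReal ((m / 6) ^ 2) := by
        rw [setLIntegral_const, Measure.addHaar_ball_of_pos volume c hr]; simp
    _ ≤ ∫⁻ y in ball c r, ENNReal.ofReal (‖T y - y‖ ^ 2) := by
        refine lintegral_mono_ae ?_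
        filter_upwards [hae, ae_restrict_mem measurableSet_ball] with y h1 h2
        exact ENNReal.ofReal_le_ofReal (hpt y h2 h1)
    _ ≤ _ := lintegral_mono_set hsub

/-- The displacement is bounded by a multiple of `E ^ (1 / (d + 2))` inside `B_{7/4}`. -/
lemma linf_bound (d : ℕ) : ∃ ε₀ C₀ : ℝ, 0 < ε₀ ∧ 0 < C₀ ∧
    ∀ (G : Set (Ed d)) (T : Ed d → Ed d), volume (ball (0 : Ed d) 2 \ G) = 0 →
      (∀ x ∈ G, ∀ y ∈ G, 0 ≤ ⟪T x - T y, x - y⟫) →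
      (∫⁻ x in ball (0 : Ed d) 2, ENNReal.ofReal (‖T x - x‖ ^ 2)) ≤ ENNReal.ofReal ε₀ →
      ∀ x ∈ G, ‖x‖ < 7 / 4 →
        ‖T x - x‖ ≤ C₀ * ((∫⁻ y in ball (0 : Ed d) 2,
                ENNReal.ofReal (‖T y - y‖ ^ 2)).toReal ^ ((1:ℝ) / (d + 2))) ∧
        ‖T x - x‖ ≤ 1 / 16 := by
  have hω0 : volume (ball (0 : Ed d) 1) ≠ 0 := (measure_ball_pos _ _ one_pos).ne'
  have hωt : volume (ball (0 : Ed d) 1) ≠ ∞ := measure_ball_lt_top.ne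
  set ω := (volume (ball (0 : Ed d) 1)).toReal with hω
  have hωp : 0 < ω := ENNReal.toReal_pos hω0 hωt
  have hωe : volume (ball (0 : Ed d) 1) = ENNReal.ofReal ω := (ENNReal.ofReal_toReal hωt).symm
  set p : ℝ := (1:ℝ) / (d + 2) with hp
  have hp0 : 0 < p := by positivity
  set K : ℝ := 36 * 18 ^ d / ω with hK
  have hKp : 0 < K := by positivity
  set C₀ := K ^ p with hC
  have hC0 : 0 < C₀ := by positivity
  set ε₀ := min (ω / (32 * 12 ^ d)) ((1 / (16 * C₀)) ^ (d + 2)) with hε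
  have hε0 : 0 < ε₀ := by positivity
  refine ⟨ε₀, C₀, hε0, hC0, ?_⟩
  intro G T hG0 hmono hE x hx hx2
  set E := ∫⁻ x in ball (0 : Ed d) 2, ENNReal.ofReal (‖T x - x‖ ^ 2) with hEdef
  have hEt : E ≠ ∞ := ne_top_of_le_ne_top ENNReal.ofReal_ne_top hE
  have hEr : E.toReal ≤ ε₀ := ENNReal.toReal_le_of_le_ofReal hε0.le hE
  set m := ‖T x - x‖ with hm
  have hm0 : 0 ≤ m := norm_nonneg _
  have low : ∀ r, 0 < r → r ≤ 1 / 12 → 18 * r ≤ m → (m / 6) ^ 2 * (r ^ d * ω) ≤ E.toReal := by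
    intro r h1 h2 h3
    have := energy_lower_bound hG0 hmono hx hx2 h1 h2 h3
    rw [hωe, ← ENNReal.ofReal_mul (by positivity), ← ENNReal.ofReal_mul (by positivity)] at this
    exact (ENNReal.ofReal_le_iff_le_toReal hEt).1 this
  have hmain : m ≤ C₀ * E.toReal ^ p := by
    rcases hm0.eq_or_lt with h0 | h0
    · rw [← h0]; positivity
    have hmle : m ≤ 3 / 2 := by
      by_contra! hcon
      have h1 := low (1 / 12) (by norm_num) le_rfl (by linarith)
      have h2 : E.toReal ≤ ω / (32 * 12 ^ d) := hEr.trans (min_le_left _ _)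
      have h3 : (1 / 4 : ℝ) ^ 2 * ((1 / 12) ^ d * ω) ≤ (m / 6) ^ 2 * ((1 / 12) ^ d * ω) := by
        have : (1 / 4 : ℝ) ≤ m / 6 := by linarith
        gcongr
      have h4 : (1 / 4 : ℝ) ^ 2 * ((1 / 12) ^ d * ω) = 2 * (ω / (32 * 12 ^ d)) := by
        rw [div_pow 1 (12:ℝ), one_pow]; field_simp; norm_num
      have : 0 < ω / (32 * 12 ^ d) := by positivity
      linarith
    have h1 := low (m / 18) (by positivity) (by linarith) (by linarith)
    have h2 : m ^ (d + 2) ≤ K * E.toReal := by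
      have : K * ((m / 6) ^ 2 * ((m / 18) ^ d * ω)) = m ^ (d + 2) := by
        rw [hK, div_pow, div_pow, pow_add]; field_simp; norm_num
      rw [← this]; gcongr
    calc m = (m ^ (d + 2)) ^ p := by
          rw [← Real.rpow_natCast, ← Real.rpow_mul hm0, hp]
          push_cast
          rw [mul_one_div_cancel (by positivity), Real.rpow_one]
      _ ≤ (K * E.toReal) ^ p := by gcongr
      _ = _ := by rw [Real.mul_rpow hKp.le ENNReal.toReal_nonneg]
  refine ⟨hmain, hmain.trans ?_⟩
  have h1 : E.toReal ^ p ≤ ((1 / (16 * C₀)) ^ (d + 2)) ^ p := by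
    gcongr; exact hEr.trans (min_le_right _ _)
  have h2 : ((1 / (16 * C₀)) ^ (d + 2)) ^ p = 1 / (16 * C₀) := by
    rw [← Real.rpow_natCast, ← Real.rpow_mul (by positivity), hp]
    push_cast
    rw [mul_one_div_cancel (by positivity), Real.rpow_one]
  rw [h2] at h1
  calc C₀ * E.toReal ^ p ≤ C₀ * (1 / (16 * C₀)) := by gcongr
    _ = 1 / 16 := by field_simp

lemma Tt_eq {d : ℕ} (T : Ed d → Ed d) (t : ℝ) (x : Ed d) : Tt T t x = x + t • (T x - x) := by
  simp only [Tt, sub_smul, one_smul, smul_sub]; abel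

lemma Tt_mono {d : ℕ} {T : Ed d → Ed d} {t : ℝ} (ht : t ∈ Icc (0:ℝ) 1) {x y : Ed d}
    (h : 0 ≤ ⟪T x - T y, x - y⟫) :
    (1 - t) * ‖x - y‖ ^ 2 ≤ ⟪Tt T t x - Tt T t y, x - y⟫ := by
  have : Tt T t x - Tt T t y = (1 - t) • (x - y) + t • (T x - T y) := by
    simp only [Tt, smul_sub]; abel
  rw [this, inner_add_left, inner_smul_left, inner_smul_left, real_inner_self_eq_norm_sq]
  simp only [conj_trivial]
  nlinarith [mul_nonneg ht.1 h]

/-- By monotonicity no trajectory starting outside `B_{7/4}` reaches the closed ball of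
radius `3/2`: it would have to pass the barely moving particles near `∂B_{13/8}`. -/
lemma start_near {d : ℕ} {G : Set (Ed d)} {T : Ed d → Ed d}
    (hG0 : volume (ball (0 : Ed d) 2 \ G) = 0)
    (hmono : ∀ x ∈ G, ∀ y ∈ G, 0 ≤ ⟪T x - T y, x - y⟫)
    (hlinf : ∀ x ∈ G, ‖x‖ < 7 / 4 → ‖T x - x‖ ≤ 1 / 16) {x : Ed d} (hx : x ∈ G) {t : ℝ}
    (ht : t ∈ Icc (0:ℝ) 1) (hxt : ‖Tt T t x‖ ≤ 3 / 2) : ‖x‖ < 7 / 4 := by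
  by_contra! hcon
  have hx0 : 0 < ‖x‖ := by linarith
  set e := ‖x‖⁻¹ • x with he
  have hen : ‖e‖ = 1 := by
    rw [he, norm_smul, norm_inv, norm_norm, inv_mul_cancel₀ hx0.ne']
  have hxe : x = ‖x‖ • e := by rw [he, smul_smul, mul_inv_cancel₀ hx0.ne', one_smul]
  set p := (13 / 8 : ℝ) • e with hp
  have hpn : ‖p‖ = 13 / 8 := by rw [hp, norm_smul, hen]; norm_num
  obtain ⟨y, hyp, hyG⟩ : ∃ y ∈ ball p (1 / 1024), y ∈ G := by
    by_contra! hno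
    have : ball p (1 / 1024) ⊆ ball (0 : Ed d) 2 \ G := by
      intro y hy
      refine ⟨?_, hno y hy⟩
      rw [mem_ball, dist_eq_norm] at hy
      rw [mem_ball_zero_iff]
      have := norm_le_norm_add_norm_sub' y p
      linarith
    exact (measure_ball_pos volume p (by norm_num : (0:ℝ) < 1 / 1024)).ne'
      (measure_mono_null this hG0)
  rw [mem_ball, dist_eq_norm] at hyp
  have hyn : ‖y‖ ≤ 13 / 8 + 1 / 1024 := by
    have := norm_le_norm_add_norm_sub' y p
    linarith
  have hyv := hlinf y hyG (by linarith)
  set a := Tt T t x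
  set b := Tt T t y with hb
  have hby : ‖b - y‖ ≤ 1 / 16 := by
    rw [hb, Tt_eq, add_sub_cancel_left, norm_smul, Real.norm_of_nonneg ht.1]
    nlinarith [norm_nonneg (T y - y), ht.2]
  have hm : 0 ≤ ⟪a - b, x - y⟫ := by
    have := Tt_mono ht (hmono x hx y hyG)
    have h2 : 0 ≤ (1 - t) * ‖x - y‖ ^ 2 := mul_nonneg (by linarith [ht.2]) (by positivity)
    linarith
  have hxy : x - y = (‖x‖ - 13 / 8) • e - (y - p) := by
    rw [sub_smul, ← hxe, hp]; abel
  have hab : ‖a - b‖ ≤ 4 := by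
    have h1 := norm_sub_le a b
    have h2 := norm_le_norm_add_norm_sub' b y
    linarith
  have hbe : 13 / 8 - 1 / 1024 - 1 / 16 ≤ ⟪b, e⟫ := by
    have : b = p + (y - p) + (b - y) := by abel
    rw [this, inner_add_left, inner_add_left, hp, inner_smul_left, real_inner_self_eq_norm_sq, hen]
    have h1 := abs_real_inner_le_norm (y - p) e
    have h2 := abs_real_inner_le_norm (b - y) e
    rw [hen] at h1 h2
    have h3 := neg_abs_le ⟪y - p, e⟫
    have h4 := neg_abs_le ⟪b - y, e⟫
    simp only [conj_trivial]
    rw [← hp]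
    linarith
  have hae : ⟪a, e⟫ ≤ 3 / 2 := by
    have := real_inner_le_norm a e
    rw [hen] at this
    linarith
  rw [hxy, inner_sub_right, inner_smul_right, inner_sub_left] at hm
  have h1 := abs_real_inner_le_norm (a - b) (y - p)
  have h2 := neg_abs_le ⟪a - b, y - p⟫
  have h3 : ‖a - b‖ * ‖y - p‖ ≤ 4 * (1 / 1024) := by gcongr
  have h4 : (‖x‖ - 13 / 8) * (⟪a, e⟫ - ⟪b, e⟫) ≤ (‖x‖ - 13 / 8) * (-(1 / 32 + 1/1024)) := by
    apply mul_le_mul_of_nonneg_left _ (by linarith)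
    linarith
  nlinarith

/-- The part of the data of an optimal map which the flux estimates use, with a conull set `G` of
good particles and a bound `M` on the displacement of those reaching the closed ball of
radius `3/2`. -/
structure GoodMap {d : ℕ} (Ω : Set (Ed d)) (T : Ed d → Ed d) (G : Set (Ed d)) (M : ℝ) : Prop where
  measT : Measurable T
  measΩ : MeasurableSet Ω
  bddΩ : Bornology.IsBounded Ω
  measG : MeasurableSet G
  sub : G ⊆ Ω
  null : volume (Ω \ G) = 0
  mono : ∀ x ∈ G, ∀ y ∈ G, 0 ≤ ⟪T x - T y, x - y⟫
  near : ∀ x ∈ G, ∀ t ∈ Icc (0:ℝ) 1, ‖Tt T t x‖ ≤ 3 / 2 →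
    ‖x‖ < 7 / 4 ∧ ‖T x - x‖ ≤ M ∧ ‖T x - x‖ ≤ 1 / 16

/-- An optimal map with small energy `E` in `B_2` is a good map with displacement bound a multiple of
`E ^ (1 / (d + 2))`. -/
lemma exists_goodMap (d : ℕ) : ∃ ε₀ C₀ : ℝ, 0 < ε₀ ∧ 0 < C₀ ∧
    ∀ (Ω : Set (Ed d)) (μ : Measure (Ed d)) (T : Ed d → Ed d),
      Bornology.IsBounded Ω → MeasurableSet Ω → ball (0 : Ed d) 2 ⊆ Ω →
      (∃ K : Set (Ed d), IsCompact K ∧ μ Kᶜ = 0) → IsOptMap Ω μ T →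
      (∫⁻ x in ball (0 : Ed d) 2, ENNReal.ofReal (‖T x - x‖ ^ 2)) ≤ ENNReal.ofReal ε₀ →
      ∃ G, GoodMap Ω T G (C₀ * ((∫⁻ y in ball (0 : Ed d) 2,
                ENNReal.ofReal (‖T y - y‖ ^ 2)).toReal ^ ((1:ℝ) / (d + 2)))) := by
  obtain ⟨ε₀, C₀, hε, hC, H⟩ := linf_bound d
  refine ⟨ε₀, C₀, hε, hC, ?_⟩
  intro Ω μ T hΩb hΩ hB hK hT hE
  obtain ⟨G, hGm, hGs, hG0, hmono⟩ := exists_monotone_set hΩb hΩ hK hT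
  have hG0' : volume (ball (0 : Ed d) 2 \ G) = 0 :=
    measure_mono_null (sdiff_subset_sdiff_left hB) hG0
  have hl := H G T hG0' hmono hE
  refine ⟨G, hT.1, hΩ, hΩb, hGm, hGs, hG0, hmono, ?_⟩
  intro x hx t ht hxt
  have := start_near hG0' hmono (fun x h1 h2 => (hl x h1 h2).2) hx ht hxt
  exact ⟨this, hl x hx this⟩

/-! ### Density of the interpolants -/

/-- Where `T` is monotone, `T_t` shrinks distances at most by the factor `1 - t`. -/
lemma Tt_dist_ge {d : ℕ} {T : Ed d → Ed d} {t : ℝ} (ht : t ∈ Icc (0:ℝ) 1) {x y : Ed d}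
    (h : 0 ≤ ⟪T x - T y, x - y⟫) : (1 - t) * ‖x - y‖ ≤ ‖Tt T t x - Tt T t y‖ := by
  rcases (norm_nonneg (x - y)).eq_or_lt with h0 | h0
  · rw [← h0]; simp
  have h1 := Tt_mono ht h
  have h2 := real_inner_le_norm (Tt T t x - Tt T t y) (x - y)
  have h3 : (1 - t) * ‖x - y‖ * ‖x - y‖ ≤ ‖Tt T t x - Tt T t y‖ * ‖x - y‖ := by nlinarith
  exact le_of_mul_le_mul_right h3 h0

/-- The displacement interpolant has density at most `(1 - t) ^ (-d)`, because `T_t` expands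
distances by at least the factor `1 - t` on the set of monotonicity. -/
lemma GoodMap.push_bound {d : ℕ} {Ω G : Set (Ed d)} {T : Ed d → Ed d} {M : ℝ}
    (h : GoodMap Ω T G M) {t : ℝ} (ht : t ∈ Ico (0:ℝ) 1) (s : Set (Ed d)) :
    volume (G ∩ Tt T t ⁻¹' s) ≤ ENNReal.ofReal (((1 - t) ^ d)⁻¹) * volume s := by
  have ht1 : 0 < 1 - t := by linarith [ht.2]
  have ht' : t ∈ Icc (0:ℝ) 1 := ⟨ht.1, ht.2.le⟩
  set f := Tt T t
  set A := G ∩ f ⁻¹' s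
  have hexp : ∀ x ∈ A, ∀ y ∈ A, (1 - t) * ‖x - y‖ ≤ ‖f x - f y‖ := fun x hx y hy =>
    Tt_dist_ge ht' (h.mono x hx.1 y hy.1)
  have hinj : InjOn f A := by
    intro x hx y hy hxy
    have := hexp x hx y hy
    rw [hxy, sub_self, norm_zero] at this
    have : ‖x - y‖ ≤ 0 := by
      by_contra! hc
      nlinarith
    exact sub_eq_zero.1 (norm_le_zero_iff.1 this)
  set g := Function.invFunOn f A
  have hgf : ∀ x ∈ A, g (f x) = x := fun x hx => hinj.leftInvOn_invFunOn hx
  have hlip : LipschitzOnWith (Real.toNNReal ((1 - t)⁻¹)) g (f '' A) := by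
    refine LipschitzOnWith.of_dist_le_mul ?_
    rintro _ ⟨x, hx, rfl⟩ _ ⟨y, hy, rfl⟩
    rw [hgf x hx, hgf y hy, dist_eq_norm, dist_eq_norm, Real.coe_toNNReal _ (by positivity)]
    rw [inv_mul_eq_div, le_div_iff₀ ht1, mul_comm]
    exact hexp x hx y hy
  have himg : g '' (f '' A) = A := by
    rw [image_image]
    ext z
    constructor
    · rintro ⟨x, hx, rfl⟩; simpa only [hgf x hx] using hx
    · intro hz; exact ⟨z, hz, hgf z hz⟩
  have hH := hlip.hausdorffMeasure_image_le (d := (Module.finrank ℝ (Ed d) : ℝ)) (by positivity)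
  rw [himg] at hH
  have hvol : (volume : Measure (Ed d)) =
      addHaarScalarFactor volume (μH[(Module.finrank ℝ (Ed d) : ℝ)] : Measure (Ed d)) •
        (μH[(Module.finrank ℝ (Ed d) : ℝ)] : Measure (Ed d)) := isAddLeftInvariant_eq_smul _ _
  have hfs : f '' A ⊆ s := by rintro _ ⟨x, hx, rfl⟩; exact hx.2
  have hconst : ENNReal.ofReal (((1 - t) ^ d)⁻¹)
      = (Real.toNNReal ((1 - t)⁻¹) : ℝ≥0∞) ^ ((Module.finrank ℝ (Ed d) : ℝ)) := by
    rw [ENNReal.rpow_natCast, finrank_euclideanSpace_fin, ← inv_pow,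
      ENNReal.ofReal_pow (by positivity)]
    rfl
  rw [hconst]
  refine le_trans ?_ (mul_le_mul_right (measure_mono hfs) _)
  rw [hvol, Measure.smul_apply, Measure.smul_apply, mul_smul_comm]
  gcongr

/-! ### Entrance and exit times -/

section Times
variable {d : ℕ} {T : Ed d → Ed d} {R t : ℝ} {x : Ed d}

/-- The times spent by the trajectory through `x` in the closed ball of radius `R`. -/
def hitSet (T : Ed d → Ed d) (R : ℝ) (x : Ed d) : Set ℝ :=
  {t ∈ Icc (0:ℝ) 1 | Tt T t x ∈ closedBall (0 : Ed d) R}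

lemma Tt_continuous (T : Ed d → Ed d) (x : Ed d) : Continuous fun t => Tt T t x := by
  unfold Tt; fun_prop

lemma hitSet_compact : IsCompact (hitSet T R x) :=
  isCompact_Icc.inter_right (isClosed_closedBall.preimage (Tt_continuous T x))

lemma tmax_mem (h : (hitSet T R x).Nonempty) : tmax T R x ∈ hitSet T R x := by
  have hc : IsCompact (hitSet T R x ∪ {0}) := hitSet_compact.union isCompact_singleton
  have hm := hc.sSup_mem (by simp)
  change tmax T R x ∈ _ at hm
  rcases hm with hm | hm
  · exact hm
  · obtain ⟨t, ht⟩ := h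
    have : t ≤ tmax T R x := le_csSup hc.bddAbove (Or.inl ht)
    have h0 : tmax T R x = 0 := hm
    have : t = 0 := le_antisymm (h0 ▸ this) ht.1.1
    rw [h0, ← this]; exact ht

lemma tmin_mem (h : (hitSet T R x).Nonempty) : tmin T R x ∈ hitSet T R x := by
  have hc : IsCompact (hitSet T R x ∪ {1}) := hitSet_compact.union isCompact_singleton
  have hm := hc.sInf_mem (by simp)
  change tmin T R x ∈ _ at hm
  rcases hm with hm | hm
  · exact hm
  · obtain ⟨t, ht⟩ := h
    have : tmin T R x ≤ t := csInf_le hc.bddBelow (Or.inl ht)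
    have h0 : tmin T R x = 1 := hm
    have : t = 1 := le_antisymm ht.1.2 (h0 ▸ this)
    rw [h0, ← this]; exact ht

lemma le_tmax (h : t ∈ hitSet T R x) : t ≤ tmax T R x :=
  le_csSup (hitSet_compact.union isCompact_singleton).bddAbove (Or.inl h)

lemma tmin_le (h : t ∈ hitSet T R x) : tmin T R x ≤ t :=
  csInf_le (hitSet_compact.union isCompact_singleton).bddBelow (Or.inl h)

lemma tmax_empty (h : ¬ (hitSet T R x).Nonempty) : tmax T R x = 0 := by
  have h' : hitSet T R x = ∅ := not_nonempty_iff_eq_empty.1 h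
  change sSup (hitSet T R x ∪ {0}) = 0
  rw [h']; simp

lemma tmin_empty (h : ¬ (hitSet T R x).Nonempty) : tmin T R x = 1 := by
  have h' : hitSet T R x = ∅ := not_nonempty_iff_eq_empty.1 h
  change sInf (hitSet T R x ∪ {1}) = 1
  rw [h']; simp

lemma hitSet_nonempty (h : tmin T R x < tmax T R x) : (hitSet T R x).Nonempty := by
  by_contra hc
  rw [tmax_empty hc, tmin_empty hc] at h
  linarith

lemma norm_tmax (hm : tmax T R x ∈ hitSet T R x) (h1 : tmax T R x < 1) :
    ‖Tt T (tmax T R x) x‖ = R := by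
  refine le_antisymm (mem_closedBall_zero_iff.1 hm.2) ?_
  by_contra! hlt
  have h2 : ∀ᶠ t in 𝓝 (tmax T R x), ‖Tt T t x‖ < R :=
    (Tt_continuous T x).norm.continuousAt.eventually (gt_mem_nhds hlt)
  have h3 : ∀ᶠ t in 𝓝[>] (tmax T R x), ‖Tt T t x‖ < R := h2.filter_mono nhdsWithin_le_nhds
  have h4 : ∀ᶠ t in 𝓝[>] (tmax T R x), t < 1 :=
    (gt_mem_nhds h1 : ∀ᶠ t in 𝓝 (tmax T R x), t < 1).filter_mono nhdsWithin_le_nhds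
  obtain ⟨t, ha, hb, hc⟩ := (h3.and (h4.and self_mem_nhdsWithin)).exists
  have hc' : tmax T R x < t := hc
  have := le_tmax (T := T) (R := R) (x := x) (t := t)
    ⟨⟨hm.1.1.trans hc'.le, hb.le⟩, mem_closedBall_zero_iff.2 ha.le⟩
  linarith

lemma norm_tmin (hm : tmin T R x ∈ hitSet T R x) (h1 : 0 < tmin T R x) :
    ‖Tt T (tmin T R x) x‖ = R := by
  refine le_antisymm (mem_closedBall_zero_iff.1 hm.2) ?_
  by_contra! hlt
  have h2 : ∀ᶠ t in 𝓝 (tmin T R x), ‖Tt T t x‖ < R :=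
    (Tt_continuous T x).norm.continuousAt.eventually (gt_mem_nhds hlt)
  have h3 : ∀ᶠ t in 𝓝[<] (tmin T R x), ‖Tt T t x‖ < R := h2.filter_mono nhdsWithin_le_nhds
  have h4 : ∀ᶠ t in 𝓝[<] (tmin T R x), 0 < t :=
    (lt_mem_nhds h1 : ∀ᶠ t in 𝓝 (tmin T R x), 0 < t).filter_mono nhdsWithin_le_nhds
  obtain ⟨t, ha, hb, hc⟩ := (h3.and (h4.and self_mem_nhdsWithin)).exists
  have hc' : t < tmin T R x := hc
  have := tmin_le (T := T) (R := R) (x := x) (t := t)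
    ⟨⟨hb.le, hc'.le.trans hm.1.2⟩, mem_closedBall_zero_iff.2 ha.le⟩
  linarith

lemma isClosed_exists_hit (a b : ℝ) :
    IsClosed {p : ℝ × Ed d × Ed d | ∃ t ∈ Icc a b, ‖(1 - t) • p.2.1 + t • p.2.2‖ ≤ p.1} := by
  have hcl : IsClosed {q : Icc a b × (ℝ × Ed d × Ed d) |
      ‖(1 - (q.1 : ℝ)) • q.2.2.1 + (q.1 : ℝ) • q.2.2.2‖ ≤ q.2.1} :=
    isClosed_le (by fun_prop) (by fun_prop)
  convert isClosedMap_snd_of_compactSpace _ hcl using 1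
  ext p
  simp only [mem_ofPred_eq, mem_image, Prod.exists, Subtype.exists]
  constructor
  · rintro ⟨t, ht, h⟩; exact ⟨t, ht, p.1, p.2.1, p.2.2, h, rfl⟩
  · rintro ⟨t, ht, r, x, y, h, rfl⟩; exact ⟨t, ht, h⟩

lemma measurableSet_exists_hit (hT : Measurable T) (a b : ℝ) :
    MeasurableSet {p : ℝ × Ed d | ∃ t ∈ Icc a b, ‖Tt T t p.2‖ ≤ p.1} := by
  have hm : Measurable fun p : ℝ × Ed d => (p.1, p.2, T p.2) := by fun_prop
  exact hm (isClosed_exists_hit (d := d) a b).measurableSet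

lemma measurable_tmax (hT : Measurable T) : Measurable fun p : ℝ × Ed d => tmax T p.1 p.2 := by
  refine measurable_of_Ici fun c => ?_
  by_cases hc : c ≤ 0
  · convert MeasurableSet.univ
    ext p
    simp only [mem_preimage, mem_Ici, mem_univ, iff_true]
    by_cases h : (hitSet T p.1 p.2).Nonempty
    · exact hc.trans (tmax_mem h).1.1
    · rwa [tmax_empty h]
  · push Not at hc
    convert measurableSet_exists_hit hT c 1 using 1
    ext p
    simp only [mem_preimage, mem_Ici, mem_ofPred_eq]
    constructor
    · intro h
      have hne : (hitSet T p.1 p.2).Nonempty := by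
        by_contra hcon
        rw [tmax_empty hcon] at h; linarith
      have := tmax_mem hne
      exact ⟨_, ⟨h, this.1.2⟩, mem_closedBall_zero_iff.1 this.2⟩
    · rintro ⟨t, ht, h⟩
      exact ht.1.trans (le_tmax ⟨⟨hc.le.trans ht.1, ht.2⟩, mem_closedBall_zero_iff.2 h⟩)

lemma measurable_tmin (hT : Measurable T) : Measurable fun p : ℝ × Ed d => tmin T p.1 p.2 := by
  refine measurable_of_Iic fun c => ?_
  by_cases hc : 1 ≤ c
  · convert MeasurableSet.univ
    ext p
    simp only [mem_preimage, mem_Iic, mem_univ, iff_true]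
    by_cases h : (hitSet T p.1 p.2).Nonempty
    · exact (tmin_mem h).1.2.trans hc
    · rwa [tmin_empty h]
  · push Not at hc
    convert measurableSet_exists_hit hT 0 c using 1
    ext p
    simp only [mem_preimage, mem_Iic, mem_ofPred_eq]
    constructor
    · intro h
      have hne : (hitSet T p.1 p.2).Nonempty := by
        by_contra hcon
        rw [tmin_empty hcon] at h; linarith
      have := tmin_mem hne
      exact ⟨_, ⟨this.1.1, h⟩, mem_closedBall_zero_iff.1 this.2⟩
    · rintro ⟨t, ht, h⟩
      exact (tmin_le ⟨⟨ht.1, ht.2.trans hc.le⟩, mem_closedBall_zero_iff.2 h⟩).trans ht.2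

end Times

/-! ### Crossing times -/

/-- A measurable selection `s` of crossing times: for `(R, x) ∈ Cnd` the trajectory through `x`
meets `∂B_R` at the time `s (R, x) ∈ [a, b]`, before the final time. -/
structure Crossing {d : ℕ} (T : Ed d → Ed d) (Cnd : Set (ℝ × Ed d)) (s : ℝ × Ed d → ℝ)
    (a b : ℝ) : Prop where
  measC : MeasurableSet Cnd
  measS : Measurable s
  a0 : 0 ≤ a
  b1 : b ≤ 1
  mem : ∀ p ∈ Cnd, s p ∈ Icc a b
  lt : ∀ p ∈ Cnd, s p < 1
  hit : ∀ p ∈ Cnd, ‖Tt T (s p) p.2‖ = p.1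

/-- The radii crossed during a set `A` of times have measure at most `|T x - x| |A|`, since
`t ↦ |X(x,t)|` is Lipschitz with constant `|T x - x|`. -/
lemma Crossing.len {d : ℕ} {T : Ed d → Ed d} {Cnd : Set (ℝ × Ed d)} {s : ℝ × Ed d → ℝ} {a b : ℝ}
    (h : Crossing T Cnd s a b) (x : Ed d) (A : Set ℝ) :
    volume {R : ℝ | (R, x) ∈ Cnd ∧ s (R, x) ∈ A} ≤
      ENNReal.ofReal ‖T x - x‖ * volume (A ∩ Icc a b) := by
  have hlip : LipschitzWith (Real.toNNReal ‖T x - x‖) fun t : ℝ => ‖Tt T t x‖ := by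
    refine LipschitzWith.of_dist_le_mul fun t u => ?_
    rw [Real.coe_toNNReal _ (norm_nonneg _), Real.dist_eq, Real.dist_eq]
    refine (abs_norm_sub_norm_le _ _).trans ?_
    rw [Tt_eq, Tt_eq, add_sub_add_left_eq_sub, ← sub_smul, norm_smul, Real.norm_eq_abs, mul_comm]
  have hsub : {R : ℝ | (R, x) ∈ Cnd ∧ s (R, x) ∈ A} ⊆ (fun t => ‖Tt T t x‖) '' (A ∩ Icc a b) := by
    rintro R ⟨h1, h2⟩
    exact ⟨s (R, x), ⟨h2, h.mem _ h1⟩, h.hit _ h1⟩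
  refine (measure_mono hsub).trans ?_
  have := hlip.hausdorffMeasure_image_le (d := 1) (by norm_num) (A ∩ Icc a b)
  rw [hausdorffMeasure_real, ENNReal.rpow_one] at this
  exact this

section Instances
variable {d : ℕ} {T : Ed d → Ed d}

lemma crossing_out (hT : Measurable T) : Crossing T
    {p : ℝ × Ed d | 0 ≤ tmin T p.1 p.2 ∧ tmin T p.1 p.2 < tmax T p.1 p.2 ∧ tmax T p.1 p.2 < 1}
    (fun p => tmax T p.1 p.2) 0 1 where
  measC := (measurableSet_le measurable_const (measurable_tmin hT)).inter
    ((measurableSet_lt (measurable_tmin hT) (measurable_tmax hT)).inter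
      (measurableSet_lt (measurable_tmax hT) measurable_const))
  measS := measurable_tmax hT
  a0 := le_rfl
  b1 := le_rfl
  mem := fun p hp => (tmax_mem (hitSet_nonempty hp.2.1)).1
  lt := fun p hp => hp.2.2
  hit := fun p hp => norm_tmax (tmax_mem (hitSet_nonempty hp.2.1)) hp.2.2

lemma crossing_in (hT : Measurable T) : Crossing T
    {p : ℝ × Ed d | 0 < tmin T p.1 p.2 ∧ tmin T p.1 p.2 < tmax T p.1 p.2 ∧ tmax T p.1 p.2 ≤ 1}
    (fun p => tmin T p.1 p.2) 0 1 where
  measC := (measurableSet_lt measurable_const (measurable_tmin hT)).inter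
    ((measurableSet_lt (measurable_tmin hT) (measurable_tmax hT)).inter
      (measurableSet_le (measurable_tmax hT) measurable_const))
  measS := measurable_tmin hT
  a0 := le_rfl
  b1 := le_rfl
  mem := fun p hp => (tmin_mem (hitSet_nonempty hp.2.1)).1
  lt := fun p hp => hp.2.1.trans_le hp.2.2
  hit := fun p hp => norm_tmin (tmin_mem (hitSet_nonempty hp.2.1)) hp.1

lemma crossing_plus (hT : Measurable T) {τ : ℝ} (hτ : τ ∈ Ioo (0:ℝ) 1) : Crossing T
    {p : ℝ × Ed d | 0 ≤ tmin T p.1 p.2 ∧ tmin T p.1 p.2 < tmax T p.1 p.2 ∧ tmax T p.1 p.2 < 1 - τ}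
    (fun p => tmax T p.1 p.2) 0 1 where
  measC := (measurableSet_le measurable_const (measurable_tmin hT)).inter
    ((measurableSet_lt (measurable_tmin hT) (measurable_tmax hT)).inter
      (measurableSet_lt (measurable_tmax hT) measurable_const))
  measS := measurable_tmax hT
  a0 := le_rfl
  b1 := le_rfl
  mem := fun p hp => (tmax_mem (hitSet_nonempty hp.2.1)).1
  lt := fun p hp => hp.2.2.trans (by linarith [hτ.1])
  hit := fun p hp => norm_tmax (tmax_mem (hitSet_nonempty hp.2.1))
    (hp.2.2.trans (by linarith [hτ.1]))

lemma crossing_minus (hT : Measurable T) {τ : ℝ} (hτ : τ ∈ Ioo (0:ℝ) 1) : Crossing T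
    {p : ℝ × Ed d | tmin T p.1 p.2 < tmax T p.1 p.2 ∧ 0 < tmin T p.1 p.2 ∧ tmin T p.1 p.2 < 1 - τ}
    (fun p => tmin T p.1 p.2) 0 1 where
  measC := (measurableSet_lt (measurable_tmin hT) (measurable_tmax hT)).inter
    ((measurableSet_lt measurable_const (measurable_tmin hT)).inter
      (measurableSet_lt (measurable_tmin hT) measurable_const))
  measS := measurable_tmin hT
  a0 := le_rfl
  b1 := le_rfl
  mem := fun p hp => (tmin_mem (hitSet_nonempty hp.1)).1
  lt := fun p hp => hp.2.2.trans (by linarith [hτ.1])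
  hit := fun p hp => norm_tmin (tmin_mem (hitSet_nonempty hp.1)) hp.2.1

lemma crossing_lay (hT : Measurable T) {τ : ℝ} (hτ : τ ∈ Ioo (0:ℝ) 1) : Crossing T
    {p : ℝ × Ed d | tmin T p.1 p.2 < 1 - τ ∧ 1 - τ < tmax T p.1 p.2 ∧ tmax T p.1 p.2 < 1}
    (fun p => tmax T p.1 p.2) (1 - τ) 1 where
  measC := (measurableSet_lt (measurable_tmin hT) measurable_const).inter
    ((measurableSet_lt measurable_const (measurable_tmax hT)).inter
      (measurableSet_lt (measurable_tmax hT) measurable_const))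
  measS := measurable_tmax hT
  a0 := by linarith [hτ.2]
  b1 := le_rfl
  mem := fun p hp => ⟨hp.2.1.le, hp.2.2.le⟩
  lt := fun p hp => hp.2.2
  hit := fun p hp => norm_tmax (tmax_mem (hitSet_nonempty (hp.1.trans hp.2.1))) hp.2.2

end Instances

/-! ### Surface measures and polar coordinates -/

/-- One face of the cube `[-1,1]^d`, projected radially to the sphere of radius `R`. -/
def cubeFace {n : ℕ} (R : ℝ) (i : Fin (n + 1)) (b : ℝ) (u : Fin n → ℝ) : Ed (n + 1) :=
  (R * ‖(WithLp.toLp 2 (Fin.insertNth i b u : Fin (n + 1) → ℝ) : Ed (n + 1))‖⁻¹) •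
    (WithLp.toLp 2 (Fin.insertNth i b u : Fin (n + 1) → ℝ) : Ed (n + 1))

lemma contDiff_cubeFace {n : ℕ} (R : ℝ) (i : Fin (n + 1)) {b : ℝ} (hb : b ≠ 0) :
    ContDiff ℝ 1 (cubeFace R i b) := by
  have hF : ContDiff ℝ 1 fun u : Fin n → ℝ =>
      (WithLp.toLp 2 (Fin.insertNth i b u : Fin (n + 1) → ℝ) : Ed (n + 1)) := by
    rw [contDiff_euclidean]
    intro j
    rcases Fin.eq_self_or_eq_succAbove i j with rfl | ⟨k, rfl⟩
    · simpa using contDiff_const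
    · simpa using contDiff_apply ℝ ℝ k
  have h0 : ∀ u : Fin n → ℝ,
      (WithLp.toLp 2 (Fin.insertNth i b u : Fin (n + 1) → ℝ) : Ed (n + 1)) ≠ 0 := by
    intro u h
    have := congrArg (fun v : Ed (n + 1) => v i) h
    simp at this
    exact hb this
  unfold cubeFace
  refine ContDiff.smul (contDiff_const.mul ((hF.norm ℝ h0).inv fun u => ?_)) hF
  exact norm_ne_zero_iff.2 (h0 u)

lemma sphere_subset_cubeFace {n : ℕ} {R : ℝ} (hR : 0 < R) :
    sphere (0 : Ed (n + 1)) R ⊆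
      ⋃ i : Fin (n + 1), (cubeFace R i 1 '' Icc (-1) 1 ∪ cubeFace R i (-1) '' Icc (-1) 1) := by
  intro x hx
  rw [mem_sphere_zero_iff_norm] at hx
  obtain ⟨i, hi⟩ := Finite.exists_max fun j => |x j|
  have hm : 0 < |x i| := by
    by_contra! h
    have : x = 0 := by
      ext j
      exact abs_nonpos_iff.1 ((hi j).trans h)
    rw [this, norm_zero] at hx
    exact hR.ne hx
  have key : ∀ b : ℝ, b * |x i| = x i →
      ∃ u ∈ Icc (-1 : Fin n → ℝ) 1, cubeFace R i b u = x := by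
    intro b hb
    refine ⟨fun k => |x i|⁻¹ * x (i.succAbove k), ?_, ?_⟩
    · have : ∀ k, |(|x i|⁻¹ * x (i.succAbove k))| ≤ 1 := fun k => by
        rw [abs_mul, abs_inv, abs_abs, inv_mul_le_iff₀ hm, mul_one]; exact hi _
      exact ⟨fun k => (abs_le.1 (this k)).1, fun k => (abs_le.1 (this k)).2⟩
    · have hv : (WithLp.toLp 2 (Fin.insertNth i b (fun k => |x i|⁻¹ * x (i.succAbove k)) :
          Fin (n + 1) → ℝ) : Ed (n + 1)) = |x i|⁻¹ • x := by
        ext j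
        rcases Fin.eq_self_or_eq_succAbove i j with rfl | ⟨k, rfl⟩
        · simp only [Fin.insertNth_apply_same, PiLp.smul_apply, smul_eq_mul]
          rw [eq_inv_mul_iff_mul_eq₀ hm.ne', mul_comm]; exact hb
        · simp
      rw [cubeFace, hv, norm_smul, norm_inv, Real.norm_eq_abs, abs_abs, hx, smul_smul]
      have : R * (|x i|⁻¹ * R)⁻¹ * |x i|⁻¹ = 1 := by field_simp
      rw [this, one_smul]
  refine mem_iUnion.2 ⟨i, ?_⟩
  rcases le_or_gt 0 (x i) with h | h
  · left; exact key 1 (by rw [abs_of_nonneg h, one_mul])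
  · right; exact key (-1) (by rw [abs_of_neg h]; ring)

lemma cubeFace_finite {n : ℕ} (R : ℝ) (i : Fin (n + 1)) {b : ℝ} (hb : b ≠ 0) :
    μH[(n : ℝ)] (cubeFace R i b '' Icc (-1) 1) < ∞ := by
  have hvol : (μH[(n : ℝ)] : Measure (Fin n → ℝ)) = volume := by
    have := hausdorffMeasure_pi_real (ι := Fin n)
    rwa [Fintype.card_fin] at this
  refine IsCompact.induction_on (p := fun s => μH[(n : ℝ)] (cubeFace R i b '' s) < ∞)
    (isCompact_Icc (a := (-1 : Fin n → ℝ)) (b := 1)) (by simp) ?_ ?_ ?_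
  · intro s t hst ht
    exact (measure_mono (image_mono hst)).trans_lt ht
  · intro s t hs ht
    rw [image_union]
    exact (measure_union_le _ _).trans_lt (ENNReal.add_lt_top.2 ⟨hs, ht⟩)
  · intro x _
    obtain ⟨K, t, ht, hK⟩ :=
      ((contDiff_cubeFace R i hb).contDiffAt (x := x)).exists_lipschitzOnWith
    refine ⟨t ∩ ball x 1, mem_nhdsWithin_of_mem_nhds (Filter.inter_mem ht (ball_mem_nhds x one_pos)),
      ?_⟩
    refine ((hK.mono inter_subset_left).hausdorffMeasure_image_le (d := (n:ℝ))
      (by positivity)).trans_lt ?_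
    refine ENNReal.mul_lt_top (ENNReal.rpow_lt_top_of_nonneg (by positivity) (by simp)) ?_
    rw [hvol]
    exact (measure_mono inter_subset_right).trans_lt measure_ball_lt_top

/-- The Hausdorff surface measure is finite, since the sphere is covered by finitely many smooth images
of cube faces. -/
lemma isFiniteMeasure_sphMeas {d : ℕ} (hd : 2 ≤ d) {R : ℝ} (hR : 0 < R) :
    IsFiniteMeasure (sphMeas d R) := by
  obtain ⟨n, rfl⟩ : ∃ n, d = n + 1 := ⟨d - 1, by omega⟩
  refine ⟨?_⟩
  rw [sphMeas, Measure.restrict_apply_univ]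
  refine (measure_mono (sphere_subset_cubeFace hR)).trans_lt ?_
  have e : ((n + 1 : ℕ) : ℝ) - 1 = n := by push_cast; ring
  rw [e]
  refine (measure_iUnion_le _).trans_lt ?_
  rw [tsum_fintype]
  refine ENNReal.sum_lt_top.2 fun i _ => ?_
  exact (measure_union_le _ _).trans_lt (ENNReal.add_lt_top.2
    ⟨cubeFace_finite R i one_ne_zero, cubeFace_finite R i (by norm_num)⟩)

/-- The surface measure of the unit sphere coming from polar coordinates, as a measure on the
ambient space. -/
def sph1 (d : ℕ) : Measure (Ed d) := (volume : Measure (Ed d)).toSphere.map Subtype.val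

instance (d : ℕ) : IsFiniteMeasure (sph1 d) := by unfold sph1; infer_instance

lemma sph1_ae_norm (d : ℕ) : ∀ᵐ x ∂(sph1 d), ‖x‖ = 1 := by
  unfold sph1
  rw [ae_map_iff (by fun_prop) (measurableSet_eq_fun (by fun_prop) (by fun_prop))]
  exact Filter.Eventually.of_forall fun x => mem_sphere_zero_iff_norm.1 x.2

/-- Polar coordinates. -/
lemma polar {d : ℕ} (hd : 2 ≤ d) {f : Ed d → ℝ≥0∞} (hf : Measurable f) :
    ∫⁻ y, f y = ∫⁻ ω, (∫⁻ r in Ioi (0:ℝ), ENNReal.ofReal (r ^ (d - 1)) * f (r • ω)) ∂(sph1 d) := by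
  have : Nontrivial (Ed d) := by
    have : NeZero d := ⟨by omega⟩
    infer_instance
  have hmp := (volume : Measure (Ed d)).measurePreserving_homeomorphUnitSphereProd
  have h1 : ∫⁻ y, f y = ∫⁻ y : ({(0)}ᶜ : Set (Ed d)), f y ∂((volume : Measure (Ed d)).comap (↑)) := by
    rw [lintegral_subtype_comap (measurableSet_singleton _).compl, restrict_compl_singleton]
  have h2 : ∫⁻ y : ({(0)}ᶜ : Set (Ed d)), f y ∂((volume : Measure (Ed d)).comap (↑)) =
      ∫⁻ p : sphere (0 : Ed d) 1 × Ioi (0:ℝ), f ((p.2 : ℝ) • (p.1 : Ed d))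
        ∂((volume : Measure (Ed d)).toSphere.prod (volumeIoiPow (Module.finrank ℝ (Ed d) - 1))) := by
    rw [← hmp.lintegral_comp (by fun_prop)]
    refine lintegral_congr fun y => ?_
    congr 1
    have := norm_ne_zero_iff.2 y.2
    simp [smul_smul, this]
  rw [h1, h2, lintegral_prod _ (by fun_prop), sph1, lintegral_map]
  · refine lintegral_congr fun ω => ?_
    rw [volumeIoiPow, lintegral_withDensity_eq_lintegral_mul _ (by fun_prop) (by fun_prop)]
    rw [finrank_euclideanSpace_fin]
    exact lintegral_subtype_comap measurableSet_Ioi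
      (fun r : ℝ => ENNReal.ofReal (r ^ (d - 1)) * f (r • (ω : Ed d)))
  · refine Measurable.lintegral_prod_right' (f := fun p : Ed d × ℝ =>
      ENNReal.ofReal (p.2 ^ (d - 1)) * f (p.2 • p.1)) (by fun_prop)
  · fun_prop

open Pointwise in
/-- A cap of radius `r` on the unit sphere has measure at most a multiple of `r ^ (d - 1)`: the cone
over it is covered by about `1 / r` balls of radius `2 r`. -/
lemma sph1_cap {d : ℕ} (hd : 2 ≤ d) {x : Ed d} (hx : ‖x‖ = 1) {r : ℝ} (hr : 0 < r) (hr1 : r ≤ 1) :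
    sph1 d (closedBall x r) ≤
      ENNReal.ofReal (d * 2 ^ (d + 1) * (volume (ball (0 : Ed d) 1)).toReal * r ^ (d - 1)) := by
  have hms : MeasurableSet ((Subtype.val : sphere (0 : Ed d) 1 → Ed d) ⁻¹' closedBall x r) :=
    measurable_subtype_coe measurableSet_closedBall
  rw [sph1, Measure.map_apply measurable_subtype_coe measurableSet_closedBall,
    toSphere_apply' _ hms, finrank_euclideanSpace_fin]
  set N := ⌈1 / r⌉₊ with hN
  have hN1 : 1 / r ≤ N := Nat.le_ceil _
  have hN0 : (0:ℝ) < N := lt_of_lt_of_le (by positivity) hN1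
  have hN2 : (N : ℝ) ≤ 2 / r := by
    have h := (Nat.ceil_lt_add_one (a := 1 / r) (by positivity)).le
    have : (1:ℝ) ≤ 1 / r := by rw [le_div_iff₀ hr]; linarith
    have e : 2 / r = 1 / r + 1 / r := by ring
    rw [e]; linarith
  have hsub : Ioo (0:ℝ) 1 • ((Subtype.val : sphere (0 : Ed d) 1 → Ed d) ''
      (Subtype.val ⁻¹' closedBall x r)) ⊆
      ⋃ k ∈ Finset.range N, closedBall (((k:ℝ) / N) • x) (2 * r) := by
    rintro _ ⟨t, ht, _, ⟨y, hy, rfl⟩, rfl⟩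
    have hy' : ‖(y : Ed d) - x‖ ≤ r := by rw [← dist_eq_norm]; exact hy
    have htN : 0 ≤ t * N := mul_nonneg ht.1.le hN0.le
    refine mem_iUnion₂.2 ⟨⌊t * N⌋₊, ?_, ?_⟩
    · rw [Finset.mem_range, Nat.floor_lt htN]
      nlinarith [ht.2]
    · rw [mem_closedBall, dist_eq_norm]
      have e : t • (y : Ed d) - ((⌊t * N⌋₊ : ℝ) / N) • x
          = t • ((y : Ed d) - x) + (t - (⌊t * N⌋₊ : ℝ) / N) • x := by
        rw [smul_sub, sub_smul]; abel
      change ‖t • (y : Ed d) - ((⌊t * N⌋₊ : ℝ) / N) • x‖ ≤ _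
      rw [e]
      refine (norm_add_le _ _).trans ?_
      rw [norm_smul, norm_smul, hx, mul_one, Real.norm_eq_abs, Real.norm_eq_abs, abs_of_pos ht.1]
      have h1 : (⌊t * N⌋₊ : ℝ) ≤ t * N := Nat.floor_le htN
      have h2 : t * N < ⌊t * N⌋₊ + 1 := Nat.lt_floor_add_one _
      have h3 : |t - (⌊t * N⌋₊ : ℝ) / N| ≤ 1 / N := by
        rw [abs_le]
        constructor
        · have : (⌊t * N⌋₊ : ℝ) / N ≤ t := by rw [div_le_iff₀ hN0]; exact h1
          have : (0:ℝ) ≤ 1 / N := by positivity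
          linarith
        · have : t ≤ (⌊t * N⌋₊ : ℝ) / N + 1 / N := by
            rw [← add_div, le_div_iff₀ hN0]; exact h2.le
          linarith
      have h4 : 1 / (N:ℝ) ≤ r := by
        rw [div_le_iff₀ hN0]; rw [div_le_iff₀ hr] at hN1; linarith
      nlinarith [ht.2, ht.1, norm_nonneg ((y : Ed d) - x)]
  have hω : volume (ball (0 : Ed d) 1) ≠ ∞ := measure_ball_lt_top.ne
  refine (mul_le_mul_right ((measure_mono hsub).trans (measure_biUnion_finset_le _ _)) _).trans ?_
  simp_rw [Measure.addHaar_closedBall volume _ (by positivity : (0:ℝ) ≤ 2 * r)]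
  rw [Finset.sum_const, Finset.card_range, finrank_euclideanSpace_fin, nsmul_eq_mul]
  rw [← ENNReal.ofReal_toReal hω, ← ENNReal.ofReal_natCast, ← ENNReal.ofReal_natCast,
    ← ENNReal.ofReal_mul (by positivity), ← ENNReal.ofReal_mul (by positivity),
    ← ENNReal.ofReal_mul (by positivity)]
  rw [ENNReal.toReal_ofReal (by positivity)]
  refine ENNReal.ofReal_le_ofReal ?_
  have e : (2 * r) ^ d = 2 ^ d * (r ^ (d - 1) * r) := by
    rw [mul_pow, ← pow_succ]; congr 2; omega
  rw [e]
  have h5 : (N : ℝ) * r ≤ 2 := by rwa [le_div_iff₀ hr] at hN2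
  have h6 : (0:ℝ) ≤ d * 2 ^ d * (volume (ball (0 : Ed d) 1)).toReal * r ^ (d - 1) := by positivity
  calc _ = (d * 2 ^ d * (volume (ball (0 : Ed d) 1)).toReal * r ^ (d - 1)) * (N * r) := by ring
    _ ≤ (d * 2 ^ d * (volume (ball (0 : Ed d) 1)).toReal * r ^ (d - 1)) * 2 :=
        mul_le_mul_of_nonneg_left h5 h6
    _ = _ := by ring

lemma map_smul_sph1_ae {d : ℕ} {R : ℝ} (hR : 0 < R) :
    ∀ᵐ x ∂((sph1 d).map (R • ·)), x ∈ sphere (0 : Ed d) R := by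
  refine (ae_map_iff (p := fun x => x ∈ sphere (0 : Ed d) R) (by fun_prop)
    isClosed_sphere.measurableSet).2 ?_
  filter_upwards [sph1_ae_norm d] with x hx
  rw [mem_sphere_zero_iff_norm, norm_smul, hx, mul_one, Real.norm_eq_abs, abs_of_pos hR]

/-- The polar-coordinate surface measure is dominated by the Hausdorff surface measure. -/
lemma exists_sph_le {d : ℕ} (hd : 2 ≤ d) : ∃ C : ℝ≥0, ∀ R ∈ Ioo (1/2 : ℝ) (3/2),
    (sph1 d).map (R • ·) ≤ (C : ℝ≥0∞) • sphMeas d R := by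
  set A : ℝ := d * 2 ^ (d + 1) * (volume (ball (0 : Ed d) 1)).toReal with hA
  have hA0 : 0 ≤ A := by positivity
  set C : ℝ≥0 := Real.toNNReal (A * 2 ^ (d - 1) + 1) with hC
  have hCr : (C : ℝ) = A * 2 ^ (d - 1) + 1 := Real.coe_toNNReal _ (by positivity)
  have hC0 : (C : ℝ≥0∞) ≠ 0 := by
    rw [ENNReal.coe_ne_zero]
    intro h
    rw [h] at hCr
    have : 0 ≤ A * 2 ^ (d - 1) := by positivity
    rw [NNReal.coe_zero] at hCr
    linarith
  refine ⟨C, fun R hR => ?_⟩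
  have hR0 : 0 < R := by linarith [hR.1]
  set S := (sph1 d).map (R • ·) with hS
  have hdr : (d:ℝ) - 1 = ((d - 1 : ℕ) : ℝ) := by
    rw [Nat.cast_sub (by omega)]; simp
  have hmain : ∀ s : Set (Ed d), ediam s ≤ ENNReal.ofReal (1/4) →
      S s ≤ C * ediam s ^ ((d:ℝ) - 1) := by
    intro s hs
    by_cases hne : (s ∩ sphere (0 : Ed d) R).Nonempty
    swap
    · have : S s = 0 := by
        refine measure_mono_null ?_ (ae_iff.1 (map_smul_sph1_ae (d := d) hR0))
        intro x hx hx'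
        exact hne ⟨x, hx, hx'⟩
      rw [this]; exact zero_le
    obtain ⟨x, hxs, hxR⟩ := hne
    have hfin : ediam s ≠ ∞ := ne_top_of_le_ne_top ENNReal.ofReal_ne_top hs
    set δ := (ediam s).toReal with hδ
    have hδe : ediam s = ENNReal.ofReal δ := (ENNReal.ofReal_toReal hfin).symm
    have hδ0 : 0 ≤ δ := ENNReal.toReal_nonneg
    have hδ1 : δ ≤ 1/4 := by
      rw [hδe] at hs
      exact (ENNReal.ofReal_le_ofReal_iff (by norm_num)).1 hs
    have hr : ∀ r ∈ Ioo δ (1/2), S s ≤ ENNReal.ofReal (A * (2 * r) ^ (d - 1)) := by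
      intro r hr
      have hr0 : 0 < r := lt_of_le_of_lt hδ0 hr.1
      have hsub : s ⊆ closedBall x r := by
        intro y hy
        have h1 : edist y x ≤ ENNReal.ofReal δ := hδe ▸ edist_le_ediam_of_mem hy hxs
        rw [edist_dist] at h1
        exact mem_closedBall.2 (((ENNReal.ofReal_le_ofReal_iff hδ0).1 h1).trans hr.1.le)
      refine (measure_mono hsub).trans ?_
      rw [hS, Measure.map_apply (by fun_prop) measurableSet_closedBall]
      have hsub2 : (R • · : Ed d → Ed d) ⁻¹' closedBall x r ⊆ closedBall (R⁻¹ • x) (2 * r) := by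
        intro y hy
        rw [mem_preimage, mem_closedBall, dist_eq_norm] at hy
        rw [mem_closedBall, dist_eq_norm]
        have e : y - R⁻¹ • x = R⁻¹ • (R • y - x) := by
          rw [smul_sub, smul_smul, inv_mul_cancel₀ hR0.ne', one_smul]
        rw [e, norm_smul, norm_inv, Real.norm_eq_abs, abs_of_pos hR0]
        have : R⁻¹ ≤ 2 := by
          rw [inv_le_comm₀ hR0 (by norm_num)]; linarith [hR.1]
        exact mul_le_mul this hy (norm_nonneg _) (by norm_num)
      refine (measure_mono hsub2).trans ?_
      refine sph1_cap hd ?_ (by positivity) (by linarith [hr.2])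
      rw [norm_smul, mem_sphere_zero_iff_norm.1 hxR, norm_inv, Real.norm_eq_abs, abs_of_pos hR0,
        inv_mul_cancel₀ hR0.ne']
    have hlim : Filter.Tendsto (fun r : ℝ => ENNReal.ofReal (A * (2 * r) ^ (d - 1))) (𝓝[>] δ)
        (𝓝 (ENNReal.ofReal (A * (2 * δ) ^ (d - 1)))) := by
      refine Filter.Tendsto.mono_left (Continuous.tendsto ?_ δ) nhdsWithin_le_nhds
      exact ENNReal.continuous_ofReal.comp (by fun_prop)
    have hle := ge_of_tendsto hlim (Filter.mem_of_superset
      (Ioo_mem_nhdsGT (show δ < 1/2 by linarith)) hr)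
    refine hle.trans ?_
    rw [hδe, hdr, ENNReal.rpow_natCast, ← ENNReal.ofReal_pow hδ0, ← ENNReal.ofReal_coe_nnreal,
      ← ENNReal.ofReal_mul (NNReal.coe_nonneg _), hCr]
    refine ENNReal.ofReal_le_ofReal ?_
    rw [mul_pow]
    have : 0 ≤ δ ^ (d - 1) := by positivity
    linarith
  have hH : ((C : ℝ≥0∞)⁻¹ • S) ≤ μH[(d:ℝ) - 1] := by
    refine le_hausdorffMeasure _ _ (ENNReal.ofReal (1/4)) (by norm_num) fun s hs => ?_
    rw [Measure.smul_apply, smul_eq_mul]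
    calc (C : ℝ≥0∞)⁻¹ * S s ≤ (C : ℝ≥0∞)⁻¹ * (C * ediam s ^ ((d:ℝ) - 1)) :=
          mul_le_mul_right (hmain s hs) _
      _ = _ := by rw [← mul_assoc, ENNReal.inv_mul_cancel hC0 ENNReal.coe_ne_top, one_mul]
  have hres : S = S.restrict (sphere 0 R) :=
    (Measure.restrict_eq_self_of_ae_mem (map_smul_sph1_ae hR0)).symm
  intro s
  rw [hres, Measure.restrict_apply' isClosed_sphere.measurableSet, sphMeas, Measure.smul_apply,
    Measure.restrict_apply' isClosed_sphere.measurableSet, smul_eq_mul]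
  have h1 := hH (s ∩ sphere 0 R)
  rw [Measure.smul_apply, smul_eq_mul] at h1
  calc S (s ∩ sphere 0 R) = C * ((C : ℝ≥0∞)⁻¹ * S (s ∩ sphere 0 R)) := by
        rw [← mul_assoc, ENNReal.mul_inv_cancel hC0 ENNReal.coe_ne_top, one_mul]
    _ ≤ _ := mul_le_mul_right h1 _

/-! ### Bounded densities and the bathtub inequality -/

/-- A measure dominated by `C • ν` has a density which is bounded by `C` everywhere, not only almost
everywhere. -/
lemma exists_density_le {α : Type*} [MeasurableSpace α] {μ ν : Measure α} [SigmaFinite μ]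
    [SigmaFinite ν] {C : ℝ≥0} (h : μ ≤ (C : ℝ≥0∞) • ν) :
    ∃ w : α → ℝ≥0∞, Measurable w ∧ (∀ x, w x ≤ C) ∧ μ = ν.withDensity w := by
  have hac : μ ≪ ν := by
    refine Measure.AbsolutelyContinuous.mk fun s _ hs => ?_
    have := h s
    rw [Measure.smul_apply, hs, smul_zero] at this
    exact le_antisymm this (zero_le)
  refine ⟨fun x => min (μ.rnDeriv ν x) C, (μ.measurable_rnDeriv ν).min measurable_const,
    fun x => min_le_right _ _, ?_⟩
  have hle : μ.rnDeriv ν ≤ᵐ[ν] fun _ => (C : ℝ≥0∞) := by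
    refine ae_le_of_forall_setLIntegral_le_of_sigmaFinite (μ.measurable_rnDeriv ν) fun s _ _ => ?_
    rw [setLIntegral_const]
    exact (Measure.setLIntegral_rnDeriv_le s).trans (h s)
  rw [← Measure.withDensity_rnDeriv_eq μ ν hac]
  refine withDensity_congr_ae ?_
  rw [Measure.withDensity_rnDeriv_eq μ ν hac]
  filter_upwards [hle] with x hx
  rw [min_eq_left hx]

lemma exists_sph_density {d : ℕ} (hd : 2 ≤ d) : ∃ C : ℝ≥0, ∀ R ∈ Ioo (1/2 : ℝ) (3/2),
    ∃ w : Ed d → ℝ≥0∞, Measurable w ∧ (∀ x, w x ≤ C) ∧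
      (sph1 d).map (R • ·) = (sphMeas d R).withDensity w := by
  obtain ⟨C, hC⟩ := exists_sph_le hd
  refine ⟨C, fun R hR => ?_⟩
  have := isFiniteMeasure_sphMeas hd (R := R) (by linarith [hR.1])
  exact exists_density_le (hC R hR)

/-- Among densities bounded by `K` the first moment around `R` is minimized by concentration near
`R`, so it controls the square of the mass. -/
lemma bathtub {f : ℝ → ℝ≥0∞} {K : ℝ≥0} (hf : Measurable f) (hK : ∀ r, f r ≤ K) (R : ℝ)
    (hfin : ∫⁻ r, f r ≠ ∞) :
    (∫⁻ r, f r) ^ 2 ≤ 8 * K * ∫⁻ r, f r * ENNReal.ofReal |r - R| := by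
  set m := (∫⁻ r, f r).toReal with hm
  have hme : ∫⁻ r, f r = ENNReal.ofReal m := (ENNReal.ofReal_toReal hfin).symm
  have hm0 : 0 ≤ m := ENNReal.toReal_nonneg
  rcases hm0.eq_or_lt with h0 | hmpos
  · rw [hme, ← h0]; simp
  have hKpos : (0:ℝ) < K := by
    rcases (NNReal.coe_nonneg K).eq_or_lt with h | h
    · exfalso
      have hK0 : K = 0 := by exact_mod_cast h.symm
      have : ∫⁻ r, f r = 0 := by
        simp [fun r => le_antisymm ((hK r).trans (by rw [hK0]; simp)) zero_le]
      rw [this] at hm; simp at hm; linarith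
    · exact h
  set J := ∫⁻ r, f r * ENNReal.ofReal |r - R| with hJ
  by_cases hJt : J = ∞
  · rw [hJt, ENNReal.mul_top]
    · exact le_top
    · have : (K : ℝ≥0∞) ≠ 0 := by
        rw [ENNReal.coe_ne_zero]; intro h; rw [h] at hKpos; simp at hKpos
      simp [this]
  set δ := m / (4 * K) with hδ
  have hδ0 : 0 < δ := by positivity
  set A := ball R δ with hA
  have h1 : ∫⁻ r in A, f r ≤ ENNReal.ofReal (m / 2) := by
    calc ∫⁻ r in A, f r ≤ ∫⁻ _ in A, (K : ℝ≥0∞) := lintegral_mono fun r => hK r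
      _ = K * ENNReal.ofReal (2 * δ) := by rw [setLIntegral_const, Real.volume_ball]
      _ = ENNReal.ofReal (m / 2) := by
        rw [← ENNReal.ofReal_coe_nnreal, ← ENNReal.ofReal_mul (by positivity)]
        congr 1
        rw [hδ]; field_simp; norm_num
  have h2 : ∫⁻ r in Aᶜ, f r ≤ ENNReal.ofReal δ⁻¹ * J := by
    rw [hJ, ← lintegral_const_mul _ (by fun_prop)]
    refine (setLIntegral_mono (g := fun r => ENNReal.ofReal δ⁻¹ * (f r * ENNReal.ofReal |r - R|))
      (by fun_prop) fun r hr => ?_).trans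
      (setLIntegral_le_lintegral _ _)
    have hr' : δ ≤ |r - R| := by
      rw [hA, mem_compl_iff, mem_ball, not_lt, Real.dist_eq] at hr; exact hr
    calc f r = f r * 1 := (mul_one _).symm
      _ ≤ f r * (ENNReal.ofReal (δ⁻¹ * |r - R|)) := by
        refine mul_le_mul_right ?_ _
        rw [ENNReal.one_le_ofReal, inv_mul_eq_div, le_div_iff₀ hδ0, one_mul]
        exact hr'
      _ = _ := by rw [ENNReal.ofReal_mul (by positivity)]; ring
  have h3 : ENNReal.ofReal m ≤ ENNReal.ofReal (m / 2) + ENNReal.ofReal δ⁻¹ * J := by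
    rw [← hme, ← lintegral_add_compl f (measurableSet_ball (x := R) (ε := δ))]
    exact add_le_add h1 h2
  rw [← ENNReal.ofReal_toReal hJt, ← ENNReal.ofReal_mul (by positivity),
    ← ENNReal.ofReal_add (by positivity) (by positivity),
    ENNReal.ofReal_le_ofReal_iff (by positivity)] at h3
  rw [hme, ← ENNReal.ofReal_toReal hJt, ← ENNReal.ofReal_coe_nnreal, ← ENNReal.ofReal_pow hm0,
    show (8 : ℝ≥0∞) = ENNReal.ofReal 8 by simp, ← ENNReal.ofReal_mul (by positivity),
    ← ENNReal.ofReal_mul (by positivity)]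
  refine ENNReal.ofReal_le_ofReal ?_
  have h4 : δ⁻¹ = 4 * K / m := by rw [hδ, inv_div]
  rw [h4] at h3
  have h5 : m / 2 ≤ 4 * K * J.toReal / m := by
    have : 4 * K / m * J.toReal = 4 * K * J.toReal / m := by ring
    linarith
  rw [le_div_iff₀ hmpos] at h5
  nlinarith

/-- The geodesic distance on `∂B_R` is at most twice the chordal distance. -/
lemma geoDist_sq_le {d : ℕ} {R : ℝ} (hR : 0 < R) {x y : Ed d} (hx : ‖x‖ = R) (hy : ‖y‖ = R) :
    geoDist R x y ^ 2 ≤ 4 * ‖x - y‖ ^ 2 := by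
  set θ := Real.arccos (⟪x, y⟫ / R ^ 2) with hθ
  have h1 : |⟪x, y⟫| ≤ R ^ 2 := by
    have := abs_real_inner_le_norm x y
    rw [hx, hy] at this; nlinarith
  have hc : Real.cos θ = ⟪x, y⟫ / R ^ 2 := by
    rw [hθ, Real.cos_arccos]
    · rw [le_div_iff₀ (by positivity)]; linarith [(abs_le.1 h1).1]
    · rw [div_le_iff₀ (by positivity)]; linarith [(abs_le.1 h1).2]
  have hcos : Real.cos θ ≤ 1 - 2 / Real.pi ^ 2 * θ ^ 2 := by
    refine Real.cos_le_one_sub_mul_cos_sq ?_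
    rw [abs_of_nonneg (Real.arccos_nonneg _)]
    exact Real.arccos_le_pi _
  have hn : ‖x - y‖ ^ 2 = 2 * R ^ 2 * (1 - Real.cos θ) := by
    rw [norm_sub_sq_real, hx, hy, hc]; field_simp; ring
  have hpi : Real.pi ^ 2 ≤ 16 := by nlinarith [Real.pi_le_four, Real.pi_pos]
  have h2 : 1 / 8 * θ ^ 2 ≤ 1 - Real.cos θ := by
    have : (1:ℝ) / 8 ≤ 2 / Real.pi ^ 2 := by
      rw [div_le_div_iff₀ (by norm_num) (by positivity)]; linarith
    nlinarith [sq_nonneg θ]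
  have : geoDist R x y = R * θ := rfl
  rw [this, hn, mul_pow]
  nlinarith [sq_nonneg R, mul_le_mul_of_nonneg_left h2 (sq_nonneg R)]

/-! ### Radial projection to the sphere -/

/-- Projecting a law with density at most `K`, living at distance at most `s` from `∂B_R`, radially
to `∂B_R` gives a density which is controlled by the distance to `∂B_R`. -/
lemma radial_density {d : ℕ} (hd : 2 ≤ d) : ∃ C : ℝ≥0, ∀ R ∈ Ioo (1/2 : ℝ) (3/2),
    ∀ (m : Measure (Ed d)) [IsFiniteMeasure m] (K : ℝ≥0) (s : ℝ), 0 ≤ s →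
      m ≤ (K : ℝ≥0∞) • volume →
      (∀ᵐ y ∂m, 0 < ‖y‖ ∧ ‖y‖ < 2 ∧ |‖y‖ - R| ≤ s) →
      ∃ ρ : Ed d → ℝ, Measurable ρ ∧ (∀ x, 0 ≤ ρ x) ∧
        (∀ x ∈ sphere (0 : Ed d) R, ρ x ≤ C * K * s) ∧
        (∫⁻ x, ENNReal.ofReal (ρ x ^ 2) ∂(sphMeas d R)) ≤
          C * K * ∫⁻ y, ENNReal.ofReal |‖y‖ - R| ∂m ∧
        m.map (fun y => (R * ‖y‖⁻¹) • y) =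
          (sphMeas d R).withDensity fun x => ENNReal.ofReal (ρ x) := by
  obtain ⟨C₁, hC₁⟩ := exists_sph_density hd
  refine ⟨C₁ * (8 * 2 ^ (d - 1)), fun R hR m _ K s hs hmK hsupp => ?_⟩
  have hR0 : 0 < R := by linarith [hR.1]
  obtain ⟨w, hw, hwC, hSw⟩ := hC₁ R hR
  obtain ⟨h0, hh0, hh0K, hmh0⟩ := exists_density_le hmK
  set ann : Set (Ed d) := {y | 0 < ‖y‖ ∧ ‖y‖ < 2 ∧ |‖y‖ - R| ≤ s} with hann
  have hannm : MeasurableSet ann :=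
    (measurableSet_lt measurable_const measurable_norm).inter
      ((measurableSet_lt measurable_norm measurable_const).inter
        (measurableSet_le (measurable_norm.sub_const R).abs measurable_const))
  set h := ann.indicator h0 with hh
  have hhm : Measurable h := hh0.indicator hannm
  have hhK : ∀ y, h y ≤ K := fun y => (indicator_le_self _ _ y).trans (hh0K y)
  have hmh : m = volume.withDensity h := by
    rw [hh, withDensity_indicator hannm, ← restrict_withDensity hannm, ← hmh0]
    exact (Measure.restrict_eq_self_of_ae_mem hsupp).symm
  set ψ : Ed d → ℝ≥0∞ := fun x =>
    ∫⁻ r in Ioi (0:ℝ), ENNReal.ofReal (r ^ (d - 1)) * h (r • R⁻¹ • x) with hψ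
  have hψm : Measurable ψ := by
    refine Measurable.lintegral_prod_right' (f := fun p : Ed d × ℝ =>
      ENNReal.ofReal (p.2 ^ (d - 1)) * h (p.2 • R⁻¹ • p.1)) (by fun_prop)
  -- the radial profile on the ray through a point of the unit sphere
  have hprof : ∀ ω : Ed d, ‖ω‖ = 1 → ∀ r : ℝ,
      (Ioi (0:ℝ)).indicator (fun r => ENNReal.ofReal (r ^ (d - 1)) * h (r • ω)) r ≤
        (Icc (R - s) (R + s)).indicator (fun _ => ((2 ^ (d - 1) * K : ℝ≥0) : ℝ≥0∞)) r := by
    intro ω hω r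
    by_cases hr : r ∈ Ioi (0:ℝ)
    swap
    · rw [indicator_of_notMem hr]; exact zero_le
    rw [indicator_of_mem hr]
    have hr' : (0:ℝ) < r := hr
    by_cases hra : r • ω ∈ ann
    swap
    · rw [hh, indicator_of_notMem hra, mul_zero]; exact zero_le
    have hn : ‖r • ω‖ = r := by rw [norm_smul, hω, mul_one, Real.norm_eq_abs, abs_of_pos hr']
    obtain ⟨_, ha, hb⟩ := hra
    rw [hn] at ha hb
    have hrI : r ∈ Icc (R - s) (R + s) :=
      ⟨by linarith [(abs_le.1 hb).1], by linarith [(abs_le.1 hb).2]⟩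
    rw [indicator_of_mem hrI]
    push_cast
    refine mul_le_mul' ?_ (hhK _)
    rw [ENNReal.ofReal_pow hr'.le]
    refine pow_le_pow_left' ?_ _
    rw [show (2 : ℝ≥0∞) = ENNReal.ofReal 2 by simp]
    exact ENNReal.ofReal_le_ofReal ha.le
  have hψω : ∀ ω : Ed d, ψ (R • ω) =
      ∫⁻ r, (Ioi (0:ℝ)).indicator (fun r => ENNReal.ofReal (r ^ (d - 1)) * h (r • ω)) r := by
    intro ω
    rw [lintegral_indicator measurableSet_Ioi]
    simp only [hψ, smul_smul, mul_assoc, inv_mul_cancel₀ hR0.ne', mul_one]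
  have hψb : ∀ ω : Ed d, ‖ω‖ = 1 → ψ (R • ω) ≤ ENNReal.ofReal (2 ^ (d - 1) * K * (2 * s)) := by
    intro ω hω
    rw [hψω]
    refine (lintegral_mono (hprof ω hω)).trans ?_
    rw [lintegral_indicator measurableSet_Icc, setLIntegral_const, Real.volume_Icc,
      ← ENNReal.ofReal_coe_nnreal, ← ENNReal.ofReal_mul (NNReal.coe_nonneg _)]
    refine ENNReal.ofReal_le_ofReal (le_of_eq ?_)
    push_cast; ring
  have hψsq : ∀ ω : Ed d, ‖ω‖ = 1 → ψ (R • ω) ^ 2 ≤ 8 * ((2 ^ (d - 1) * K : ℝ≥0) : ℝ≥0∞) *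
      ∫⁻ r in Ioi (0:ℝ), ENNReal.ofReal (r ^ (d - 1)) *
        (h (r • ω) * ENNReal.ofReal |‖r • ω‖ - R|) := by
    intro ω hω
    have hfin : ψ (R • ω) ≠ ∞ := ne_top_of_le_ne_top ENNReal.ofReal_ne_top (hψb ω hω)
    rw [hψω] at hfin ⊢
    refine (bathtub (K := 2 ^ (d - 1) * K) ?_ (fun r => ?_) R hfin).trans (le_of_eq ?_)
    · exact Measurable.indicator (by fun_prop) measurableSet_Ioi
    · exact (hprof ω hω r).trans (indicator_le_self _ _ r)
    · congr 1
      rw [← lintegral_indicator measurableSet_Ioi]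
      refine lintegral_congr fun r => ?_
      by_cases hr : r ∈ Ioi (0:ℝ)
      · have hr' : (0:ℝ) < r := hr
        rw [indicator_of_mem hr, indicator_of_mem hr, norm_smul, hω, mul_one, Real.norm_eq_abs r,
          abs_of_pos hr', mul_assoc]
      · rw [indicator_of_notMem hr, indicator_of_notMem hr, zero_mul]
  have hsphere : ∀ x ∈ sphere (0 : Ed d) R, ‖R⁻¹ • x‖ = 1 ∧ R • R⁻¹ • x = x := by
    intro x hx
    rw [mem_sphere_zero_iff_norm] at hx
    rw [norm_smul, norm_inv, hx, Real.norm_eq_abs, abs_of_pos hR0, smul_smul,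
      mul_inv_cancel₀ hR0.ne', one_smul]
    exact ⟨inv_mul_cancel₀ hR0.ne', rfl⟩
  have hψs : ∀ x ∈ sphere (0 : Ed d) R, w x * ψ x ≤
      ENNReal.ofReal (C₁ * (2 ^ (d - 1) * K * (2 * s))) := by
    intro x hx
    obtain ⟨h1, h2⟩ := hsphere x hx
    have := hψb _ h1
    rw [h2] at this
    rw [ENNReal.ofReal_mul (NNReal.coe_nonneg _), ENNReal.ofReal_coe_nnreal]
    exact mul_le_mul' (hwC x) this
  have hsae : ∀ᵐ x ∂(sphMeas d R), x ∈ sphere (0 : Ed d) R :=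
    ae_restrict_mem isClosed_sphere.measurableSet
  have hofReal : ∀ᵐ x ∂(sphMeas d R), ENNReal.ofReal ((w x * ψ x).toReal) = w x * ψ x := by
    filter_upwards [hsae] with x hx
    exact ENNReal.ofReal_toReal (ne_top_of_le_ne_top ENNReal.ofReal_ne_top (hψs x hx))
  refine ⟨fun x => (w x * ψ x).toReal, (hw.mul hψm).ennreal_toReal, fun x => ENNReal.toReal_nonneg,
    ?_, ?_, ?_⟩
  · intro x hx
    refine (ENNReal.toReal_mono ENNReal.ofReal_ne_top (hψs x hx)).trans ?_
    rw [ENNReal.toReal_ofReal (by positivity)]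
    push_cast
    have : 0 ≤ (C₁ : ℝ) * 2 ^ (d - 1) * K * s := by positivity
    linarith
  · calc ∫⁻ x, ENNReal.ofReal ((w x * ψ x).toReal ^ 2) ∂(sphMeas d R)
        ≤ ∫⁻ x, C₁ * (w x * ψ x ^ 2) ∂(sphMeas d R) := by
          refine lintegral_mono_ae ?_
          filter_upwards [hofReal] with x hx
          rw [ENNReal.ofReal_pow ENNReal.toReal_nonneg, hx]
          calc (w x * ψ x) ^ 2 = w x * (w x * ψ x ^ 2) := by ring
            _ ≤ _ := mul_le_mul_left (hwC x) _
      _ = C₁ * ∫⁻ ω, ψ (R • ω) ^ 2 ∂(sph1 d) := by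
          rw [lintegral_const_mul _ (by fun_prop)]
          congr 1
          rw [← lintegral_map (f := fun x => ψ x ^ 2) (g := fun ω : Ed d => R • ω) (by fun_prop)
            (by fun_prop), hSw, lintegral_withDensity_eq_lintegral_mul _ hw (by fun_prop)]
          rfl
      _ ≤ C₁ * ∫⁻ ω, 8 * ((2 ^ (d - 1) * K : ℝ≥0) : ℝ≥0∞) *
            (∫⁻ r in Ioi (0:ℝ), ENNReal.ofReal (r ^ (d - 1)) *
              (h (r • ω) * ENNReal.ofReal |‖r • ω‖ - R|)) ∂(sph1 d) := by
          refine mul_le_mul_right (lintegral_mono_ae ?_) _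
          filter_upwards [sph1_ae_norm d] with ω hω using hψsq ω hω
      _ = _ := by
          rw [lintegral_const_mul, ← polar hd (f := fun y => h y * ENNReal.ofReal |‖y‖ - R|)
            (by fun_prop)]
          · rw [hmh, lintegral_withDensity_eq_lintegral_mul _ hhm (by fun_prop)]
            push_cast
            simp only [Pi.mul_apply]
            ring
          · refine Measurable.lintegral_prod_right' (f := fun p : Ed d × ℝ =>
              ENNReal.ofReal (p.2 ^ (d - 1)) * (h (p.2 • p.1) * ENNReal.ofReal |‖p.2 • p.1‖ - R|))
              (by fun_prop)
  · rw [withDensity_congr_ae hofReal]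
    have hq : Measurable fun y : Ed d => (R * ‖y‖⁻¹) • y := by fun_prop
    ext A hA
    rw [Measure.map_apply hq hA]
    conv_lhs => rw [hmh]
    rw [withDensity_apply _ (hq hA), withDensity_apply _ hA,
      ← lintegral_indicator (hq hA), polar hd (hhm.indicator (hq hA))]
    have e1 : ∫⁻ x in A, w x * ψ x ∂(sphMeas d R) = ∫⁻ ω, A.indicator ψ (R • ω) ∂(sph1 d) := by
      rw [← lintegral_map (f := A.indicator ψ) (g := fun ω : Ed d => R • ω)
        (hψm.indicator hA) (by fun_prop), hSw,
        lintegral_withDensity_eq_lintegral_mul _ hw (hψm.indicator hA), ← lintegral_indicator hA]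
      refine lintegral_congr fun x => ?_
      by_cases hx : x ∈ A <;> simp [hx]
    rw [e1]
    refine lintegral_congr_ae ?_
    filter_upwards [sph1_ae_norm d] with ω hω
    have e2 : ∀ r ∈ Ioi (0:ℝ), (R * ‖r • ω‖⁻¹) • r • ω = R • ω := by
      intro r hr
      have hr' : (0:ℝ) < r := hr
      rw [norm_smul, hω, mul_one, Real.norm_eq_abs, abs_of_pos hr', smul_smul, mul_assoc,
        inv_mul_cancel₀ hr'.ne', mul_one]
    by_cases hx : R • ω ∈ A
    · rw [indicator_of_mem hx, hψω, lintegral_indicator measurableSet_Ioi]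
      refine setLIntegral_congr_fun measurableSet_Ioi fun r hr => ?_
      rw [indicator_of_mem (by rw [mem_preimage, e2 r hr]; exact hx)]
    · rw [indicator_of_notMem hx]
      refine (setLIntegral_congr_fun (g := fun _ => 0) measurableSet_Ioi fun r hr => ?_).trans
        (by simp)
      rw [indicator_of_notMem (by rw [mem_preimage, e2 r hr]; exact hx), mul_zero]

/-- Radial projection of start points `z` and comparison with crossing points `e` on `∂B_R`. -/
lemma projection_lemma {d : ℕ} (hd : 2 ≤ d) : ∃ C : ℝ≥0, ∀ R ∈ Ioo (1/2 : ℝ) (3/2),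
    ∀ (α : Type) [MeasurableSpace α] (P : Measure α) [IsFiniteMeasure P] (z e : α → Ed d)
      (K : ℝ≥0) (s : ℝ), Measurable z → Measurable e → 0 ≤ s →
      P.map z ≤ (K : ℝ≥0∞) • volume →
      (∀ᵐ p ∂P, 0 < ‖z p‖ ∧ ‖z p‖ < 2 ∧ |‖z p‖ - R| ≤ s) → (∀ᵐ p ∂P, ‖e p‖ = R) →
      ∃ ρ : Ed d → ℝ, (∀ x, 0 ≤ ρ x) ∧
        (∀ x ∈ sphere (0 : Ed d) R, ρ x ≤ C * K * s) ∧
        (∫⁻ x, ENNReal.ofReal (ρ x ^ 2) ∂(sphMeas d R)) ≤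
          C * K * ∫⁻ p, ENNReal.ofReal |‖z p‖ - R| ∂P ∧
        W2geoSq R ((sphMeas d R).withDensity fun x => ENNReal.ofReal (ρ x)) (P.map e) ≤
          16 * ∫⁻ p, ENNReal.ofReal (‖z p - e p‖ ^ 2) ∂P := by
  obtain ⟨C, hC⟩ := radial_density hd
  refine ⟨C, fun R hR α _ P _ z e K s hz he hs hK hzs heR => ?_⟩
  have hR0 : 0 < R := by linarith [hR.1]
  have hmeas : MeasurableSet {y : Ed d | 0 < ‖y‖ ∧ ‖y‖ < 2 ∧ |‖y‖ - R| ≤ s} :=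
    (measurableSet_lt measurable_const measurable_norm).inter
      ((measurableSet_lt measurable_norm measurable_const).inter
        (measurableSet_le (measurable_norm.sub_const R).abs measurable_const))
  obtain ⟨ρ, -, hρ0, hρs, hρ2, hρ⟩ := hC R hR (P.map z) K s hs hK
    ((ae_map_iff hz.aemeasurable hmeas).2 hzs)
  refine ⟨ρ, hρ0, hρs, ?_, ?_⟩
  · rwa [lintegral_map (by fun_prop) hz] at hρ2
  · have hq : Measurable fun y : Ed d => (R * ‖y‖⁻¹) • y := by fun_prop
    have hqz : Measurable fun p => (R * ‖z p‖⁻¹) • z p := hq.comp hz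
    have hin : Measurable fun p : Ed d × Ed d => ENNReal.ofReal (geoDist R p.1 p.2 ^ 2) := by
      unfold geoDist
      refine ENNReal.measurable_ofReal.comp (Measurable.pow_const (measurable_const.mul
        (Real.measurable_arccos.comp (Measurable.div_const ?_ _))) 2)
      fun_prop
    unfold W2geoSq
    refine sInf_le_of_le ⟨P.map fun p => ((R * ‖z p‖⁻¹) • z p, e p), ?_, ?_, rfl⟩ ?_
    · rw [Measure.map_map measurable_fst (by fun_prop), ← hρ, Measure.map_map hq hz]
      rfl
    · rw [Measure.map_map measurable_snd (by fun_prop)]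
      rfl
    · rw [lintegral_map hin (by fun_prop), ← lintegral_const_mul _ (by fun_prop)]
      refine lintegral_mono_ae ?_
      filter_upwards [hzs, heR] with p ⟨hp1, hp2, _⟩ hp
      have hn : ‖(R * ‖z p‖⁻¹) • z p‖ = R := by
        rw [norm_smul, norm_mul, norm_inv, norm_norm, Real.norm_eq_abs, abs_of_pos hR0, mul_assoc,
          inv_mul_cancel₀ hp1.ne', mul_one]
      rw [show (16 : ℝ≥0∞) = ENNReal.ofReal 16 by simp, ← ENNReal.ofReal_mul (by norm_num)]
      refine ENNReal.ofReal_le_ofReal ((geoDist_sq_le hR0 hn hp).trans ?_)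
      have h1 : ‖(R * ‖z p‖⁻¹) • z p - z p‖ = |R - ‖z p‖| := by
        have : (R * ‖z p‖⁻¹) • z p - z p = ((R - ‖z p‖) * ‖z p‖⁻¹) • z p := by
          rw [sub_mul, mul_inv_cancel₀ hp1.ne', sub_smul, one_smul]
        rw [this, norm_smul, norm_mul, norm_inv, norm_norm, mul_assoc, inv_mul_cancel₀ hp1.ne',
          mul_one, Real.norm_eq_abs]
      have h2 : |R - ‖z p‖| ≤ ‖z p - e p‖ := by
        rw [← hp, norm_sub_rev]; exact abs_norm_sub_norm_le _ _
      have h3 : ‖(R * ‖z p‖⁻¹) • z p - e p‖ ≤ 2 * ‖z p - e p‖ := by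
        have := norm_sub_le_norm_sub_add_norm_sub ((R * ‖z p‖⁻¹) • z p) (z p) (e p)
        linarith
      nlinarith [norm_nonneg ((R * ‖z p‖⁻¹) • z p - e p)]

/-! ### Averaging over radii and cumulated fluxes -/

section Crossings

variable {d : ℕ} {Ω G : Set (Ed d)} {T : Ed d → Ed d} {M : ℝ} {Cnd : Set (ℝ × Ed d)}
  {s : ℝ × Ed d → ℝ} {a b : ℝ}

/-- Good starting points whose trajectories cross `∂B_R`. -/
def crossSet (G : Set (Ed d)) (Cnd : Set (ℝ × Ed d)) (R : ℝ) : Set (Ed d) := {x ∈ G | (R, x) ∈ Cnd}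

lemma Crossing.measurableSet_crossSet (c : Crossing T Cnd s a b) (hG : MeasurableSet G) (R : ℝ) :
    MeasurableSet (crossSet G Cnd R) :=
  hG.inter (measurable_prodMk_left c.measC)

lemma Crossing.near (c : Crossing T Cnd s a b) (h : GoodMap Ω T G M) {R : ℝ} (hR : R ≤ 3 / 2)
    {x : Ed d} (hx : x ∈ crossSet G Cnd R) :
    ‖x‖ < 7 / 4 ∧ ‖T x - x‖ ≤ M ∧ ‖T x - x‖ ≤ 1 / 16 := by
  have hm := c.mem _ hx.2
  refine h.near x hx.1 (s (R, x)) ⟨c.a0.trans hm.1, hm.2.trans c.b1⟩ ?_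
  rw [c.hit _ hx.2]; exact hR

lemma measurable_Tt (hT : Measurable T) : Measurable fun p : ℝ × Ed d => Tt T p.1 p.2 := by
  unfold Tt; fun_prop

lemma Crossing.measurable_point (c : Crossing T Cnd s a b) (hT : Measurable T) (R : ℝ) :
    Measurable fun x => Tt T (s (R, x)) x :=
  (measurable_Tt hT).comp ((c.measS.comp measurable_prodMk_left).prodMk measurable_id)

/-- Replacing all starting points by the good ones only removes a null set. -/
lemma GoodMap.restrict_eq (h : GoodMap Ω T G M) (p : Ed d → Prop) :
    (volume : Measure (Ed d)).restrict {x ∈ Ω | p x} = volume.restrict {x ∈ G | p x} := by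
  refine Measure.restrict_congr_set ?_
  have hae : ∀ᵐ x ∂(volume : Measure (Ed d)), x ∉ Ω \ G := compl_mem_ae_iff.2 h.null
  filter_upwards [hae] with x hx
  refine propext ⟨fun hh => ⟨?_, hh.2⟩, fun hh => ⟨h.sub hh.1, hh.2⟩⟩
  by_contra hc
  exact hx ⟨hh.1, hc⟩

lemma GoodMap.volume_lt_top (h : GoodMap Ω T G M) : volume G < ∞ :=
  (measure_mono h.sub).trans_lt h.bddΩ.measure_lt_top

lemma GoodMap.isFinite_crossSet (h : GoodMap Ω T G M) (Cnd : Set (ℝ × Ed d)) (R : ℝ) :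
    IsFiniteMeasure ((volume : Measure (Ed d)).restrict (crossSet G Cnd R)) :=
  ⟨by
    rw [Measure.restrict_apply_univ]
    exact (measure_mono fun x hx => hx.1).trans_lt h.volume_lt_top⟩

lemma Crossing.measurable_lintegral (c : Crossing T Cnd s a b) (h : GoodMap Ω T G M)
    {F : Ed d → ℝ≥0∞} (hF : Measurable F) :
    Measurable fun R => ∫⁻ x in crossSet G Cnd R, F x := by
  have e : ∀ R, ∫⁻ x in crossSet G Cnd R, F x =
      ∫⁻ x, ((Prod.snd ⁻¹' G) ∩ Cnd).indicator (fun p : ℝ × Ed d => F p.2) (R, x) := by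
    intro R
    rw [← lintegral_indicator (c.measurableSet_crossSet h.measG R)]
    rfl
  simp_rw [e]
  exact Measurable.lintegral_prod_right' (f := ((Prod.snd ⁻¹' G) ∩ Cnd).indicator
    (fun p : ℝ × Ed d => F p.2)) ((hF.comp measurable_snd).indicator
      ((measurable_snd h.measG).inter c.measC))

/-- Points near the ball whose displacement is at most `M`; it contains all the good starting points
of trajectories meeting `B̄_{3/2}`. -/
def nearSet (T : Ed d → Ed d) (M : ℝ) : Set (Ed d) :=
  {x | ‖x‖ < 2 ∧ ‖T x‖ < 2 ∧ ‖T x - x‖ ≤ M}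

lemma measurableSet_nearSet (hT : Measurable T) (M : ℝ) : MeasurableSet (nearSet T M) :=
  (measurableSet_lt measurable_norm measurable_const).inter
    ((measurableSet_lt hT.norm measurable_const).inter
      (measurableSet_le (hT.sub measurable_id).norm measurable_const))

lemma Crossing.subset_nearSet (c : Crossing T Cnd s a b) (h : GoodMap Ω T G M) {R : ℝ}
    (hR : R ≤ 3 / 2) : crossSet G Cnd R ⊆ nearSet T M := by
  intro x hx
  obtain ⟨h1, h2, h3⟩ := c.near h hR hx
  have := norm_le_norm_add_norm_sub' (T x) x
  exact ⟨by linarith, by linarith, h2⟩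

/-- Averaging over radii: a trajectory with displacement `v` crosses a set of radii of measure at
most `|v|` times the length of the time interval. -/
lemma Crossing.average (c : Crossing T Cnd s a b) (h : GoodMap Ω T G M)
    {F : Ed d → ℝ≥0∞} (hF : Measurable F) :
    ∫⁻ R in Ioo (1/2 : ℝ) (3/2), ∫⁻ x in crossSet G Cnd R, F x ≤
      ENNReal.ofReal (b - a) * ∫⁻ x in nearSet T M, F x * ENNReal.ofReal ‖T x - x‖ := by
  have hT := h.measT
  have hset : MeasurableSet ((Prod.snd ⁻¹' G) ∩ Cnd ∩ (Prod.fst ⁻¹' (Ioo (1/2 : ℝ) (3/2)))) :=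
    ((measurable_snd h.measG).inter c.measC).inter (measurable_fst measurableSet_Ioo)
  set B := (Prod.snd ⁻¹' G) ∩ Cnd ∩ (Prod.fst ⁻¹' (Ioo (1/2 : ℝ) (3/2))) with hB
  have e : ∫⁻ R in Ioo (1/2 : ℝ) (3/2), ∫⁻ x in crossSet G Cnd R, F x =
      ∫⁻ R, ∫⁻ x, B.indicator (fun p : ℝ × Ed d => F p.2) (R, x) := by
    rw [← lintegral_indicator measurableSet_Ioo]
    refine lintegral_congr fun R => ?_
    by_cases hR : R ∈ Ioo (1/2 : ℝ) (3/2)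
    · rw [indicator_of_mem hR, ← lintegral_indicator (c.measurableSet_crossSet h.measG R)]
      refine lintegral_congr fun x => ?_
      by_cases hx : x ∈ crossSet G Cnd R
      · rw [indicator_of_mem hx, indicator_of_mem (show (R, x) ∈ B from ⟨hx, hR⟩)]
      · rw [indicator_of_notMem hx, indicator_of_notMem fun hh : (R, x) ∈ B => hx hh.1]
    · rw [indicator_of_notMem hR]
      refine (lintegral_eq_zero_of_ae_eq_zero (Filter.Eventually.of_forall fun x => ?_)).symm
      exact indicator_of_notMem (fun hh : (R, x) ∈ B => hR hh.2) _
  rw [e, lintegral_lintegral_swap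
    (f := fun R x => B.indicator (fun p : ℝ × Ed d => F p.2) (R, x)) (((hF.comp measurable_snd).indicator hset).aemeasurable), ← lintegral_const_mul _ (by fun_prop),
    ← lintegral_indicator (measurableSet_nearSet hT M)]
  refine lintegral_mono fun x => ?_
  have e2 : ∫⁻ R, B.indicator (fun p : ℝ × Ed d => F p.2) (R, x) =
      F x * volume {R | (R, x) ∈ B} := by
    rw [← setLIntegral_const, ← lintegral_indicator
      (show MeasurableSet {R | (R, x) ∈ B} from measurable_prodMk_right hset)]
    rfl
  simp only []
  rw [e2]
  by_cases hx : x ∈ nearSet T M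
  · rw [indicator_of_mem hx]
    have h1 : volume {R | (R, x) ∈ B} ≤ ENNReal.ofReal ‖T x - x‖ * ENNReal.ofReal (b - a) := by
      refine (measure_mono fun R (hR : (R, x) ∈ B) => ?_).trans ((c.len x univ).trans ?_)
      · exact ⟨hR.1.2, mem_univ _⟩
      · rw [univ_inter, Real.volume_Icc]
    calc F x * volume {R | (R, x) ∈ B} ≤
        F x * (ENNReal.ofReal ‖T x - x‖ * ENNReal.ofReal (b - a)) := mul_le_mul_right h1 _
      _ = _ := by ring
  · rw [indicator_of_notMem hx]
    have h1 : {R | (R, x) ∈ B} = ∅ := by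
      refine eq_empty_of_forall_notMem fun R (hR : (R, x) ∈ B) => hx ?_
      exact c.subset_nearSet h hR.2.2.le hR.1
    rw [h1, measure_empty, mul_zero]

end Crossings

/-- Boundary densities for the cumulated fluxes: project the starting points radially. -/
lemma flux_density {d : ℕ} (hd : 2 ≤ d) : ∃ C : ℝ≥0, ∀ (Ω G : Set (Ed d)) (T : Ed d → Ed d)
    (M : ℝ) (Cnd : Set (ℝ × Ed d)) (s : ℝ × Ed d → ℝ) (a b : ℝ), 0 ≤ M →
    GoodMap Ω T G M → Crossing T Cnd s a b → ∀ R ∈ Ioo (1/2 : ℝ) (3/2),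
      ∃ ρ : Ed d → ℝ, (∀ x, 0 ≤ ρ x) ∧ (∀ x ∈ sphere (0 : Ed d) R, ρ x ≤ C * M) ∧
        (∫⁻ x, ENNReal.ofReal (ρ x ^ 2) ∂(sphMeas d R)) ≤
          C * ∫⁻ x in crossSet G Cnd R, ENNReal.ofReal ‖T x - x‖ ∧
        W2geoSq R ((sphMeas d R).withDensity fun x => ENNReal.ofReal (ρ x))
            (Measure.map (fun x => Tt T (s (R, x)) x) (volume.restrict {x ∈ Ω | (R, x) ∈ Cnd})) ≤
          16 * ∫⁻ x in crossSet G Cnd R, ENNReal.ofReal (‖T x - x‖ ^ 2) := by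
  obtain ⟨C, hC⟩ := projection_lemma hd
  refine ⟨C, fun Ω G T M Cnd s a b hM h c R hR => ?_⟩
  have hfin := h.isFinite_crossSet Cnd R
  have hmem : ∀ᵐ x ∂((volume : Measure (Ed d)).restrict (crossSet G Cnd R)),
      x ∈ crossSet G Cnd R := ae_restrict_mem (c.measurableSet_crossSet h.measG R)
  have hdist : ∀ x ∈ crossSet G Cnd R, ‖x - Tt T (s (R, x)) x‖ ≤ ‖T x - x‖ := by
    intro x hx
    have hm := c.mem _ hx.2
    have h0 : 0 ≤ s (R, x) := c.a0.trans hm.1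
    have h1 : s (R, x) ≤ 1 := hm.2.trans c.b1
    rw [norm_sub_rev, Tt_eq, add_sub_cancel_left, norm_smul, Real.norm_eq_abs, abs_of_nonneg h0]
    exact mul_le_of_le_one_left (norm_nonneg _) h1
  have habs : ∀ x ∈ crossSet G Cnd R, |‖x‖ - R| ≤ ‖T x - x‖ := by
    intro x hx
    have := abs_norm_sub_norm_le x (Tt T (s (R, x)) x)
    rw [c.hit _ hx.2] at this
    exact this.trans (hdist x hx)
  obtain ⟨ρ, h0, hs, h2, hW⟩ := hC R hR (Ed d) (volume.restrict (crossSet G Cnd R)) id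
    (fun x => Tt T (s (R, x)) x) 1 M measurable_id (c.measurable_point h.measT R) hM
    (by rw [Measure.map_id, ENNReal.coe_one, one_smul]; exact Measure.restrict_le_self)
    (by
      filter_upwards [hmem] with x hx
      obtain ⟨n1, n2, n3⟩ := c.near h hR.2.le hx
      have h4 := habs x hx
      have h5 := abs_le.1 h4
      exact ⟨by simp only [id]; linarith [h5.1, hR.1], by simp only [id]; linarith, h4.trans n2⟩)
    (by filter_upwards [hmem] with x hx using c.hit _ hx.2)
  refine ⟨ρ, h0, fun x hx => by simpa using hs x hx, h2.trans ?_, ?_⟩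
  · rw [ENNReal.coe_one, mul_one]
    refine mul_le_mul_right (lintegral_mono_ae ?_) _
    filter_upwards [hmem] with x hx using ENNReal.ofReal_le_ofReal (habs x hx)
  · rw [h.restrict_eq]
    refine hW.trans (mul_le_mul_right (lintegral_mono_ae ?_) _)
    filter_upwards [hmem] with x hx
    refine ENNReal.ofReal_le_ofReal ?_
    exact pow_le_pow_left₀ (norm_nonneg _) (hdist x hx) 2

/-! ### The terminal layer -/

section Layer

variable {d : ℕ} {Ω G O : Set (Ed d)} {T : Ed d → Ed d} {M : ℝ}

open ProbabilityTheory in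
/-- Disintegrating a coupling `π` of `μ|_O` along its first marginal and pulling back by `T`. -/
lemma glue_le {μ : Measure (Ed d)} {π : Measure (Ed d × Ed d)} [IsFiniteMeasure π]
    (hT : Measurable T) (hμ : Measure.map T (volume.restrict Ω) = μ)
    (hΩ2 : ball (0 : Ed d) 2 ⊆ Ω) (hO : IsOpen O) (hO2 : ball (0 : Ed d) 2 ⊆ O)
    (hπ : π.map Prod.fst = μ.restrict O) {H : Ed d × Ed d → ℝ≥0∞} (hH : Measurable H) :
    ∫⁻ x in nearSet T M, ∫⁻ y, H (T x, y) ∂(π.condKernel (T x)) ≤ ∫⁻ p, H p ∂π := by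
  have hm : Measurable fun x => ∫⁻ y, H (x, y) ∂(π.condKernel x) :=
    Measurable.lintegral_kernel_prod_right' hH
  have e : ∫⁻ p, H p ∂π =
      ∫⁻ x in T ⁻¹' O, ∫⁻ y, H (T x, y) ∂(π.condKernel (T x)) ∂(volume.restrict Ω) := by
    conv_lhs => rw [← π.disintegrate π.condKernel]
    rw [Measure.lintegral_compProd hH]
    have : π.fst = μ.restrict O := hπ
    rw [this, ← hμ, Measure.restrict_map hT hO.measurableSet, lintegral_map hm hT]
  rw [e, Measure.restrict_restrict (hT hO.measurableSet)]
  refine lintegral_mono_set fun x hx => ⟨hO2 (mem_ball_zero_iff.2 hx.2.1),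
    hΩ2 (mem_ball_zero_iff.2 hx.1)⟩

/-- The target density `κ` is bounded: the mass that the coupling sends to `B_1` comes from
`B_{3/2}`, where `μ` has mass at most `|B_2|`, or travels a distance of at least `1/2`, which costs
at least a quarter of it. -/
lemma kappa_le (h : GoodMap Ω T G M) {μ : Measure (Ed d)} {π : Measure (Ed d × Ed d)} {κ : ℝ≥0∞}
    (hμ : Measure.map T (volume.restrict Ω) = μ) (hO2 : ball (0 : Ed d) 2 ⊆ O)
    (hπ : π.map Prod.fst = μ.restrict O) (hπ2 : π.map Prod.snd = κ • volume.restrict O)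
    (hc : ∫⁻ p, ENNReal.ofReal (‖p.1 - p.2‖ ^ 2) ∂π ≤ 2) :
    κ ≤ (volume (ball (0 : Ed d) 2) + 8) / volume (ball (0 : Ed d) 1) := by
  have hω0 : volume (ball (0 : Ed d) 1) ≠ 0 := (measure_ball_pos _ _ one_pos).ne'
  have hωt : volume (ball (0 : Ed d) 1) ≠ ∞ := measure_ball_lt_top.ne
  rw [ENNReal.le_div_iff_mul_le (Or.inl hω0) (Or.inl hωt)]
  have h1 : κ * volume (ball (0 : Ed d) 1) = π (Prod.snd ⁻¹' ball 0 1) := by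
    rw [← Measure.map_apply measurable_snd measurableSet_ball, hπ2, Measure.smul_apply,
      smul_eq_mul, Measure.restrict_apply measurableSet_ball,
      inter_eq_left.2 ((ball_subset_ball (by norm_num)).trans hO2)]
  have hsub : (Prod.snd ⁻¹' ball (0 : Ed d) 1 : Set (Ed d × Ed d)) ⊆
      Prod.fst ⁻¹' ball (0 : Ed d) (3/2) ∪
        {p | ENNReal.ofReal (1/4) ≤ ENNReal.ofReal (‖p.1 - p.2‖ ^ 2)} := by
    rintro p hp
    rw [mem_preimage, mem_ball_zero_iff] at hp
    by_cases hq : ‖p.1‖ < 3/2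
    · left; exact mem_ball_zero_iff.2 hq
    · right
      refine ENNReal.ofReal_le_ofReal ?_
      have := norm_le_norm_add_norm_sub' p.1 p.2
      nlinarith [norm_nonneg (p.1 - p.2)]
  have h2 : π (Prod.fst ⁻¹' ball (0 : Ed d) (3/2)) ≤ volume (ball (0 : Ed d) 2) := by
    rw [← Measure.map_apply measurable_fst measurableSet_ball, hπ]
    refine (Measure.restrict_apply_le _ _).trans ?_
    rw [← hμ, Measure.map_apply h.measT measurableSet_ball]
    have e := h.restrict_eq fun _ => True
    simp only [and_true] at e
    change (volume : Measure (Ed d)).restrict Ω = volume.restrict G at e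
    rw [e, Measure.restrict_apply (h.measT measurableSet_ball)]
    refine measure_mono fun x hx => ?_
    have := (h.near x hx.2 1 ⟨zero_le_one, le_rfl⟩ (by
      have h3 : ‖T x‖ < 3/2 := mem_ball_zero_iff.1 hx.1
      have h4 : Tt T 1 x = T x := by simp [Tt]
      rw [h4]; exact h3.le)).1
    rw [mem_ball_zero_iff]; linarith
  have h3 : π {p | ENNReal.ofReal (1/4) ≤ ENNReal.ofReal (‖p.1 - p.2‖ ^ 2)} ≤ 8 := by
    have hm := mul_meas_ge_le_lintegral (μ := π)
      (f := fun p : Ed d × Ed d => ENNReal.ofReal (‖p.1 - p.2‖ ^ 2)) (by fun_prop)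
      (ENNReal.ofReal (1/4))
    have := mul_le_mul_right (hm.trans hc) (4 : ℝ≥0∞)
    rw [← mul_assoc] at this
    have e4 : (4 : ℝ≥0∞) * ENNReal.ofReal (1/4) = 1 := by
      rw [show (4 : ℝ≥0∞) = ENNReal.ofReal 4 by simp, ← ENNReal.ofReal_mul (by norm_num)]
      norm_num
    rw [e4, one_mul] at this
    exact this.trans (by norm_num)
  rw [h1]
  exact (measure_mono hsub).trans ((measure_union_le _ _).trans (add_le_add h2 h3))

end Layer

/-- Young's inequality `(a + w) a ≤ 2 a² + 2 w²` with `a = τ v`, in `ℝ≥0∞`. -/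
lemma ofReal_layer_aux {τ v w : ℝ} (hτ : 0 ≤ τ) (hv : 0 ≤ v) (hw : 0 ≤ w) :
    ENNReal.ofReal τ * (ENNReal.ofReal (τ * v + w) * ENNReal.ofReal v) ≤
      2 * ENNReal.ofReal (τ ^ 2) * ENNReal.ofReal (v ^ 2) + 2 * ENNReal.ofReal (w ^ 2) := by
  have hvw : 0 ≤ τ * v + w := by positivity
  rw [show (2 : ℝ≥0∞) = ENNReal.ofReal 2 by simp, ← ENNReal.ofReal_mul hvw,
    ← ENNReal.ofReal_mul hτ, ← ENNReal.ofReal_mul (by norm_num), ← ENNReal.ofReal_mul (by positivity),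
    ← ENNReal.ofReal_mul (by norm_num), ← ENNReal.ofReal_add (by positivity) (by positivity)]
  refine ENNReal.ofReal_le_ofReal ?_
  nlinarith [sq_nonneg (τ * v - w), sq_nonneg (τ * v + w), sq_nonneg w]

lemma ofReal_layer_aux2 {τ v w M : ℝ} (hτ : 0 ≤ τ) (hv : 0 ≤ v) (hvM : v ≤ M) :
    ENNReal.ofReal τ * (ENNReal.ofReal ((τ * v + w) ^ 2) * ENNReal.ofReal v) ≤
      ENNReal.ofReal (τ * M) *
        (2 * ENNReal.ofReal (τ ^ 2) * ENNReal.ofReal (v ^ 2) + 2 * ENNReal.ofReal (w ^ 2)) := by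
  have hM : 0 ≤ M := hv.trans hvM
  rw [show (2 : ℝ≥0∞) = ENNReal.ofReal 2 by simp, ← ENNReal.ofReal_mul (by positivity),
    ← ENNReal.ofReal_mul hτ, ← ENNReal.ofReal_mul (by norm_num), ← ENNReal.ofReal_mul (by positivity),
    ← ENNReal.ofReal_mul (by norm_num), ← ENNReal.ofReal_add (by positivity) (by positivity),
    ← ENNReal.ofReal_mul (by positivity)]
  refine ENNReal.ofReal_le_ofReal ?_
  have h1 : (τ * v + w) ^ 2 ≤ 2 * τ ^ 2 * v ^ 2 + 2 * w ^ 2 := by nlinarith [sq_nonneg (τ * v - w)]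
  calc τ * ((τ * v + w) ^ 2 * v) ≤ τ * ((2 * τ ^ 2 * v ^ 2 + 2 * w ^ 2) * M) := by gcongr
    _ = _ := by ring

open ProbabilityTheory in
/-- Averaging over `R` for the terminal layer: the Markov kernel `k` plays the role of a coupling
glued behind the endpoints `T x`. -/
lemma layer_average {d : ℕ} {Ω G : Set (Ed d)} {T : Ed d → Ed d} {M τ : ℝ}
    {Cnd : Set (ℝ × Ed d)} {s : ℝ × Ed d → ℝ}
    (h : GoodMap Ω T G M) (c : Crossing T Cnd s (1 - τ) 1)
    (k : Kernel (Ed d) (Ed d)) [IsMarkovKernel k] {D : ℝ≥0∞}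
    (hD : ∫⁻ x in nearSet T M, ∫⁻ y, ENNReal.ofReal (‖T x - y‖ ^ 2) ∂(k x) ≤ D)
    {g : ℝ → ℝ → ℝ≥0∞} (hg : Measurable fun p : ℝ × ℝ => g p.1 p.2) {N : ℝ≥0∞}
    (hgN : ∀ v w, 0 ≤ v → v ≤ M → 0 ≤ w →
      ENNReal.ofReal τ * (g v w * ENNReal.ofReal v) ≤
      N * (2 * ENNReal.ofReal (τ ^ 2) * ENNReal.ofReal (v ^ 2) + 2 * ENNReal.ofReal (w ^ 2))) :
    ∫⁻ R in Ioo (1/2 : ℝ) (3/2), ∫⁻ x in crossSet G Cnd R,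
        (∫⁻ y, g ‖T x - x‖ ‖T x - y‖ ∂(k x)) ≤
      2 * N * (ENNReal.ofReal (τ ^ 2) *
        (∫⁻ x in ball (0 : Ed d) 2, ENNReal.ofReal (‖T x - x‖ ^ 2)) + D) := by
  have hT := h.measT
  have hgm : Measurable fun p : Ed d × Ed d => g ‖T p.1 - p.1‖ ‖T p.1 - p.2‖ :=
    hg.comp (((hT.comp measurable_fst).sub measurable_fst).norm.prodMk
      ((hT.comp measurable_fst).sub measurable_snd).norm)
  have hwm : Measurable fun p : Ed d × Ed d => ENNReal.ofReal (‖T p.1 - p.2‖ ^ 2) :=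
    ((((hT.comp measurable_fst).sub measurable_snd).norm).pow_const 2).ennreal_ofReal
  have hA : Measurable fun x => ∫⁻ y, g ‖T x - x‖ ‖T x - y‖ ∂(k x) :=
    Measurable.lintegral_kernel_prod_right' hgm
  have hW : Measurable fun x => ∫⁻ y, ENNReal.ofReal (‖T x - y‖ ^ 2) ∂(k x) :=
    Measurable.lintegral_kernel_prod_right' hwm
  have hv : Measurable fun x => ENNReal.ofReal ‖T x - x‖ := (hT.sub measurable_id).norm.ennreal_ofReal
  have hv2 : Measurable fun x => ENNReal.ofReal (‖T x - x‖ ^ 2) :=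
    ((hT.sub measurable_id).norm.pow_const 2).ennreal_ofReal
  have hAv : Measurable fun x =>
      (∫⁻ y, g ‖T x - x‖ ‖T x - y‖ ∂(k x)) * ENNReal.ofReal ‖T x - x‖ := hA.mul hv
  refine (c.average h hA).trans ?_
  rw [show 1 - (1 - τ) = τ by ring, ← lintegral_const_mul _ hAv]
  have hpt : ∀ x ∈ nearSet T M,
      ENNReal.ofReal τ * ((∫⁻ y, g ‖T x - x‖ ‖T x - y‖ ∂(k x)) * ENNReal.ofReal ‖T x - x‖) ≤
      N * (2 * ENNReal.ofReal (τ ^ 2) * ENNReal.ofReal (‖T x - x‖ ^ 2) +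
        2 * ∫⁻ y, ENNReal.ofReal (‖T x - y‖ ^ 2) ∂(k x)) := by
    intro x hx
    have hgx : Measurable fun y => g ‖T x - x‖ ‖T x - y‖ :=
      hg.comp (measurable_const.prodMk (measurable_const.sub measurable_id).norm)
    have hwx : Measurable fun y => ENNReal.ofReal (‖T x - y‖ ^ 2) := by fun_prop
    have hgv : Measurable fun y => g ‖T x - x‖ ‖T x - y‖ * ENNReal.ofReal ‖T x - x‖ :=
      hgx.mul_const _
    rw [← lintegral_mul_const _ hgx, ← lintegral_const_mul _ hgv]
    calc _ ≤ ∫⁻ y, N * (2 * ENNReal.ofReal (τ ^ 2) * ENNReal.ofReal (‖T x - x‖ ^ 2) +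
          2 * ENNReal.ofReal (‖T x - y‖ ^ 2)) ∂(k x) :=
          lintegral_mono fun y => hgN _ _ (norm_nonneg _) hx.2.2 (norm_nonneg _)
      _ = _ := by
        rw [lintegral_const_mul _ (hwx.const_mul 2 |>.const_add _),
          lintegral_add_left measurable_const,
          lintegral_const, measure_univ, mul_one, lintegral_const_mul _ hwx]
  calc _ ≤ ∫⁻ x in nearSet T M, N * (2 * ENNReal.ofReal (τ ^ 2) * ENNReal.ofReal (‖T x - x‖ ^ 2) +
        2 * ∫⁻ y, ENNReal.ofReal (‖T x - y‖ ^ 2) ∂(k x)) :=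
        setLIntegral_mono' (measurableSet_nearSet hT M) hpt
    _ = N * (2 * ENNReal.ofReal (τ ^ 2) * (∫⁻ x in nearSet T M, ENNReal.ofReal (‖T x - x‖ ^ 2)) +
        2 * ∫⁻ x in nearSet T M, ∫⁻ y, ENNReal.ofReal (‖T x - y‖ ^ 2) ∂(k x)) := by
        have hs : Measurable fun x => 2 * ENNReal.ofReal (τ ^ 2) * ENNReal.ofReal (‖T x - x‖ ^ 2) :=
          hv2.const_mul _
        have hs2 : Measurable fun x => 2 * ∫⁻ y, ENNReal.ofReal (‖T x - y‖ ^ 2) ∂(k x) :=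
          hW.const_mul _
        rw [lintegral_const_mul _ (by fun_prop), lintegral_add_left hs, lintegral_const_mul _ hv2, lintegral_const_mul _ hW]
    _ ≤ N * (2 * ENNReal.ofReal (τ ^ 2) *
          (∫⁻ x in ball (0 : Ed d) 2, ENNReal.ofReal (‖T x - x‖ ^ 2)) + 2 * D) := by
        gcongr
        exact fun x hx => mem_ball_zero_iff.2 hx.1
    _ = _ := by ring

open ProbabilityTheory in
/-- Boundary densities for the flux in the terminal layer. The crossing point is compared with a
partner `y` of the endpoint `T x` under a near-optimal coupling of `μ|_O` with the uniform measure
(or with `x` itself, should `y` be far away), and that partner is projected to the sphere. -/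
lemma lay_density {d : ℕ} (hd : 2 ≤ d) : ∃ C : ℝ≥0, ∀ (Ω G O : Set (Ed d)) (T : Ed d → Ed d)
    (M τ : ℝ) (μ : Measure (Ed d)) (Cnd : Set (ℝ × Ed d)) (s : ℝ × Ed d → ℝ)
    (π : Measure (Ed d × Ed d)) (κ : ℝ≥0∞), τ ∈ Ioo (0 : ℝ) 1 →
    GoodMap Ω T G M → Crossing T Cnd s (1 - τ) 1 → Measure.map T (volume.restrict Ω) = μ →
    ball (0 : Ed d) 2 ⊆ Ω → IsOpen O → ball (0 : Ed d) 2 ⊆ O →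
    π.map Prod.fst = μ.restrict O → π.map Prod.snd = κ • volume.restrict O →
    ∫⁻ p, ENNReal.ofReal (‖p.1 - p.2‖ ^ 2) ∂π ≤ 2 →
    ∃ F1 F2 : ℝ → ℝ≥0∞, Measurable F1 ∧ Measurable F2 ∧
      ∫⁻ R in Ioo (1/2 : ℝ) (3/2), F1 R ≤ C * (ENNReal.ofReal (τ ^ 2) *
        (∫⁻ x in ball (0 : Ed d) 2, ENNReal.ofReal (‖T x - x‖ ^ 2)) +
          ∫⁻ p, ENNReal.ofReal (‖p.1 - p.2‖ ^ 2) ∂π) ∧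
      ∫⁻ R in Ioo (1/2 : ℝ) (3/2), F2 R ≤ C * (ENNReal.ofReal (τ * M) * (ENNReal.ofReal (τ ^ 2) *
        (∫⁻ x in ball (0 : Ed d) 2, ENNReal.ofReal (‖T x - x‖ ^ 2)) +
          ∫⁻ p, ENNReal.ofReal (‖p.1 - p.2‖ ^ 2) ∂π)) ∧
      ∀ R ∈ Ioo (1/2 : ℝ) (3/2), ∃ ρ : Ed d → ℝ, (∀ x, 0 ≤ ρ x) ∧
        (∫⁻ x, ENNReal.ofReal (ρ x ^ 2) ∂(sphMeas d R)) ≤ F1 R ∧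
        W2geoSq R ((sphMeas d R).withDensity fun x => ENNReal.ofReal (ρ x))
            (Measure.map (fun x => Tt T (s (R, x)) x) (volume.restrict {x ∈ Ω | (R, x) ∈ Cnd})) ≤
          F2 R := by
  obtain ⟨C, hC⟩ := projection_lemma hd
  set K0 : ℝ≥0∞ := (volume (ball (0 : Ed d) 2) + 8) / volume (ball (0 : Ed d) 1) with hK0
  have hK0t : K0 ≠ ∞ := ENNReal.div_ne_top
    (ENNReal.add_ne_top.2 ⟨measure_ball_lt_top.ne, by norm_num⟩)
    (measure_ball_pos _ _ one_pos).ne'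
  set K : ℝ≥0 := K0.toNNReal + 1 with hK
  have hKe : (K : ℝ≥0∞) = K0 + 1 := by
    rw [hK, ENNReal.coe_add, ENNReal.coe_toNNReal hK0t, ENNReal.coe_one]
  refine ⟨2 * (C * K) + 32, fun Ω G O T M τ μ Cnd s π κ hτ h c hμ hΩ2 hO hO2 hπ hπ2 hcost => ?_⟩
  have hT := h.measT
  have hfinπ : IsFiniteMeasure π := by
    refine ⟨?_⟩
    have e1 : π univ = (π.map Prod.fst) univ := by
      rw [Measure.map_apply measurable_fst MeasurableSet.univ, preimage_univ]
    rw [e1, hπ, Measure.restrict_apply_univ, ← hμ]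
    refine (measure_mono (subset_univ _)).trans_lt ?_
    rw [Measure.map_apply hT MeasurableSet.univ, preimage_univ, Measure.restrict_apply_univ]
    exact h.bddΩ.measure_lt_top
  have hκ : κ ≤ K0 := kappa_le h hμ hO2 hπ hπ2 hcost
  set k : Kernel (Ed d) (Ed d) := π.condKernel.comap T hT with hk
  have hglue : ∀ H : Ed d × Ed d → ℝ≥0∞, Measurable H →
      ∫⁻ x in nearSet T M, ∫⁻ y, H (T x, y) ∂(k x) ≤ ∫⁻ p, H p ∂π := fun H hH => by
    simp only [hk, Kernel.comap_apply]
    exact glue_le hT hμ hΩ2 hO hO2 hπ hH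
  have hD := hglue (fun p => ENNReal.ofReal (‖p.1 - p.2‖ ^ 2)) (by fun_prop)
  have hg1 : Measurable fun p : ℝ × ℝ => ENNReal.ofReal (τ * p.1 + p.2) := by fun_prop
  have hg2 : Measurable fun p : ℝ × ℝ => ENNReal.ofReal ((τ * p.1 + p.2) ^ 2) := by fun_prop
  have hm1 : Measurable fun p : Ed d × Ed d => ENNReal.ofReal (τ * ‖T p.1 - p.1‖ + ‖T p.1 - p.2‖) :=
    hg1.comp (((hT.comp measurable_fst).sub measurable_fst).norm.prodMk
      ((hT.comp measurable_fst).sub measurable_snd).norm)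
  have hm2 : Measurable fun p : Ed d × Ed d =>
      ENNReal.ofReal ((τ * ‖T p.1 - p.1‖ + ‖T p.1 - p.2‖) ^ 2) :=
    hg2.comp (((hT.comp measurable_fst).sub measurable_fst).norm.prodMk
      ((hT.comp measurable_fst).sub measurable_snd).norm)
  have hA1 : Measurable fun x => ∫⁻ y, ENNReal.ofReal (τ * ‖T x - x‖ + ‖T x - y‖) ∂(k x) :=
    Measurable.lintegral_kernel_prod_right' hm1
  have hA2 : Measurable fun x => ∫⁻ y, ENNReal.ofReal ((τ * ‖T x - x‖ + ‖T x - y‖) ^ 2) ∂(k x) :=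
    Measurable.lintegral_kernel_prod_right' hm2
  refine ⟨fun R => (C * K : ℝ≥0) * ∫⁻ x in crossSet G Cnd R,
      (∫⁻ y, ENNReal.ofReal (τ * ‖T x - x‖ + ‖T x - y‖) ∂(k x)),
    fun R => 16 * ∫⁻ x in crossSet G Cnd R,
      (∫⁻ y, ENNReal.ofReal ((τ * ‖T x - x‖ + ‖T x - y‖) ^ 2) ∂(k x)),
    (c.measurable_lintegral h hA1).const_mul _, (c.measurable_lintegral h hA2).const_mul _,
    ?_, ?_, fun R hR => ?_⟩
  · rw [lintegral_const_mul _ (c.measurable_lintegral h hA1)]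
    have := layer_average h c k hD (g := fun v w => ENNReal.ofReal (τ * v + w)) hg1 (N := 1)
      (fun v w hv _ hw => by rw [one_mul]; exact ofReal_layer_aux hτ.1.le hv hw)
    refine (mul_le_mul_right this _).trans ?_
    rw [mul_one, ← mul_assoc]
    refine mul_le_mul_left ?_ _
    push_cast
    rw [mul_comm]
    exact le_self_add
  · rw [lintegral_const_mul _ (c.measurable_lintegral h hA2)]
    have := layer_average h c k hD (g := fun v w => ENNReal.ofReal ((τ * v + w) ^ 2)) hg2
      (N := ENNReal.ofReal (τ * M))
      (fun v w hv hvM hw => ofReal_layer_aux2 hτ.1.le hv hvM)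
    refine (mul_le_mul_right this _).trans ?_
    rw [← mul_assoc, ← mul_assoc, ← mul_assoc]
    refine mul_le_mul_left (mul_le_mul_left ?_ _) _
    push_cast
    rw [show (16 : ℝ≥0∞) * 2 = 32 by norm_num]
    exact le_add_self
  -- the glued law and its comparison point
  have hfin := h.isFinite_crossSet Cnd R
  have hcm := c.measurableSet_crossSet h.measG R
  set P : Measure (Ed d × Ed d) := (volume.restrict (crossSet G Cnd R)) ⊗ₘ k with hP
  have hmem : ∀ᵐ p ∂P, p.1 ∈ crossSet G Cnd R := by
    rw [hP, Measure.ae_compProd_iff (measurable_fst hcm)]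
    filter_upwards [ae_restrict_mem hcm] with x hx using Filter.Eventually.of_forall fun _ => hx
  set B : Set (Ed d × Ed d) := {p | ‖T p.1 - p.2‖ < 1/4} with hB
  have hBm : MeasurableSet B :=
    measurableSet_lt ((hT.comp measurable_fst).sub measurable_snd).norm measurable_const
  classical
  set z : Ed d × Ed d → Ed d := fun p => if p ∈ B then p.2 else p.1 with hz
  have hzm : Measurable z := Measurable.ite hBm measurable_snd measurable_fst
  set e : Ed d × Ed d → Ed d := fun p => Tt T (s (R, p.1)) p.1 with he
  have hem : Measurable e := (c.measurable_point hT R).comp measurable_fst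
  have hsub := c.subset_nearSet h hR.2.le
  have hdist : ∀ p : Ed d × Ed d, p.1 ∈ crossSet G Cnd R →
      ‖z p - e p‖ ≤ τ * ‖T p.1 - p.1‖ + ‖T p.1 - p.2‖ ∧ ‖z p - e p‖ ≤ 5/16 := by
    intro p hp
    obtain ⟨n1, n2, n3⟩ := c.near h hR.2.le hp
    have hm := c.mem _ hp.2
    have h0 : 0 ≤ s (R, p.1) := c.a0.trans hm.1
    have h1 : s (R, p.1) ≤ 1 := hm.2
    have hv0 := norm_nonneg (T p.1 - p.1)
    by_cases hpB : p ∈ B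
    · have hzp : z p = p.2 := if_pos hpB
      have hlt : ‖T p.1 - p.2‖ < 1/4 := hpB
      have e1 : z p - e p = (1 - s (R, p.1)) • (T p.1 - p.1) - (T p.1 - p.2) := by
        rw [hzp, he]; simp only []; rw [Tt_eq, sub_smul, one_smul]; abel
      have e2 : ‖z p - e p‖ ≤ (1 - s (R, p.1)) * ‖T p.1 - p.1‖ + ‖T p.1 - p.2‖ := by
        rw [e1]
        refine (norm_sub_le _ _).trans ?_
        rw [norm_smul, Real.norm_eq_abs, abs_of_nonneg (by linarith)]
      have e3 : (1 - s (R, p.1)) * ‖T p.1 - p.1‖ ≤ τ * ‖T p.1 - p.1‖ :=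
        mul_le_mul_of_nonneg_right (by linarith [hm.1]) hv0
      have e4 : τ * ‖T p.1 - p.1‖ ≤ 1 * ‖T p.1 - p.1‖ :=
        mul_le_mul_of_nonneg_right hτ.2.le hv0
      exact ⟨by linarith, by linarith⟩
    · have hzp : z p = p.1 := if_neg hpB
      have hge : 1/4 ≤ ‖T p.1 - p.2‖ := not_lt.1 hpB
      have e2 : ‖z p - e p‖ ≤ ‖T p.1 - p.1‖ := by
        rw [hzp, he]; simp only []
        rw [norm_sub_rev, Tt_eq, add_sub_cancel_left, norm_smul, Real.norm_eq_abs,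
          abs_of_nonneg h0]
        exact mul_le_of_le_one_left hv0 h1
      have e3 : 0 ≤ τ * ‖T p.1 - p.1‖ := mul_nonneg hτ.1.le hv0
      exact ⟨by linarith, by linarith⟩
  have habs : ∀ p : Ed d × Ed d, p.1 ∈ crossSet G Cnd R → |‖z p‖ - R| ≤ ‖z p - e p‖ := by
    intro p hp
    have := abs_norm_sub_norm_le (z p) (e p)
    rwa [show ‖e p‖ = R from c.hit _ hp.2] at this
  -- both marginals of the glued law have bounded density
  have hfst : P.map Prod.fst = volume.restrict (crossSet G Cnd R) := Measure.fst_compProd _ _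
  have hsnd : P.map Prod.snd ≤ K0 • volume := by
    refine Measure.le_intro fun A hA _ => ?_
    have h1 : (P.map Prod.snd) A = ∫⁻ x in crossSet G Cnd R, k x A := by
      rw [Measure.map_apply measurable_snd hA, hP, Measure.compProd_apply (measurable_snd hA)]
      rfl
    rw [h1]
    calc _ ≤ ∫⁻ x in nearSet T M, k x A := lintegral_mono_set hsub
      _ = ∫⁻ x in nearSet T M, ∫⁻ y, (Prod.snd ⁻¹' A).indicator 1 (T x, y) ∂(k x) := by
        refine lintegral_congr fun x => ?_
        rw [← lintegral_indicator_one hA]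
        rfl
      _ ≤ ∫⁻ p, (Prod.snd ⁻¹' A).indicator 1 p ∂π :=
        hglue _ (measurable_one.indicator (measurable_snd hA))
      _ = (π.map Prod.snd) A := by
        rw [lintegral_indicator_one (measurable_snd hA), Measure.map_apply measurable_snd hA]
      _ ≤ _ := by
        rw [hπ2, Measure.smul_apply, Measure.smul_apply, smul_eq_mul, smul_eq_mul]
        exact mul_le_mul' hκ (Measure.restrict_apply_le _ _)
  have hzlaw : P.map z ≤ (K : ℝ≥0∞) • volume := by
    refine Measure.le_intro fun A hA _ => ?_
    rw [Measure.map_apply hzm hA]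
    calc P (z ⁻¹' A) ≤ P (Prod.snd ⁻¹' A ∪ Prod.fst ⁻¹' A) := by
          refine measure_mono fun p hp => ?_
          by_cases hpB : p ∈ B
          · left; have hzp : z p = p.2 := if_pos hpB
            rw [mem_preimage, hzp] at hp; exact hp
          · right; have hzp : z p = p.1 := if_neg hpB
            rw [mem_preimage, hzp] at hp; exact hp
      _ ≤ P (Prod.snd ⁻¹' A) + P (Prod.fst ⁻¹' A) := measure_union_le _ _
      _ ≤ K0 * volume A + volume A := by
          rw [← Measure.map_apply measurable_snd hA, ← Measure.map_apply measurable_fst hA, hfst]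
          exact add_le_add (hsnd A) (Measure.restrict_apply_le _ _)
      _ = _ := by rw [Measure.smul_apply, smul_eq_mul, hKe, add_mul, one_mul]
  obtain ⟨ρ, h0, -, h2, hW⟩ := hC R hR (Ed d × Ed d) P z e K (1/2) hzm hem (by norm_num) hzlaw
    (by
      filter_upwards [hmem] with p hp
      have h5 := (hdist p hp).2
      have h6 := habs p hp
      have h7 := abs_le.1 h6
      exact ⟨by linarith [h7.1, hR.1], by linarith [h7.2, hR.2], by linarith⟩)
    (by filter_upwards [hmem] with p hp using c.hit _ hp.2)
  refine ⟨ρ, h0, h2.trans ?_, ?_⟩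
  · rw [ENNReal.coe_mul]
    refine mul_le_mul_right ?_ _
    rw [← Measure.lintegral_compProd hm1]
    refine lintegral_mono_ae ?_
    filter_upwards [hmem] with p hp using
      ENNReal.ofReal_le_ofReal ((habs p hp).trans (hdist p hp).1)
  · have hmap : P.map e =
        Measure.map (fun x => Tt T (s (R, x)) x) (volume.restrict {x ∈ Ω | (R, x) ∈ Cnd}) := by
      rw [h.restrict_eq, he]
      change _ = Measure.map (fun x => Tt T (s (R, x)) x) (volume.restrict (crossSet G Cnd R))
      rw [← hfst, Measure.map_map (c.measurable_point hT R) measurable_fst]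
      rfl
    rw [← hmap]
    refine hW.trans (mul_le_mul_right ?_ _)
    rw [← Measure.lintegral_compProd hm2]
    refine lintegral_mono_ae ?_
    filter_upwards [hmem] with p hp using
      ENNReal.ofReal_le_ofReal (pow_le_pow_left₀ (norm_nonneg _) (hdist p hp).1 2)

/-! ### The `L²` trace estimate -/

section Trace

variable {d : ℕ} {Ω G : Set (Ed d)} {T : Ed d → Ed d} {M : ℝ} {Cnd : Set (ℝ × Ed d)}
  {s : ℝ × Ed d → ℝ} {a b : ℝ}

/-- Along one trajectory, the change of variables from crossing radii to crossing times. -/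
lemma Crossing.lintegral_time_le (c : Crossing T Cnd s a b) (x : Ed d) {f : ℝ → ℝ≥0∞}
    (hf : Measurable f) :
    ∫⁻ R in {R | (R, x) ∈ Cnd}, f (s (R, x)) ≤
      ENNReal.ofReal ‖T x - x‖ * ∫⁻ t in Icc a b, f t := by
  have hm : Measurable fun R => s (R, x) := c.measS.comp measurable_prodMk_right
  have hS : MeasurableSet {R | (R, x) ∈ Cnd} := measurable_prodMk_right c.measC
  have hle : Measure.map (fun R => s (R, x)) (volume.restrict {R | (R, x) ∈ Cnd}) ≤
      ENNReal.ofReal ‖T x - x‖ • (volume.restrict (Icc a b)) := by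
    refine Measure.le_intro fun A hA _ => ?_
    rw [Measure.map_apply hm hA, Measure.restrict_apply (hm hA), Measure.smul_apply, smul_eq_mul,
      Measure.restrict_apply hA]
    refine (measure_mono ?_).trans (c.len x A)
    exact fun R hR => ⟨hR.2, hR.1⟩
  rw [← lintegral_map hf hm, ← smul_eq_mul, ← lintegral_smul_measure]
  exact lintegral_mono' hle le_rfl

/-- `F` in polar coordinates, cut off to the annulus `1/2 < |y| < 3/2`. -/
def polarCut (F : ℝ × (Ed d × ℝ) → ℝ≥0∞) (t : ℝ) (y : Ed d) : ℝ≥0∞ :=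
  {y : Ed d | ‖y‖ ∈ Ioo (1/2 : ℝ) (3/2)}.indicator (fun y => F (‖y‖, (‖y‖⁻¹ • y, t))) y

lemma measurable_polarCut {F : ℝ × (Ed d × ℝ) → ℝ≥0∞} (hF : Measurable F) :
    Measurable fun p : ℝ × Ed d => polarCut F p.1 p.2 := by
  have hs : MeasurableSet {p : ℝ × Ed d | ‖p.2‖ ∈ Ioo (1/2 : ℝ) (3/2)} :=
    measurable_snd.norm measurableSet_Ioo
  have hm : Measurable fun p : ℝ × Ed d => F (‖p.2‖, (‖p.2‖⁻¹ • p.2, p.1)) :=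
    hF.comp (measurable_snd.norm.prodMk
      ((measurable_snd.norm.inv.smul measurable_snd).prodMk measurable_fst))
  exact hm.indicator hs

/-- The flux through the spheres `∂B_R` is dominated by the momentum `|v|` carried by the
trajectories. -/
lemma Crossing.flux_le (c : Crossing T Cnd s a b) (h : GoodMap Ω T G M)
    {F : ℝ × (Ed d × ℝ) → ℝ≥0∞} (hF : Measurable F) :
    ∫⁻ R in Ioo (1/2 : ℝ) (3/2), ∫⁻ x in crossSet G Cnd R,
        F (R, (R⁻¹ • Tt T (s (R, x)) x, s (R, x))) ≤
      ∫⁻ t in Icc a b, ∫⁻ x in G, ENNReal.ofReal ‖T x - x‖ * polarCut F t (Tt T t x) := by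
  have hT := h.measT
  have hPm : Measurable fun p : ℝ × Ed d => polarCut F p.1 (Tt T p.1 p.2) := by
    have := (measurable_polarCut hF).comp (measurable_fst.prodMk (measurable_Tt hT))
    exact this
  have hset : MeasurableSet ((Prod.snd ⁻¹' G) ∩ Cnd) := (measurable_snd h.measG).inter c.measC
  set B := (Prod.snd ⁻¹' G) ∩ Cnd with hB
  have hPs : Measurable fun p : ℝ × Ed d => polarCut F (s p) (Tt T (s p) p.2) := by
    have := hPm.comp (c.measS.prodMk measurable_snd)
    exact this
  have e : ∫⁻ R in Ioo (1/2 : ℝ) (3/2), ∫⁻ x in crossSet G Cnd R,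
        F (R, (R⁻¹ • Tt T (s (R, x)) x, s (R, x))) ≤
      ∫⁻ R, ∫⁻ x, B.indicator (fun p => polarCut F (s p) (Tt T (s p) p.2)) (R, x) := by
    refine (setLIntegral_mono' measurableSet_Ioo fun R hR => ?_).trans
      (setLIntegral_le_lintegral _ _)
    rw [← lintegral_indicator (c.measurableSet_crossSet h.measG R)]
    refine lintegral_mono fun x => ?_
    by_cases hx : x ∈ crossSet G Cnd R
    · rw [indicator_of_mem hx, indicator_of_mem (show (R, x) ∈ B from hx)]
      have hh : ‖Tt T (s (R, x)) x‖ = R := c.hit _ hx.2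
      unfold polarCut
      have hm : Tt T (s (R, x)) x ∈ {y : Ed d | ‖y‖ ∈ Ioo (1/2 : ℝ) (3/2)} := by
        rw [Set.mem_ofPred_eq, hh]; exact hR
      rw [indicator_of_mem hm, hh]
    · rw [indicator_of_notMem hx]; exact zero_le
  refine e.trans ?_
  have hPv : Measurable fun p : ℝ × Ed d =>
      ENNReal.ofReal ‖T p.2 - p.2‖ * polarCut F p.1 (Tt T p.1 p.2) :=
    (((hT.comp measurable_snd).sub measurable_snd).norm.ennreal_ofReal).mul hPm
  rw [lintegral_lintegral_swap
    (f := fun R x => B.indicator (fun p => polarCut F (s p) (Tt T (s p) p.2)) (R, x))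
      ((hPs.indicator hset).aemeasurable),
    lintegral_lintegral_swap (μ := volume.restrict (Icc a b)) (ν := volume.restrict G)
    (f := fun t x => ENNReal.ofReal ‖T x - x‖ * polarCut F t (Tt T t x)) hPv.aemeasurable,
    ← lintegral_indicator h.measG]
  refine lintegral_mono fun x => ?_
  by_cases hx : x ∈ G
  · rw [indicator_of_mem hx]
    have hPx : Measurable fun t : ℝ => polarCut F t (Tt T t x) := by
      have := hPm.comp (measurable_prodMk_right (y := x))
      exact this
    rw [lintegral_const_mul _ hPx]
    refine le_trans (le_of_eq ?_) (c.lintegral_time_le x hPx)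
    rw [← lintegral_indicator (show MeasurableSet {R | (R, x) ∈ Cnd} from
      measurable_prodMk_right c.measC)]
    refine lintegral_congr fun R => ?_
    by_cases hR : (R, x) ∈ Cnd
    · rw [indicator_of_mem (show R ∈ {R | (R, x) ∈ Cnd} from hR),
        indicator_of_mem (show (R, x) ∈ B from ⟨hx, hR⟩)]
    · rw [indicator_of_notMem (show R ∉ {R | (R, x) ∈ Cnd} from hR),
        indicator_of_notMem fun hh : (R, x) ∈ B => hR hh.2]
  · rw [indicator_of_notMem hx]
    refine (lintegral_eq_zero_of_ae_eq_zero (Filter.Eventually.of_forall fun R => ?_)).le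
    exact indicator_of_notMem (fun hh : (R, x) ∈ B => hx hh.1) _

/-- At time `t < 1` the interpolant has density at most `(1-t)^{-d}`; integrate in polar
coordinates. -/
lemma GoodMap.slice_le (hd : 2 ≤ d) (h : GoodMap Ω T G M) {t : ℝ} (ht : t ∈ Ico (0 : ℝ) 1)
    {F : ℝ × (Ed d × ℝ) → ℝ≥0∞} (hF : Measurable F) :
    ∫⁻ x in G, polarCut F t (Tt T t x) ≤ ENNReal.ofReal (((1 - t) ^ d)⁻¹) *
      (ENNReal.ofReal ((3/2) ^ (d - 1)) *
        ∫⁻ R in Ioo (1/2 : ℝ) (3/2), ∫⁻ ω, F (R, (ω, t)) ∂(sph1 d)) := by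
  have hm : Measurable (Tt T t) := (measurable_Tt h.measT).comp measurable_prodMk_left
  have hP : Measurable (polarCut F t) := by
    have := (measurable_polarCut hF).comp (measurable_prodMk_left (x := t))
    exact this
  have hle : Measure.map (Tt T t) (volume.restrict G) ≤
      ENNReal.ofReal (((1 - t) ^ d)⁻¹) • volume := by
    refine Measure.le_intro fun A hA _ => ?_
    rw [Measure.map_apply hm hA, Measure.restrict_apply (hm hA), Measure.smul_apply, smul_eq_mul,
      inter_comm]
    exact h.push_bound ht A
  rw [← lintegral_map hP hm]
  refine (lintegral_mono' hle le_rfl).trans ?_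
  rw [lintegral_smul_measure, smul_eq_mul]
  refine mul_le_mul_right ?_ _
  rw [polar hd hP, lintegral_lintegral_swap (μ := volume.restrict (Ioo (1/2 : ℝ) (3/2)))
    (f := fun R ω => F (R, (ω, t)))
    ((hF.comp (measurable_fst.prodMk (measurable_snd.prodMk measurable_const))).aemeasurable),
    ← lintegral_const_mul _ (Measurable.lintegral_prod_right'
      (f := fun p : Ed d × ℝ => F (p.2, (p.1, t)))
      (hF.comp (measurable_snd.prodMk (measurable_fst.prodMk measurable_const))))]
  refine lintegral_mono_ae ?_
  filter_upwards [sph1_ae_norm d] with ω hω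
  have hFω : Measurable fun r : ℝ => F (r, (ω, t)) :=
    hF.comp (measurable_id.prodMk measurable_const)
  rw [← lintegral_const_mul _ hFω]
  rw [← lintegral_indicator measurableSet_Ioi, ← lintegral_indicator measurableSet_Ioo]
  refine lintegral_mono fun r => ?_
  by_cases hr0 : r ∈ Ioi (0 : ℝ)
  · rw [indicator_of_mem hr0]
    have hn : ‖r • ω‖ = r := by
      rw [norm_smul, hω, mul_one, Real.norm_eq_abs, abs_of_pos hr0]
    unfold polarCut
    by_cases hr : r ∈ Ioo (1/2 : ℝ) (3/2)
    · have hm : r • ω ∈ {y : Ed d | ‖y‖ ∈ Ioo (1/2 : ℝ) (3/2)} := by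
        rw [Set.mem_ofPred_eq, hn]; exact hr
      rw [indicator_of_mem hm, indicator_of_mem hr, hn, inv_smul_smul₀ (ne_of_gt hr0)]
      refine mul_le_mul_left (ENNReal.ofReal_le_ofReal ?_) _
      exact pow_le_pow_left₀ (le_of_lt hr0) hr.2.le _
    · have hm : r • ω ∉ {y : Ed d | ‖y‖ ∈ Ioo (1/2 : ℝ) (3/2)} := by
        rw [Set.mem_ofPred_eq, hn]; exact hr
      rw [indicator_of_notMem hm, mul_zero]; exact zero_le
  · rw [indicator_of_notMem hr0]; exact zero_le

end Trace

/-- An `L²` bound from testing against truncations of the function itself. -/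
lemma sq_le_of_duality {α : Type*} [MeasurableSpace α] {m : Measure α} [IsFiniteMeasure m]
    {φ : α → ℝ≥0∞} (hφ : Measurable φ) {A : Set α} (hA : MeasurableSet A) {B : ℝ≥0∞}
    (H : ∀ ψ : α → ℝ≥0∞, Measurable ψ → (∀ x, x ∉ A → ψ x = 0) →
      2 * ∫⁻ x, ψ x * φ x ∂m ≤ (∫⁻ x, ψ x ^ 2 ∂m) + B) :
    ∫⁻ x in A, φ x ^ 2 ∂m ≤ B := by
  set ψ : ℕ → α → ℝ≥0∞ := fun n => A.indicator fun x => min (φ x) n with hψ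
  have hm : ∀ n, Measurable (ψ n) := fun n => (hφ.min measurable_const).indicator hA
  have hb : ∀ n, ∫⁻ x, ψ n x ^ 2 ∂m ≤ B := by
    intro n
    have h1 : ∫⁻ x, ψ n x ^ 2 ∂m ≤ ∫⁻ x, ψ n x * φ x ∂m := by
      refine lintegral_mono fun x => ?_
      rw [sq]
      refine mul_le_mul_right ?_ _
      by_cases hx : x ∈ A
      · simp only [hψ, indicator_of_mem hx]; exact min_le_left _ _
      · simp only [hψ, indicator_of_notMem hx]; exact zero_le
    have hfin : ∫⁻ x, ψ n x ^ 2 ∂m ≠ ∞ := by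
      refine ne_top_of_le_ne_top ?_ (lintegral_mono (g := fun _ => (n : ℝ≥0∞) ^ 2) fun x => ?_)
      · rw [lintegral_const]
        exact ENNReal.mul_ne_top (by finiteness) (measure_ne_top _ _)
      · refine pow_le_pow_left₀ zero_le ?_ 2
        by_cases hx : x ∈ A
        · simp only [hψ, indicator_of_mem hx]; exact min_le_right _ _
        · simp only [hψ, indicator_of_notMem hx]; exact zero_le
    have h2 := (mul_le_mul_right h1 2).trans (H (ψ n) (hm n) fun x hx => indicator_of_notMem hx _)
    rw [two_mul] at h2
    exact (ENNReal.add_le_add_iff_left hfin).1 h2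
  rw [← lintegral_indicator hA]
  refine le_of_tendsto' (lintegral_tendsto_of_tendsto_of_monotone (f := fun n x => ψ n x ^ 2)
    (fun n => ((hm n).pow_const 2).aemeasurable) ?_ ?_) hb
  · refine Filter.Eventually.of_forall fun x n k hnk => ?_
    refine pow_le_pow_left₀ zero_le ?_ 2
    refine indicator_le_indicator (min_le_min le_rfl ?_)
    exact_mod_cast hnk
  · refine Filter.Eventually.of_forall fun x => ?_
    by_cases hx : x ∈ A
    · simp only [hψ, indicator_of_mem hx]
      refine ENNReal.Tendsto.pow ?_
      have := (tendsto_const_nhds (x := φ x)).min ENNReal.tendsto_nat_nhds_top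
      rwa [min_eq_left le_top] at this
    · simp only [hψ, indicator_of_notMem hx]
      simp

section Trace2

open ProbabilityTheory

variable {d : ℕ} {Ω G : Set (Ed d)} {T : Ed d → Ed d} {M : ℝ} {Cnd : Set (ℝ × Ed d)}
  {s : ℝ × Ed d → ℝ} {a b : ℝ}

/-- Product of the surface measure of the unit sphere with Lebesgue measure on the time
interval. -/
def sphTime (d : ℕ) : Measure (Ed d × ℝ) := (sph1 d).prod (volume.restrict (Icc (0 : ℝ) 1))

instance (d : ℕ) : IsFiniteMeasure (sphTime d) := by unfold sphTime; infer_instance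

lemma lintegral_radii_sphTime {f : ℝ × (Ed d × ℝ) → ℝ≥0∞} (hf : Measurable f) :
    ∫⁻ q, f q ∂((volume.restrict (Ioo (1/2 : ℝ) (3/2))).prod (sphTime d)) =
      ∫⁻ t in Icc (0 : ℝ) 1, ∫⁻ R in Ioo (1/2 : ℝ) (3/2), (∫⁻ ω, f (R, (ω, t)) ∂(sph1 d)) := by
  rw [lintegral_prod _ hf.aemeasurable]
  have : ∀ R : ℝ, ∫⁻ p, f (R, p) ∂(sphTime d) =
      ∫⁻ t in Icc (0 : ℝ) 1, (∫⁻ ω, f (R, (ω, t)) ∂(sph1 d)) := fun R => by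
    unfold sphTime
    have hfR : Measurable fun p => f (R, p) := hf.comp (measurable_prodMk_left (x := R))
    rw [lintegral_prod_symm' _ hfR]
  simp_rw [this]
  refine lintegral_lintegral_swap (f := fun R t => ∫⁻ ω, f (R, (ω, t)) ∂(sph1 d)) ?_
  have hm : Measurable fun p : (ℝ × ℝ) × Ed d => f (p.1.1, (p.2, p.1.2)) :=
    hf.comp ((measurable_fst.comp measurable_fst).prodMk
      (measurable_snd.prodMk (measurable_snd.comp measurable_fst)))
  exact (Measurable.lintegral_prod_right' hm).aemeasurable

lemma Crossing.measurable_dirTime (c : Crossing T Cnd s a b) (hT : Measurable T) :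
    Measurable fun q : ℝ × Ed d => ((q.1⁻¹ • Tt T (s q) q.2, s q) : Ed d × ℝ) := by
  have h1 := (measurable_Tt hT).comp (c.measS.prodMk measurable_snd)
  exact (measurable_fst.inv.smul h1).prodMk c.measS

/-- The law of direction and time of the crossings of `∂B_R`, as a kernel in `R`. -/
def Crossing.kernel (c : Crossing T Cnd s a b) (h : GoodMap Ω T G M) : Kernel ℝ (Ed d × ℝ) where
  toFun R := Measure.map (fun x => (R⁻¹ • Tt T (s (R, x)) x, s (R, x)))
    (volume.restrict (crossSet G Cnd R))
  measurable' := by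
    have hq := c.measurable_dirTime h.measT
    refine Measure.measurable_of_measurable_coe _ fun A hA => ?_
    have e : ∀ R, (Measure.map (fun x => ((R⁻¹ • Tt T (s (R, x)) x, s (R, x)) : Ed d × ℝ))
        (volume.restrict (crossSet G Cnd R))) A = volume (Prod.mk R ⁻¹'
          ((fun q : ℝ × Ed d => ((q.1⁻¹ • Tt T (s q) q.2, s q) : Ed d × ℝ)) ⁻¹' A ∩
            ((Prod.snd ⁻¹' G) ∩ Cnd))) := by
      intro R
      have hqR := hq.comp (measurable_prodMk_left (x := R))
      rw [Measure.map_apply (by exact hqR) hA, Measure.restrict_apply (by exact hqR hA)]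
      rfl
    simp_rw [e]
    exact measurable_measure_prodMk_left ((hq hA).inter ((measurable_snd h.measG).inter c.measC))

lemma Crossing.kernel_apply (c : Crossing T Cnd s a b) (h : GoodMap Ω T G M) (R : ℝ) :
    c.kernel h R = Measure.map (fun x => (R⁻¹ • Tt T (s (R, x)) x, s (R, x)))
      (volume.restrict (crossSet G Cnd R)) := rfl

lemma Crossing.lintegral_kernel (c : Crossing T Cnd s a b) (h : GoodMap Ω T G M) (R : ℝ)
    {F : Ed d × ℝ → ℝ≥0∞} (hF : Measurable F) :
    ∫⁻ p, F p ∂(c.kernel h R) =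
      ∫⁻ x in crossSet G Cnd R, F (R⁻¹ • Tt T (s (R, x)) x, s (R, x)) := by
  have hqR := (c.measurable_dirTime h.measT).comp (measurable_prodMk_left (x := R))
  rw [c.kernel_apply, lintegral_map hF (by exact hqR)]

lemma Crossing.isFinite_kernel (c : Crossing T Cnd s a b) (h : GoodMap Ω T G M) :
    IsFiniteKernel (c.kernel h) := by
  refine ⟨volume G, h.volume_lt_top, fun R => ?_⟩
  have := c.lintegral_kernel h R (F := 1) measurable_one
  simp only [Pi.one_apply, lintegral_one, Measure.restrict_apply_univ] at this
  rw [this]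
  exact measure_mono fun x hx => hx.1

/-- For almost every radius, the law of direction and time of the crossings has a density: at times
before `1` the interpolants have bounded density. -/
lemma Crossing.kernel_ac (hd : 2 ≤ d) (c : Crossing T Cnd s 0 1) (h : GoodMap Ω T G M) :
    ∀ᵐ R ∂(volume.restrict (Ioo (1/2 : ℝ) (3/2))), c.kernel h R ≪ sphTime d := by
  have := c.isFinite_kernel h
  have key : (volume.restrict (Ioo (1/2 : ℝ) (3/2))) ⊗ₘ (c.kernel h) ≪
      (volume.restrict (Ioo (1/2 : ℝ) (3/2))) ⊗ₘ (Kernel.const ℝ (sphTime d)) := by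
    rw [Measure.compProd_const]
    refine Measure.AbsolutelyContinuous.mk fun N hN h0 => ?_
    have hF : Measurable (N.indicator (1 : ℝ × (Ed d × ℝ) → ℝ≥0∞)) := measurable_one.indicator hN
    rw [← lintegral_indicator_one hN, Measure.lintegral_compProd hF]
    rw [← lintegral_indicator_one hN, lintegral_radii_sphTime hF, lintegral_eq_zero_iff] at h0
    swap
    · have hm : Measurable fun p : (ℝ × ℝ) × Ed d =>
          N.indicator (1 : ℝ × (Ed d × ℝ) → ℝ≥0∞) (p.1.2, (p.2, p.1.1)) :=
        hF.comp ((measurable_snd.comp measurable_fst).prodMk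
          (measurable_snd.prodMk (measurable_fst.comp measurable_fst)))
      have h2 := Measurable.lintegral_prod_right' (ν := sph1 d) hm
      exact Measurable.lintegral_prod_right' (ν := volume.restrict (Ioo (1/2 : ℝ) (3/2))) h2
    have e : ∀ R, ∫⁻ p, N.indicator (1 : ℝ × (Ed d × ℝ) → ℝ≥0∞) (R, p) ∂(c.kernel h R) =
        ∫⁻ x in crossSet G Cnd R,
          N.indicator (1 : ℝ × (Ed d × ℝ) → ℝ≥0∞) (R, (R⁻¹ • Tt T (s (R, x)) x, s (R, x))) :=
      fun R => c.lintegral_kernel h R (F := fun p => N.indicator 1 (R, p))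
        (hF.comp (measurable_prodMk_left (x := R)))
    simp_rw [e]
    refine le_antisymm ((c.flux_le h hF).trans (le_of_eq ?_)) zero_le
    refine lintegral_eq_zero_of_ae_eq_zero ?_
    have h1 : ∀ᵐ t ∂(volume.restrict (Icc (0 : ℝ) 1)), t ≠ 1 :=
      ae_restrict_of_ae (Measure.ae_ne volume 1)
    filter_upwards [h0, h1, ae_restrict_mem measurableSet_Icc] with t ht0 ht1 ht
    have hs := h.slice_le hd (t := t) ⟨ht.1, lt_of_le_of_ne ht.2 ht1⟩ hF
    simp only [Pi.zero_apply] at ht0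
    rw [ht0, mul_zero, mul_zero, nonpos_iff_eq_zero, lintegral_eq_zero_iff] at hs
    · refine lintegral_eq_zero_of_ae_eq_zero ?_
      filter_upwards [hs] with x hx
      simp only [Pi.zero_apply] at hx ⊢
      rw [hx, mul_zero]
    · have := (measurable_polarCut hF).comp (measurable_const.prodMk
        ((measurable_Tt h.measT).comp (measurable_prodMk_left (x := t))) (f := fun _ => t))
      exact this
  filter_upwards [Measure.absolutelyContinuous_compProd_right_iff.1 key] with R hR
  rwa [Kernel.const_apply] at hR

end Trace2

lemma polarCut_sq {d : ℕ} (F : ℝ × (Ed d × ℝ) → ℝ≥0∞) (t : ℝ) (y : Ed d) :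
    polarCut (fun q => F q ^ 2) t y = polarCut F t y ^ 2 := by
  unfold polarCut
  by_cases hy : y ∈ {y : Ed d | ‖y‖ ∈ Ioo (1/2 : ℝ) (3/2)}
  · rw [indicator_of_mem hy, indicator_of_mem hy]
  · rw [indicator_of_notMem hy, indicator_of_notMem hy]; simp

/-- Young's inequality with a weight. -/
lemma two_mul_le_weight {c : ℝ} (hc : 0 < c) {v : ℝ} (hv : 0 ≤ v) (p : ℝ≥0∞) :
    2 * (ENNReal.ofReal v * p) ≤
      ENNReal.ofReal c * p ^ 2 + ENNReal.ofReal c⁻¹ * ENNReal.ofReal (v ^ 2) := by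
  induction p with
  | top =>
    have : ENNReal.ofReal c * (⊤ : ℝ≥0∞) ^ 2 = ⊤ := by
      rw [ENNReal.top_pow two_ne_zero, ENNReal.mul_top]
      simpa using hc
    rw [this]; exact le_top.trans le_self_add
  | coe p =>
    have e : (p : ℝ≥0∞) = ENNReal.ofReal p := by rw [ENNReal.ofReal_coe_nnreal]
    have hp : (0 : ℝ) ≤ p := p.2
    rw [e, show (2 : ℝ≥0∞) = ENNReal.ofReal 2 by simp, ← ENNReal.ofReal_pow hp,
      ← ENNReal.ofReal_mul hv, ← ENNReal.ofReal_mul (by norm_num), ← ENNReal.ofReal_mul hc.le,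
      ← ENNReal.ofReal_mul (by positivity), ← ENNReal.ofReal_add (by positivity) (by positivity)]
    refine ENNReal.ofReal_le_ofReal ?_
    have h1 : c * (p : ℝ) ^ 2 + c⁻¹ * v ^ 2 - 2 * (v * p) = c⁻¹ * (c * p - v) ^ 2 := by
      field_simp; ring
    have h2 : 0 ≤ c⁻¹ * (c * (p : ℝ) - v) ^ 2 := by positivity
    linarith

section Trace3

open ProbabilityTheory

variable {d : ℕ} {Ω G : Set (Ed d)} {T : Ed d → Ed d} {M : ℝ} {Cnd : Set (ℝ × Ed d)}
  {s : ℝ × Ed d → ℝ}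

/-- Testing the momentum against a function supported in times up to `1 - τ`. -/
lemma GoodMap.momentum_le (hd : 2 ≤ d) (h : GoodMap Ω T G M) {τ : ℝ} (hτ : τ ∈ Ioo (0 : ℝ) 1)
    {ψ : ℝ × (Ed d × ℝ) → ℝ≥0∞} (hψ : Measurable ψ) (h0 : ∀ q, 1 - τ < q.2.2 → ψ q = 0) :
    2 * ∫⁻ t in Icc (0 : ℝ) 1, ∫⁻ x in G, ENNReal.ofReal ‖T x - x‖ * polarCut ψ t (Tt T t x) ≤
      (∫⁻ q, ψ q ^ 2 ∂((volume.restrict (Ioo (1/2 : ℝ) (3/2))).prod (sphTime d))) +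
        ENNReal.ofReal ((3/2) ^ (d - 1) / τ ^ d) *
          ∫⁻ x in ball (0 : Ed d) 2, ENNReal.ofReal (‖T x - x‖ ^ 2) := by
  have hT := h.measT
  have hτ0 := hτ.1
  set c : ℝ := ((3/2) ^ (d - 1) / τ ^ d)⁻¹ with hc
  have hcp : 0 < c := by positivity
  have hci : (3/2) ^ (d - 1) / τ ^ d = c⁻¹ := by rw [hc, inv_inv]
  rw [hci]
  set E := ∫⁻ x in ball (0 : Ed d) 2, ENNReal.ofReal (‖T x - x‖ ^ 2) with hE
  have hψ2 : Measurable fun q => ψ q ^ 2 := hψ.pow_const 2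
  have hv : Measurable fun x => ENNReal.ofReal ‖T x - x‖ := (hT.sub measurable_id).norm.ennreal_ofReal
  have hv2 : Measurable fun x => ENNReal.ofReal (‖T x - x‖ ^ 2) :=
    ((hT.sub measurable_id).norm.pow_const 2).ennreal_ofReal
  have hPm : Measurable fun p : ℝ × Ed d => polarCut ψ p.1 (Tt T p.1 p.2) := by
    have := (measurable_polarCut hψ).comp (measurable_fst.prodMk (measurable_Tt hT))
    exact this
  have hPm2 : Measurable fun p : ℝ × Ed d => ENNReal.ofReal ‖T p.2 - p.2‖ * polarCut ψ p.1 (Tt T p.1 p.2) :=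
    (((hT.comp measurable_snd).sub measurable_snd).norm.ennreal_ofReal).mul hPm
  have hPI : Measurable fun t => ∫⁻ x in G, ENNReal.ofReal ‖T x - x‖ * polarCut ψ t (Tt T t x) :=
    Measurable.lintegral_prod_right' hPm2
  rw [lintegral_radii_sphTime hψ2, ← lintegral_const_mul _ hPI]
  have key : ∀ t ∈ Icc (0 : ℝ) 1,
      2 * ∫⁻ x in G, ENNReal.ofReal ‖T x - x‖ * polarCut ψ t (Tt T t x) ≤
        (∫⁻ R in Ioo (1/2 : ℝ) (3/2), (∫⁻ ω, ψ (R, (ω, t)) ^ 2 ∂(sph1 d))) +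
          ENNReal.ofReal c⁻¹ * E := by
    intro t ht
    by_cases htτ : 1 - τ < t
    · have : ∀ x, ENNReal.ofReal ‖T x - x‖ * polarCut ψ t (Tt T t x) = 0 := by
        intro x
        have h1 : polarCut ψ t (Tt T t x) = 0 := by
          unfold polarCut
          refine indicator_apply_eq_zero.2 fun _ => h0 _ htτ
        rw [h1, mul_zero]
      simp_rw [this]
      simp
    have ht1 : t ≤ 1 - τ := not_lt.1 htτ
    have hPt : Measurable fun x => polarCut ψ t (Tt T t x) := by
      have := hPm.comp (measurable_prodMk_left (x := t))
      exact this
    have hmul : Measurable fun x => ENNReal.ofReal ‖T x - x‖ * polarCut ψ t (Tt T t x) := hv.mul hPt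
    rw [← lintegral_const_mul _ hmul]
    have hpt : ∀ x ∈ G, 2 * (ENNReal.ofReal ‖T x - x‖ * polarCut ψ t (Tt T t x)) ≤
        ENNReal.ofReal c * polarCut (fun q => ψ q ^ 2) t (Tt T t x) +
          ENNReal.ofReal c⁻¹ *
            (ball (0 : Ed d) 2).indicator (fun x => ENNReal.ofReal (‖T x - x‖ ^ 2)) x := by
      intro x hx
      rw [polarCut_sq]
      by_cases hy : Tt T t x ∈ {y : Ed d | ‖y‖ ∈ Ioo (1/2 : ℝ) (3/2)}
      · have hn : ‖Tt T t x‖ ≤ 3/2 := (le_of_lt (show ‖Tt T t x‖ < 3/2 from hy.2))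
        have hx2 : x ∈ ball (0 : Ed d) 2 := by
          rw [mem_ball_zero_iff]
          linarith [(h.near x hx t ht hn).1]
        rw [indicator_of_mem hx2]
        exact two_mul_le_weight hcp (norm_nonneg _) _
      · have h1 : polarCut ψ t (Tt T t x) = 0 := by
          unfold polarCut
          exact indicator_of_notMem hy _
        rw [h1, mul_zero, mul_zero]; exact zero_le
    have hPt2 : Measurable fun x => polarCut (fun q => ψ q ^ 2) t (Tt T t x) := by
      simp_rw [polarCut_sq]; exact hPt.pow_const 2
    have hi : Measurable ((ball (0 : Ed d) 2).indicator
        (fun x => ENNReal.ofReal (‖T x - x‖ ^ 2))) := hv2.indicator measurableSet_ball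
    calc _ ≤ ∫⁻ x in G, (ENNReal.ofReal c * polarCut (fun q => ψ q ^ 2) t (Tt T t x) +
          ENNReal.ofReal c⁻¹ *
            (ball (0 : Ed d) 2).indicator (fun x => ENNReal.ofReal (‖T x - x‖ ^ 2)) x) :=
          setLIntegral_mono' h.measG hpt
      _ = ENNReal.ofReal c * (∫⁻ x in G, polarCut (fun q => ψ q ^ 2) t (Tt T t x)) +
          ENNReal.ofReal c⁻¹ * ∫⁻ x in G,
            (ball (0 : Ed d) 2).indicator (fun x => ENNReal.ofReal (‖T x - x‖ ^ 2)) x := by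
          rw [lintegral_add_left (hPt2.const_mul _), lintegral_const_mul _ hPt2,
            lintegral_const_mul _ hi]
      _ ≤ _ := by
          refine add_le_add ?_ (mul_le_mul_right ?_ _)
          · refine (mul_le_mul_right (h.slice_le hd ⟨ht.1, by linarith⟩ hψ2) _).trans ?_
            rw [← mul_assoc, ← mul_assoc, ← ENNReal.ofReal_mul hcp.le,
              ← ENNReal.ofReal_mul (mul_nonneg hcp.le (inv_nonneg.2 (pow_nonneg (by linarith) d)))]
            refine mul_le_of_le_one_left zero_le (ENNReal.ofReal_le_one.2 ?_)
            have h2 : ((1 - t) ^ d)⁻¹ ≤ (τ ^ d)⁻¹ :=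
              inv_anti₀ (by positivity) (pow_le_pow_left₀ hτ0.le (by linarith) d)
            calc c * ((1 - t) ^ d)⁻¹ * (3/2) ^ (d - 1) ≤ c * (τ ^ d)⁻¹ * (3/2) ^ (d - 1) := by
                  gcongr
              _ = 1 := by rw [hc]; field_simp
          · refine (setLIntegral_le_lintegral _ _).trans ?_
            rw [lintegral_indicator measurableSet_ball]
  refine (setLIntegral_mono' measurableSet_Icc key).trans ?_
  rw [lintegral_add_right _ measurable_const]
  refine add_le_add le_rfl ?_
  rw [setLIntegral_const, Real.volume_Icc, sub_zero, ENNReal.ofReal_one, mul_one]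

/-- The `L²` trace estimate: for almost every radius the law of direction and time of crossings has
a density, square integrable up to time `1 - τ` with norm controlled on average in `R`. -/
lemma Crossing.trace (hd : 2 ≤ d) (c : Crossing T Cnd s 0 1) (h : GoodMap Ω T G M) {τ : ℝ}
    (hτ : τ ∈ Ioo (0 : ℝ) 1) :
    ∃ φ : ℝ → Ed d × ℝ → ℝ≥0∞, (Measurable fun q : ℝ × (Ed d × ℝ) => φ q.1 q.2) ∧
      (∀ᵐ R ∂(volume.restrict (Ioo (1/2 : ℝ) (3/2))),
        c.kernel h R = (sphTime d).withDensity (φ R)) ∧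
      ∫⁻ R in Ioo (1/2 : ℝ) (3/2),
          (∫⁻ p in univ ×ˢ Icc (0 : ℝ) (1 - τ), φ R p ^ 2 ∂(sphTime d)) ≤
        ENNReal.ofReal ((3/2) ^ (d - 1) / τ ^ d) *
          ∫⁻ x in ball (0 : Ed d) 2, ENNReal.ofReal (‖T x - x‖ ^ 2) := by
  have := c.isFinite_kernel h
  set φ : ℝ → Ed d × ℝ → ℝ≥0∞ := (c.kernel h).rnDeriv (Kernel.const ℝ (sphTime d)) with hφd
  have hφ : Measurable fun q : ℝ × (Ed d × ℝ) => φ q.1 q.2 := Kernel.measurable_rnDeriv _ _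
  have hae : ∀ᵐ R ∂(volume.restrict (Ioo (1/2 : ℝ) (3/2))),
      c.kernel h R = (sphTime d).withDensity (φ R) := by
    filter_upwards [c.kernel_ac hd h] with R hR
    have h1 := Kernel.withDensity_rnDeriv_eq (κ := c.kernel h) (η := Kernel.const ℝ (sphTime d))
      (a := R) (by rwa [Kernel.const_apply])
    rw [Kernel.withDensity_apply _ hφ, Kernel.const_apply] at h1
    exact h1.symm
  refine ⟨φ, hφ, hae, ?_⟩
  have hA : MeasurableSet (univ ×ˢ Icc (0 : ℝ) (1 - τ) : Set (Ed d × ℝ)) :=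
    MeasurableSet.univ.prod measurableSet_Icc
  set A : Set (ℝ × (Ed d × ℝ)) := Prod.snd ⁻¹' (univ ×ˢ Icc (0 : ℝ) (1 - τ)) with hAd
  have hAm : MeasurableSet A := measurable_snd hA
  have hd2 := sq_le_of_duality (m := (volume.restrict (Ioo (1/2 : ℝ) (3/2))).prod (sphTime d))
    hφ hAm (B := ENNReal.ofReal ((3/2) ^ (d - 1) / τ ^ d) *
          ∫⁻ x in ball (0 : Ed d) 2, ENNReal.ofReal (‖T x - x‖ ^ 2)) (fun ψ hψ hψ0 => by
      refine le_trans (mul_le_mul_right ?_ 2) (h.momentum_le hd hτ hψ fun q hq => hψ0 q fun hqA => ?_)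
      · refine le_trans (le_of_eq ?_) (c.flux_le h hψ)
        have hψφ : Measurable fun q => ψ q * φ q.1 q.2 := hψ.mul hφ
        rw [lintegral_prod _ hψφ.aemeasurable]
        refine lintegral_congr_ae ?_
        filter_upwards [hae] with R hR
        have hψR : Measurable fun p => ψ (R, p) := hψ.comp (measurable_prodMk_left (x := R))
        have hφR : Measurable (φ R) := hφ.comp (measurable_prodMk_left (x := R))
        have h2 := c.lintegral_kernel h R hψR
        rw [hR, lintegral_withDensity_eq_lintegral_mul _ hφR hψR] at h2
        rw [← h2]
        refine lintegral_congr fun p => ?_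
        simp only [Pi.mul_apply]
        exact mul_comm _ _
      · have := hqA.2.2
        linarith)
  refine le_trans (le_of_eq ?_) hd2
  rw [← lintegral_indicator hAm, lintegral_prod _ ((hφ.pow_const 2).indicator hAm).aemeasurable]
  refine lintegral_congr fun R => ?_
  rw [← lintegral_indicator hA]
  rfl

end Trace3

/-! ### The signed flux through `∂B_R` -/

/-- Pushing a density forward along a map with a left inverse. -/
lemma map_withDensity_of_leftInv {α β : Type*} [MeasurableSpace α] [MeasurableSpace β]
    {ν : Measure α} {φ : α → ℝ≥0∞} (hφ : Measurable φ) {e : α → β} {e' : β → α}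
    (he : Measurable e) (he' : Measurable e') (hl : ∀ x, e' (e x) = x) :
    (ν.withDensity φ).map e = (ν.map e).withDensity fun y => φ (e' y) := by
  have hm : Measurable fun y => φ (e' y) := hφ.comp he'
  ext S hS
  rw [Measure.map_apply he hS, withDensity_apply _ (he hS), withDensity_apply _ hS,
    setLIntegral_map hS hm he]
  simp only [hl]

/-- The crossing law on `∂B_R × [0,1]` has, for almost every radius, a density whose square integral
up to time `1 - τ` is controlled on average over `R`. -/
lemma trace_density {d : ℕ} (hd : 2 ≤ d) : ∃ C : ℝ≥0, ∀ (Ω G : Set (Ed d)) (T : Ed d → Ed d)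
    (M : ℝ) (Cnd : Set (ℝ × Ed d)) (s : ℝ × Ed d → ℝ) (τ : ℝ),
    GoodMap Ω T G M → Crossing T Cnd s 0 1 → τ ∈ Ioo (0:ℝ) 1 →
    ∃ Φ : ℝ → ℝ≥0∞, Measurable Φ ∧
      ∫⁻ R in Ioo (1/2 : ℝ) (3/2), Φ R ≤ C * (ENNReal.ofReal (1 / τ ^ d) *
        ∫⁻ x in ball (0 : Ed d) 2, ENNReal.ofReal (‖T x - x‖ ^ 2)) ∧
      ∀ᵐ R ∂(volume.restrict (Ioo (1/2 : ℝ) (3/2))), ∃ g : Ed d × ℝ → ℝ≥0∞, Measurable g ∧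
        Measure.map (fun x => (Tt T (s (R, x)) x, s (R, x)))
            (volume.restrict {x ∈ Ω | (R, x) ∈ Cnd}) =
          ((sphMeas d R).prod (volume.restrict (Icc (0:ℝ) 1))).withDensity g ∧
        (∫⁻ p in Set.univ ×ˢ Icc (0:ℝ) (1 - τ), g p ^ 2
          ∂((sphMeas d R).prod (volume.restrict (Icc (0:ℝ) 1)))) ≤ Φ R := by
  obtain ⟨C, hC⟩ := exists_sph_density hd
  refine ⟨C * Real.toNNReal ((3/2)^(d-1)), fun Ω G T M Cnd s τ h c hτ => ?_⟩
  obtain ⟨φ, hφ, hker, hφE⟩ := c.trace hd h hτ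
  have hB : MeasurableSet (Set.univ ×ˢ Icc (0:ℝ) (1 - τ) : Set (Ed d × ℝ)) :=
    MeasurableSet.univ.prod measurableSet_Icc
  have hΦm : Measurable fun R =>
      ∫⁻ p in Set.univ ×ˢ Icc (0:ℝ) (1 - τ), φ R p ^ 2 ∂(sphTime d) := by
    have hm : Measurable fun q : ℝ × (Ed d × ℝ) => φ q.1 q.2 ^ 2 := hφ.pow_const 2
    exact hm.lintegral_prod_right'
  refine ⟨fun R => C * ∫⁻ p in Set.univ ×ˢ Icc (0:ℝ) (1 - τ), φ R p ^ 2 ∂(sphTime d),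
    hΦm.const_mul _, ?_, ?_⟩
  · rw [lintegral_const_mul _ hΦm]
    have h1 := mul_le_mul_right hφE (C : ℝ≥0∞)
    refine h1.trans (le_of_eq ?_)
    have e : ENNReal.ofReal ((3/2) ^ (d - 1) / τ ^ d) =
        ENNReal.ofReal ((3/2) ^ (d - 1)) * ENNReal.ofReal (1 / τ ^ d) := by
      rw [← ENNReal.ofReal_mul (by positivity), mul_one_div]
    have e' : ((Real.toNNReal ((3/2)^(d-1)) : ℝ≥0) : ℝ≥0∞) = ENNReal.ofReal ((3/2) ^ (d - 1)) := rfl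
    rw [e, ENNReal.coe_mul, e']
    ring
  · filter_upwards [hker, ae_restrict_mem measurableSet_Ioo] with R hk hR
    have hR0 : R ≠ 0 := by have := hR.1; intro h0; rw [h0] at this; norm_num at this
    have hRpos : 0 < R := lt_trans (by norm_num) hR.1
    obtain ⟨w, hw, hwC, hwe⟩ := hC R hR
    have hfin : IsFiniteMeasure (sphMeas d R) := isFiniteMeasure_sphMeas hd hRpos
    have hφR : Measurable (φ R) := by
      have := hφ.comp (measurable_prodMk_left (x := R)); exact this
    have he : Measurable (Prod.map (R • ·) id : Ed d × ℝ → Ed d × ℝ) :=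
      (measurable_const_smul R).prodMap measurable_id
    have he' : Measurable (Prod.map (R⁻¹ • ·) id : Ed d × ℝ → Ed d × ℝ) :=
      (measurable_const_smul R⁻¹).prodMap measurable_id
    have hl : ∀ p : Ed d × ℝ, Prod.map (R⁻¹ • ·) id (Prod.map (R • ·) id p) = p := by
      rintro ⟨x, t⟩
      simp [smul_smul, inv_mul_cancel₀ hR0]
    have hg1 : Measurable fun p : Ed d × ℝ => φ R (Prod.map (R⁻¹ • ·) id p) := hφR.comp he'
    have hw1 : Measurable fun p : Ed d × ℝ => w p.1 := hw.comp measurable_fst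
    have hnu : (sphTime d).map (Prod.map (R • ·) id) =
        ((sphMeas d R).prod (volume.restrict (Icc (0:ℝ) 1))).withDensity fun p => w p.1 := by
      have hfin1 : IsFiniteMeasure (sph1 d) := inferInstance
      have := Measure.map_prod_map (sph1 d) ((volume : Measure ℝ).restrict (Icc (0:ℝ) 1))
        (measurable_const_smul R) measurable_id
      rw [sphTime, ← this, hwe, Measure.map_id, prod_withDensity_left hw]
    refine ⟨fun p => w p.1 * φ R (Prod.map (R⁻¹ • ·) id p), hw1.mul hg1, ?_, ?_⟩
    · have hlaw : Measure.map (fun x => (Tt T (s (R, x)) x, s (R, x)))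
            (volume.restrict {x ∈ Ω | (R, x) ∈ Cnd}) =
          (c.kernel h R).map (Prod.map (R • ·) id) := by
        have hd1 : Measurable fun x : Ed d => (R⁻¹ • Tt T (s (R, x)) x, s (R, x)) := by
          have := (c.measurable_dirTime h.measT).comp (measurable_prodMk_left (x := R))
          exact this
        rw [c.kernel_apply h R, Measure.map_map he hd1, h.restrict_eq]
        congr 1
        ext1 x
        simp [smul_smul, mul_inv_cancel₀ hR0]
      rw [hlaw, hk, map_withDensity_of_leftInv hφR he he' hl, hnu]
      exact (withDensity_mul _ hw1 hg1).symm
    · have h2 : ∫⁻ p in Set.univ ×ˢ Icc (0:ℝ) (1 - τ), φ R p ^ 2 ∂(sphTime d) =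
          ∫⁻ p in Set.univ ×ˢ Icc (0:ℝ) (1 - τ), w p.1 * φ R (Prod.map (R⁻¹ • ·) id p) ^ 2
            ∂((sphMeas d R).prod (volume.restrict (Icc (0:ℝ) 1))) := by
        have h3 := setLIntegral_withDensity_eq_setLIntegral_mul
          ((sphMeas d R).prod (volume.restrict (Icc (0:ℝ) 1))) hw1 (hg1.pow_const 2) hB
        have h4 := setLIntegral_map (μ := sphTime d) hB (hg1.pow_const 2) he
        rw [hnu] at h4
        refine Eq.trans ?_ (h4.symm.trans h3)
        simp only [hl]
        rfl
      have hm : Measurable fun p : Ed d × ℝ =>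
          w p.1 * φ R (Prod.map (R⁻¹ • ·) id p) ^ 2 := hw1.mul (hg1.pow_const 2)
      rw [h2, ← lintegral_const_mul _ hm]
      refine lintegral_mono fun p => ?_
      calc (w p.1 * φ R (Prod.map (R⁻¹ • ·) id p)) ^ 2
          = w p.1 * (w p.1 * φ R (Prod.map (R⁻¹ • ·) id p) ^ 2) := by ring
        _ ≤ _ := mul_le_mul_left (hwC _) _

/-- Testing a law with a density against a bounded function. -/
lemma integral_of_map_eq_withDensity {α β : Type*} [MeasurableSpace α] [MeasurableSpace β]
    {m : Measure α} [IsFiniteMeasure m] {X : α → β} (hX : Measurable X) {ν : Measure β}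
    {g : β → ℝ≥0∞} (hg : Measurable g) (hmap : m.map X = ν.withDensity g)
    {ζ : β → ℝ} (hζ : Measurable ζ) {K : ℝ} (hb : ∀ᵐ x ∂m, ‖ζ (X x)‖ ≤ K) :
    Integrable (fun p => ζ p * (g p).toReal) ν ∧
      ∫ x, ζ (X x) ∂m = ∫ p, ζ p * (g p).toReal ∂ν := by
  have hfin : ∫⁻ p, g p ∂ν ≠ ∞ := by
    have h1 : (m.map X) univ ≠ ∞ := measure_ne_top _ _
    rwa [hmap, withDensity_apply _ MeasurableSet.univ, Measure.restrict_univ] at h1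
  have hlt : ∀ᵐ p ∂ν, g p < ∞ := ae_lt_top hg hfin
  have h_int : Integrable (fun x => ζ (X x)) m :=
    Integrable.of_bound (hζ.comp hX).aestronglyMeasurable K hb
  have hint2 : Integrable ζ (m.map X) :=
    (integrable_map_measure hζ.aestronglyMeasurable hX.aemeasurable).2 h_int
  constructor
  · rw [hmap, integrable_withDensity_iff_integrable_smul' hg hlt] at hint2
    refine hint2.congr (Filter.Eventually.of_forall fun p => ?_)
    simp only [smul_eq_mul]
    ring
  · rw [← integral_map hX.aemeasurable hζ.aestronglyMeasurable, hmap,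
      integral_withDensity_eq_integral_toReal_smul hg hlt]
    refine integral_congr_ae (Filter.Eventually.of_forall fun p => ?_)
    simp only [smul_eq_mul]
    ring

lemma Crossing.integral_flux {d : ℕ} {Ω G : Set (Ed d)} {T : Ed d → Ed d} {M : ℝ}
    {Cnd : Set (ℝ × Ed d)} {s : ℝ × Ed d → ℝ} (c : Crossing T Cnd s 0 1) (h : GoodMap Ω T G M)
    {R : ℝ} {ν : Measure (Ed d × ℝ)} {g : Ed d × ℝ → ℝ≥0∞} (hg : Measurable g)
    (hmap : Measure.map (fun x => (Tt T (s (R, x)) x, s (R, x)))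
      (volume.restrict {x ∈ Ω | (R, x) ∈ Cnd}) = ν.withDensity g)
    {ζ : Ed d × ℝ → ℝ} (hζ : Continuous ζ) :
    Integrable (fun p => ζ p * (g p).toReal) ν ∧
      ∫ x in {x ∈ Ω | (R, x) ∈ Cnd}, ζ (Tt T (s (R, x)) x, s (R, x)) =
        ∫ p, ζ p * (g p).toReal ∂ν := by
  have hfin : IsFiniteMeasure ((volume : Measure (Ed d)).restrict {x ∈ Ω | (R, x) ∈ Cnd}) := by
    rw [h.restrict_eq]; exact h.isFinite_crossSet Cnd R
  have hS : MeasurableSet {x ∈ Ω | (R, x) ∈ Cnd} :=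
    h.measΩ.inter (measurable_prodMk_left c.measC)
  have hs : Measurable fun x : Ed d => s (R, x) := c.measS.comp measurable_prodMk_left
  have hX : Measurable fun x : Ed d => (Tt T (s (R, x)) x, s (R, x)) :=
    (c.measurable_point h.measT R).prodMk hs
  obtain ⟨K, hK⟩ := ((isCompact_closedBall (0 : Ed d) R).prod
    (isCompact_Icc (a := (0:ℝ)) (b := 1))).exists_bound_of_continuousOn hζ.continuousOn
  refine integral_of_map_eq_withDensity hX hg hmap hζ.measurable (K := K) ?_
  filter_upwards [ae_restrict_mem hS] with x hx
  refine hK _ ⟨?_, c.mem _ hx.2⟩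
  simpa using (c.hit _ hx.2).le

lemma ofReal_toReal_sub_sq_le (a b : ℝ≥0∞) :
    ENNReal.ofReal ((a.toReal - b.toReal) ^ 2) ≤ 2 * (a ^ 2 + b ^ 2) := by
  have ha : ENNReal.ofReal (a.toReal ^ 2) ≤ a ^ 2 := by
    rw [ENNReal.ofReal_pow ENNReal.toReal_nonneg]
    gcongr
    exact ENNReal.ofReal_toReal_le
  have hb : ENNReal.ofReal (b.toReal ^ 2) ≤ b ^ 2 := by
    rw [ENNReal.ofReal_pow ENNReal.toReal_nonneg]
    gcongr
    exact ENNReal.ofReal_toReal_le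
  calc ENNReal.ofReal ((a.toReal - b.toReal) ^ 2)
      ≤ ENNReal.ofReal (2 * (a.toReal ^ 2 + b.toReal ^ 2)) :=
        ENNReal.ofReal_le_ofReal (by nlinarith [sq_nonneg (a.toReal + b.toReal)])
    _ = 2 * (ENNReal.ofReal (a.toReal ^ 2) + ENNReal.ofReal (b.toReal ^ 2)) := by
        rw [ENNReal.ofReal_mul (by norm_num), ENNReal.ofReal_add (by positivity) (by positivity)]
        simp
    _ ≤ _ := by gcongr

/-- The signed flux `f^R` has a density whose square integral up to time `1 - τ` is
bounded, on average over `R`, by `τ^{-d} E`. -/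
lemma signed_flux {d : ℕ} (hd : 2 ≤ d) : ∃ C : ℝ≥0, ∀ (Ω G : Set (Ed d)) (T : Ed d → Ed d)
    (M τ : ℝ), GoodMap Ω T G M → τ ∈ Ioo (0:ℝ) 1 →
    ∃ Φ : ℝ → ℝ≥0∞, Measurable Φ ∧
      ∫⁻ R in Ioo (1/2 : ℝ) (3/2), Φ R ≤ C * (ENNReal.ofReal (1 / τ ^ d) *
        ∫⁻ x in ball (0 : Ed d) 2, ENNReal.ofReal (‖T x - x‖ ^ 2)) ∧
      ∀ᵐ R ∂(volume.restrict (Ioo (1/2 : ℝ) (3/2))), ∃ g : Ed d × ℝ → ℝ,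
        (∀ ζ : Ed d × ℝ → ℝ, Continuous ζ →
            (∫ x in {x ∈ Ω | 0 ≤ tmin T R x ∧ tmin T R x < tmax T R x ∧ tmax T R x < 1},
                ζ (Tt T (tmax T R x) x, tmax T R x)) -
              (∫ x in {x ∈ Ω | 0 < tmin T R x ∧ tmin T R x < tmax T R x ∧ tmax T R x ≤ 1},
                ζ (Tt T (tmin T R x) x, tmin T R x))
            = ∫ p, ζ p * g p ∂((sphMeas d R).prod (volume.restrict (Icc (0:ℝ) 1)))) ∧
        (∫⁻ p in Set.univ ×ˢ Icc (0:ℝ) (1 - τ), ENNReal.ofReal ((g p) ^ 2)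
          ∂((sphMeas d R).prod (volume.restrict (Icc (0:ℝ) 1)))) ≤ Φ R := by
  obtain ⟨C, hC⟩ := trace_density hd
  refine ⟨4 * C, fun Ω G T M τ h hτ => ?_⟩
  obtain ⟨Φ₁, hΦ₁, hi₁, hae₁⟩ := hC Ω G T M _ _ τ h (crossing_out h.measT) hτ
  obtain ⟨Φ₂, hΦ₂, hi₂, hae₂⟩ := hC Ω G T M _ _ τ h (crossing_in h.measT) hτ
  refine ⟨fun R => 2 * (Φ₁ R + Φ₂ R), (hΦ₁.add hΦ₂).const_mul _, ?_, ?_⟩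
  · have hm : Measurable fun R => Φ₁ R + Φ₂ R := hΦ₁.add hΦ₂
    rw [lintegral_const_mul _ hm, lintegral_add_left hΦ₁]
    refine (mul_le_mul_right (add_le_add hi₁ hi₂) _).trans (le_of_eq ?_)
    push_cast
    ring
  · filter_upwards [hae₁, hae₂] with R h1 h2
    obtain ⟨g₁, hg₁, hm₁, hb₁⟩ := h1
    obtain ⟨g₂, hg₂, hm₂, hb₂⟩ := h2
    refine ⟨fun p => (g₁ p).toReal - (g₂ p).toReal, fun ζ hζ => ?_, ?_⟩
    · obtain ⟨i1, e1⟩ := (crossing_out h.measT).integral_flux h hg₁ hm₁ hζ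
      obtain ⟨i2, e2⟩ := (crossing_in h.measT).integral_flux h hg₂ hm₂ hζ
      simp only [mul_sub]
      rw [integral_sub i1 i2, ← e1, ← e2]
      rfl
    · have hm1 : Measurable fun p => g₁ p ^ 2 := hg₁.pow_const 2
      have hm : Measurable fun p => g₁ p ^ 2 + g₂ p ^ 2 := hm1.add (hg₂.pow_const 2)
      refine (lintegral_mono fun p => ofReal_toReal_sub_sq_le (g₁ p) (g₂ p)).trans ?_
      rw [lintegral_const_mul _ hm, lintegral_add_left hm1]
      exact mul_le_mul_right (add_le_add hb₁ hb₂) _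

/-! ### Choice of the radius -/

/-- First moment method: a radius that is good for finitely many averaged quantities at once. -/
lemma exists_good_radius {n : ℕ} {F : Fin (n + 1) → ℝ → ℝ≥0∞} {A : Fin (n + 1) → ℝ≥0∞}
    (hF : ∀ i, Measurable (F i)) (hA : ∀ i, A i ≠ ∞)
    (h_int : ∀ i, ∫⁻ R in Ioo (1/2 : ℝ) (3/2), F i R ≤ A i) {P : ℝ → Prop}
    (hP : ∀ᵐ R ∂(volume.restrict (Ioo (1/2 : ℝ) (3/2))), P R) :
    ∃ R ∈ Ioo (1/2 : ℝ) (3/2), P R ∧ ∀ i, F i R ≤ ((n + 1 : ℕ) : ℝ≥0∞) * A i := by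
  have hprob : IsProbabilityMeasure ((volume : Measure ℝ).restrict (Ioo (1/2 : ℝ) (3/2))) :=
    ⟨by rw [Measure.restrict_apply_univ, Real.volume_Ioo]; norm_num⟩
  have hdiv : ∀ i, Measurable fun R => F i R / A i := fun i => (hF i).div_const _
  have hH : Measurable fun R => ∑ i, F i R / A i :=
    Finset.measurable_sum _ fun i _ => hdiv i
  have hN : ∀ᵐ R ∂((volume : Measure ℝ).restrict (Ioo (1/2 : ℝ) (3/2))),
      R ∈ Ioo (1/2 : ℝ) (3/2) ∧ P R := (ae_restrict_mem measurableSet_Ioo).and hP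
  obtain ⟨R, hR, hRle⟩ := exists_notMem_null_le_lintegral hH.aemeasurable (ae_iff.1 hN)
  have hR' : R ∈ Ioo (1/2 : ℝ) (3/2) ∧ P R := by
    by_contra hc
    exact hR hc
  have hle : ∫⁻ R in Ioo (1/2 : ℝ) (3/2), ∑ i, F i R / A i ≤ ((n + 1 : ℕ) : ℝ≥0∞) := by
    rw [lintegral_finsetSum _ fun i _ => hdiv i]
    calc ∑ i, ∫⁻ R in Ioo (1/2 : ℝ) (3/2), F i R / A i ≤ ∑ _i : Fin (n + 1), (1 : ℝ≥0∞) := by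
          refine Finset.sum_le_sum fun i _ => ?_
          simp only [div_eq_mul_inv]
          rw [lintegral_mul_const _ (hF i)]
          exact (mul_le_mul_left (h_int i) _).trans (ENNReal.div_self_le_one (a := A i))
      _ = _ := by simp
  refine ⟨R, hR'.1, hR'.2, fun i => ?_⟩
  have h1 : F i R / A i ≤ ((n + 1 : ℕ) : ℝ≥0∞) :=
    (Finset.single_le_sum (f := fun i => F i R / A i) (fun _ _ => zero_le) (Finset.mem_univ i)).trans
      (hRle.trans hle)
  exact (ENNReal.div_le_iff_le_mul (Or.inr (ENNReal.natCast_ne_top _)) (Or.inl (hA i))).1 h1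

section Averages

variable {d : ℕ} {Ω G : Set (Ed d)} {T : Ed d → Ed d} {M : ℝ} {Cnd : Set (ℝ × Ed d)}
  {s : ℝ × Ed d → ℝ}

lemma Crossing.average_norm (c : Crossing T Cnd s 0 1) (h : GoodMap Ω T G M) :
    ∫⁻ R in Ioo (1/2 : ℝ) (3/2), ∫⁻ x in crossSet G Cnd R, ENNReal.ofReal ‖T x - x‖ ≤
      ∫⁻ x in ball (0 : Ed d) 2, ENNReal.ofReal (‖T x - x‖ ^ 2) := by
  have hm : Measurable fun x => ENNReal.ofReal ‖T x - x‖ :=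
    (h.measT.sub measurable_id).norm.ennreal_ofReal
  refine (c.average h hm).trans ?_
  rw [sub_zero, ENNReal.ofReal_one, one_mul]
  refine (lintegral_mono_set (t := ball (0 : Ed d) 2) fun x hx => ?_).trans
    (lintegral_mono fun x => ?_)
  · simpa using hx.1
  · rw [← ENNReal.ofReal_mul (norm_nonneg _), sq]

lemma Crossing.average_norm_sq (c : Crossing T Cnd s 0 1) (h : GoodMap Ω T G M) :
    ∫⁻ R in Ioo (1/2 : ℝ) (3/2), ∫⁻ x in crossSet G Cnd R, ENNReal.ofReal (‖T x - x‖ ^ 2) ≤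
      ENNReal.ofReal M * ∫⁻ x in ball (0 : Ed d) 2, ENNReal.ofReal (‖T x - x‖ ^ 2) := by
  have hm : Measurable fun x => ENNReal.ofReal (‖T x - x‖ ^ 2) :=
    ((h.measT.sub measurable_id).norm.pow_const 2).ennreal_ofReal
  refine (c.average h hm).trans ?_
  rw [sub_zero, ENNReal.ofReal_one, one_mul, ← lintegral_const_mul _ hm]
  calc ∫⁻ x in nearSet T M, ENNReal.ofReal (‖T x - x‖ ^ 2) * ENNReal.ofReal ‖T x - x‖
      ≤ ∫⁻ x in nearSet T M, ENNReal.ofReal M * ENNReal.ofReal (‖T x - x‖ ^ 2) := by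
        refine setLIntegral_mono' (measurableSet_nearSet h.measT M) fun x hx => ?_
        rw [mul_comm]
        exact mul_le_mul_left (ENNReal.ofReal_le_ofReal hx.2.2) _
    _ ≤ _ := lintegral_mono_set fun x hx => by simpa using hx.1

/-- If good trajectories through the ball do not move, nothing crosses a sphere. -/
lemma Crossing.restrict_eq_zero {a b : ℝ} (c : Crossing T Cnd s a b) (h : GoodMap Ω T G 0) {R : ℝ}
    (hR : R ∈ Ioo (1/2 : ℝ) (3/2)) :
    (volume : Measure (Ed d)).restrict {x ∈ Ω | (R, x) ∈ Cnd} = 0 := by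
  rw [h.restrict_eq, Measure.restrict_eq_zero]
  refine measure_mono_null (t := sphere (0 : Ed d) R) (fun x hx => ?_)
    (Measure.addHaar_sphere_of_ne_zero _ _ (by have := hR.1; intro h0; norm_num [h0] at this))
  have h1 := (c.near h hR.2.le hx).2.1
  have h2 : T x - x = 0 := norm_le_zero_iff.1 h1
  have h3 := c.hit _ hx.2
  rw [Tt_eq, h2, smul_zero, add_zero] at h3
  simpa using h3

end Averages

/-- The terminal-layer flux, averaged over radii, with the coupling cost of `lay_density` replaced by
the Wasserstein distance. -/
lemma lay_flux {d : ℕ} (hd : 2 ≤ d) : ∃ C : ℝ≥0, ∀ (Ω G O : Set (Ed d)) (T : Ed d → Ed d)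
    (C₀ τ : ℝ) (μ : Measure (Ed d)) (Cnd : Set (ℝ × Ed d)) (s : ℝ × Ed d → ℝ)
    (κ E : ℝ≥0∞), τ ∈ Ioo (0 : ℝ) 1 →
    E = ∫⁻ x in ball (0 : Ed d) 2, ENNReal.ofReal (‖T x - x‖ ^ 2) →
    GoodMap Ω T G (C₀ * (E.toReal ^ ((1:ℝ) / (d + 2)))) → Crossing T Cnd s (1 - τ) 1 →
    Measure.map T (volume.restrict Ω) = μ →
    ball (0 : Ed d) 2 ⊆ Ω → IsOpen O → ball (0 : Ed d) 2 ⊆ O →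
    E + W2sq (μ.restrict O) (κ • volume.restrict O) ≤ 1 →
    ∃ F1 F2 : ℝ → ℝ≥0∞, Measurable F1 ∧ Measurable F2 ∧
      ∫⁻ R in Ioo (1/2 : ℝ) (3/2), F1 R ≤ C * (ENNReal.ofReal (τ ^ 2) * E +
        W2sq (μ.restrict O) (κ • volume.restrict O)) ∧
      ∫⁻ R in Ioo (1/2 : ℝ) (3/2), F2 R ≤
        C * (ENNReal.ofReal (τ * (C₀ * (E.toReal ^ ((1:ℝ) / (d + 2))))) *
          (ENNReal.ofReal (τ ^ 2) * E + W2sq (μ.restrict O) (κ • volume.restrict O))) ∧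
      ∀ R ∈ Ioo (1/2 : ℝ) (3/2), ∃ ρ : Ed d → ℝ, (∀ x, 0 ≤ ρ x) ∧
        (∫⁻ x, ENNReal.ofReal (ρ x ^ 2) ∂(sphMeas d R)) ≤ F1 R ∧
        W2geoSq R ((sphMeas d R).withDensity fun x => ENNReal.ofReal (ρ x))
            (Measure.map (fun x => Tt T (s (R, x)) x) (volume.restrict {x ∈ Ω | (R, x) ∈ Cnd})) ≤
          F2 R := by
  obtain ⟨C, hC⟩ := lay_density hd
  refine ⟨2 * C, fun Ω G O T C₀ τ μ Cnd s κ E hτ hE h c hμ hΩ2 hO hO2 hED => ?_⟩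
  set D := W2sq (μ.restrict O) (κ • volume.restrict O) with hD
  rcases eq_or_ne E 0 with hE0 | hE0
  · -- the infimum defining `D` need not be attained, but here the layer flux vanishes
    have hM : C₀ * (E.toReal ^ ((1:ℝ) / (d + 2))) = 0 := by
      have h0 : (1:ℝ) / (d + 2) ≠ 0 := by positivity
      rw [hE0, ENNReal.toReal_zero, Real.zero_rpow h0, mul_zero]
    rw [hM] at h
    refine ⟨0, 0, measurable_const, measurable_const, by simp, by simp, fun R hR =>
      ⟨0, fun _ => le_rfl, by simp, ?_⟩⟩
    rw [c.restrict_eq_zero h hR]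
    unfold W2geoSq
    refine sInf_le_of_le ⟨0, ?_, ?_, rfl⟩ (by simp)
    · simp
    · simp
  · have hD1 : D ≤ 1 := le_add_self.trans hED
    have hE1 : E ≤ 1 := le_self_add.trans hED
    have hτ2 : ENNReal.ofReal (τ ^ 2) ≤ 1 := by
      rw [ENNReal.ofReal_le_one]
      exact pow_le_one₀ hτ.1.le hτ.2.le
    have hpos : ENNReal.ofReal (τ ^ 2) * E ≠ 0 :=
      mul_ne_zero (ENNReal.ofReal_pos.2 (pow_pos hτ.1 2)).ne' hE0
    have hlt : D < ENNReal.ofReal (τ ^ 2) * E + D := by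
      rw [add_comm]
      exact ENNReal.lt_add_right (ne_top_of_le_ne_top ENNReal.one_ne_top hD1) hpos
    have hlt' := hlt
    rw [hD] at hlt
    conv at hlt => lhs; unfold W2sq
    obtain ⟨cost, ⟨π, hπ1, hπ2, rfl⟩, hcost⟩ := sInf_lt_iff.1 hlt
    rw [← hD] at hcost
    have hτE : ENNReal.ofReal (τ ^ 2) * E ≤ 1 := by
      calc ENNReal.ofReal (τ ^ 2) * E ≤ 1 * 1 := mul_le_mul' hτ2 hE1
        _ = 1 := one_mul 1
    have hcost2 : ∫⁻ p, ENNReal.ofReal (‖p.1 - p.2‖ ^ 2) ∂π ≤ 2 :=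
      hcost.le.trans ((add_le_add hτE hD1).trans (by norm_num))
    obtain ⟨F1, F2, hF1, hF2, hi1, hi2, hρ⟩ := hC Ω G O T _ τ μ Cnd s π κ hτ h c hμ hΩ2 hO hO2
      hπ1 hπ2 hcost2
    rw [← hE] at hi1 hi2
    have hsum : ENNReal.ofReal (τ ^ 2) * E + ∫⁻ p, ENNReal.ofReal (‖p.1 - p.2‖ ^ 2) ∂π ≤
        2 * (ENNReal.ofReal (τ ^ 2) * E + D) := by
      rw [two_mul]
      exact add_le_add le_self_add hcost.le
    refine ⟨F1, F2, hF1, hF2, hi1.trans ?_, hi2.trans ?_, hρ⟩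
    · refine (mul_le_mul_right hsum _).trans (le_of_eq ?_)
      push_cast
      ring
    · refine (mul_le_mul_right (mul_le_mul_right hsum _) _).trans (le_of_eq ?_)
      push_cast
      ring

/-- **good radius lemma.** If `E + D ≪ 1`, there is `R ∈ (1/2, 3/2)` such that
the flux `f^R` of `j` through `∂B_R` has an `L²`-controlled density up to time `1−τ`, and the
cumulated fluxes `f̄^R_±`, `f̄^{R,lay}_+` admit well-behaved boundary densities
`ρ̄^R_±, ρ̄^{R,lay}_+`. -/
theorem good_radius_lemma (d : ℕ) (hd : 2 ≤ d) :
    ∃ ε₀ C : ℝ, 0 < ε₀ ∧ 0 < C ∧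
    ∀ (Ω O : Set (Ed d)) (μ : Measure (Ed d)) (T : Ed d → Ed d) (τ : ℝ),
      τ ∈ Ioo (0:ℝ) 1 →
      Bornology.IsBounded Ω → MeasurableSet Ω → ball (0 : Ed d) 2 ⊆ Ω →
      IsOpen O → ball (0 : Ed d) 2 ⊆ O →
      (∃ K : Set (Ed d), IsCompact K ∧ μ Kᶜ = 0) → μ Set.univ = volume Ω →
      IsOptMap Ω μ T →
      (∫⁻ x in ball (0 : Ed d) 2, ENNReal.ofReal (‖T x - x‖ ^ 2)) +
          W2sq (μ.restrict O) ((μ O / volume O) • volume.restrict O)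
        ≤ ENNReal.ofReal ε₀ →
      ∃ R, R ∈ Ioo (1/2 : ℝ) (3/2) ∧
        -- (a) an `L²` bound on the flux `f^R` through `∂B_R` up to time `1−τ`:
        (∃ g : Ed d × ℝ → ℝ,
          (∀ ζ : Ed d × ℝ → ℝ, Continuous ζ →
            (∫ x in {x ∈ Ω | 0 ≤ tmin T R x ∧ tmin T R x < tmax T R x ∧ tmax T R x < 1},
                ζ (Tt T (tmax T R x) x, tmax T R x)) -
              (∫ x in {x ∈ Ω | 0 < tmin T R x ∧ tmin T R x < tmax T R x ∧ tmax T R x ≤ 1},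
                ζ (Tt T (tmin T R x) x, tmin T R x))
            = ∫ p, ζ p * g p ∂((sphMeas d R).prod (volume.restrict (Icc (0:ℝ) 1)))) ∧
          (∫⁻ p in Set.univ ×ˢ Icc (0:ℝ) (1 - τ), ENNReal.ofReal ((g p) ^ 2)
              ∂((sphMeas d R).prod (volume.restrict (Icc (0:ℝ) 1))))
            ≤ ENNReal.ofReal (C / τ ^ d) *
              ∫⁻ x in ball (0 : Ed d) 2, ENNReal.ofReal (‖T x - x‖ ^ 2)) ∧
        -- (b), (c), (d): boundary densities `ρ̄^R_±`, `ρ̄^{R,lay}_+`: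
        (∃ ρp ρm ρlay : Ed d → ℝ,
          (∀ x ∈ sphere (0 : Ed d) R, 0 ≤ ρp x ∧ 0 ≤ ρm x ∧ 0 ≤ ρlay x) ∧
          -- (b) `∫ (ρ̄^R_±)² ≲ E` and `W²_{∂B_R}(ρ̄^R_±, f̄^R_±) ≲ E^{(d+3)/(d+2)}`:
          (∫⁻ x, ENNReal.ofReal ((ρp x) ^ 2) ∂(sphMeas d R))
            ≤ ENNReal.ofReal C *
              (∫⁻ x in ball (0 : Ed d) 2, ENNReal.ofReal (‖T x - x‖ ^ 2)) ∧
          (∫⁻ x, ENNReal.ofReal ((ρm x) ^ 2) ∂(sphMeas d R))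
            ≤ ENNReal.ofReal C *
              (∫⁻ x in ball (0 : Ed d) 2, ENNReal.ofReal (‖T x - x‖ ^ 2)) ∧
          W2geoSq R ((sphMeas d R).withDensity (fun x => ENNReal.ofReal (ρp x)))
              (Fbarplus Ω T R τ)
            ≤ ENNReal.ofReal C *
              (∫⁻ x in ball (0 : Ed d) 2, ENNReal.ofReal (‖T x - x‖ ^ 2))
                ^ (((d:ℝ) + 3) / ((d:ℝ) + 2)) ∧
          W2geoSq R ((sphMeas d R).withDensity (fun x => ENNReal.ofReal (ρm x)))
              (Fbarminus Ω T R τ)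
            ≤ ENNReal.ofReal C *
              (∫⁻ x in ball (0 : Ed d) 2, ENNReal.ofReal (‖T x - x‖ ^ 2))
                ^ (((d:ℝ) + 3) / ((d:ℝ) + 2)) ∧
          -- (c) the terminal-layer density:
          (∫⁻ x, ENNReal.ofReal ((ρlay x) ^ 2) ∂(sphMeas d R))
            ≤ ENNReal.ofReal C *
              (ENNReal.ofReal (τ ^ 2) *
                  (∫⁻ x in ball (0 : Ed d) 2, ENNReal.ofReal (‖T x - x‖ ^ 2)) +
                W2sq (μ.restrict O) ((μ O / volume O) • volume.restrict O)) ∧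
          W2geoSq R ((sphMeas d R).withDensity (fun x => ENNReal.ofReal (ρlay x)))
              (Fbarlay Ω T R τ)
            ≤ ENNReal.ofReal C *
              (ENNReal.ofReal (τ ^ 3) *
                  (∫⁻ x in ball (0 : Ed d) 2, ENNReal.ofReal (‖T x - x‖ ^ 2))
                    ^ (((d:ℝ) + 3) / ((d:ℝ) + 2)) +
                ENNReal.ofReal τ *
                  (∫⁻ x in ball (0 : Ed d) 2, ENNReal.ofReal (‖T x - x‖ ^ 2))
                    ^ ((1:ℝ) / ((d:ℝ) + 2)) *
                  W2sq (μ.restrict O) ((μ O / volume O) • volume.restrict O)) ∧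
          -- (d) `sup_{∂B_R} ρ̄^R_± ≲ E^{1/(d+2)}`:
          (∀ x ∈ sphere (0 : Ed d) R,
            ρp x ≤ C * ((∫⁻ y in ball (0 : Ed d) 2,
                ENNReal.ofReal (‖T y - y‖ ^ 2)).toReal ^ ((1:ℝ) / (d + 2))) ∧
            ρm x ≤ C * ((∫⁻ y in ball (0 : Ed d) 2,
                ENNReal.ofReal (‖T y - y‖ ^ 2)).toReal ^ ((1:ℝ) / (d + 2))))) := by
  obtain ⟨ε₀, C₀, hε₀, hC₀, hgood⟩ := exists_goodMap d
  obtain ⟨Ca, hCa⟩ := signed_flux hd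
  obtain ⟨Cf, hCf⟩ := flux_density hd
  obtain ⟨Cl, hCl⟩ := lay_flux hd
  set C : ℝ := 7 * Ca + 7 * Cf + 112 * C₀ + 7 * Cl + 7 * Cl * C₀ + Cf * C₀ with hC
  have ha : (0 : ℝ) ≤ Ca := Ca.2
  have hf : (0 : ℝ) ≤ Cf := Cf.2
  have hl : (0 : ℝ) ≤ Cl := Cl.2
  have hlC : 0 ≤ (Cl : ℝ) * C₀ := mul_nonneg hl hC₀.le
  have hfC : 0 ≤ (Cf : ℝ) * C₀ := mul_nonneg hf hC₀.le
  have hCpos : 0 < C := by linarith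
  have hle1 : 7 * (Ca : ℝ) ≤ C := by linarith
  have hle2 : 7 * (Cf : ℝ) ≤ C := by linarith
  have hle3 : 112 * C₀ ≤ C := by linarith
  have hle4 : 7 * (Cl : ℝ) ≤ C := by linarith
  have hle5 : 7 * (Cl : ℝ) * C₀ ≤ C := by linarith
  have hle6 : (Cf : ℝ) * C₀ ≤ C := by linarith
  refine ⟨min ε₀ 1, C, lt_min hε₀ one_pos, hCpos, ?_⟩
  intro Ω O μ T τ hτ hΩb hΩm hΩ2 hO hO2 hK hmass hT hED
  set E := ∫⁻ x in ball (0 : Ed d) 2, ENNReal.ofReal (‖T x - x‖ ^ 2) with hE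
  set D := W2sq (μ.restrict O) ((μ O / volume O) • volume.restrict O) with hD
  have hED1 : E + D ≤ 1 := hED.trans
    ((ENNReal.ofReal_le_ofReal (min_le_right _ _)).trans ENNReal.ofReal_one.le)
  have hEε : E ≤ ENNReal.ofReal ε₀ := le_self_add.trans
    (hED.trans (ENNReal.ofReal_le_ofReal (min_le_left _ _)))
  have hEt : E ≠ ∞ := ne_top_of_le_ne_top ENNReal.ofReal_ne_top hEε
  have hDt : D ≠ ∞ := ne_top_of_le_ne_top ENNReal.one_ne_top (le_add_self.trans hED1)
  obtain ⟨G, hG⟩ := hgood Ω μ T hΩb hΩm hΩ2 hK hT hEε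
  rw [← hE] at hG
  set M : ℝ := C₀ * (E.toReal ^ ((1:ℝ) / (d + 2))) with hM
  have hM0 : 0 ≤ M := by positivity
  have hMe : ENNReal.ofReal M = ENNReal.ofReal C₀ * E ^ ((1:ℝ) / ((d:ℝ) + 2)) := by
    rw [hM, ENNReal.ofReal_mul hC₀.le, ENNReal.toReal_rpow,
      ENNReal.ofReal_toReal (ENNReal.rpow_ne_top_of_nonneg (by positivity) hEt)]
  have hpow : E ^ ((1:ℝ) / ((d:ℝ) + 2)) * E = E ^ (((d:ℝ) + 3) / ((d:ℝ) + 2)) := by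
    have h1 : ((d:ℝ) + 3) / ((d:ℝ) + 2) = (1:ℝ) / ((d:ℝ) + 2) + 1 := by
      field_simp
      ring
    rw [h1, ENNReal.rpow_add_of_nonneg _ _ (by positivity) zero_le_one, ENNReal.rpow_one]
  -- the seven quantities controlled on average over the radius
  obtain ⟨Φ, hΦ, hiΦ, haeΦ⟩ := hCa Ω G T M τ hG hτ
  rw [← hE] at hiΦ
  have cp := crossing_plus hG.measT hτ
  have cm := crossing_minus hG.measT hτ
  have cl := crossing_lay hG.measT hτ
  obtain ⟨F1, F2, hF1, hF2, hi1, hi2, hρl⟩ :=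
    hCl Ω G O T C₀ τ μ _ _ (μ O / volume O) E hτ hE hG cl hT.2.1 hΩ2 hO hO2 hED1
  rw [← hD] at hi1 hi2
  rw [← hM] at hi2
  have hm1 : Measurable fun x => ENNReal.ofReal ‖T x - x‖ :=
    (hG.measT.sub measurable_id).norm.ennreal_ofReal
  have hm2 : Measurable fun x => ENNReal.ofReal (‖T x - x‖ ^ 2) :=
    ((hG.measT.sub measurable_id).norm.pow_const 2).ennreal_ofReal
  have hp1 := cp.average_norm hG
  have hp2 := cp.average_norm_sq hG
  have hq1 := cm.average_norm hG
  have hq2 := cm.average_norm_sq hG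
  rw [← hE] at hp1 hp2 hq1 hq2
  have hmp1 := cp.measurable_lintegral hG hm1
  have hmp2 := cp.measurable_lintegral hG hm2
  have hmq1 := cm.measurable_lintegral hG hm1
  have hmq2 := cm.measurable_lintegral hG hm2
  obtain ⟨R, hR, hg, hall⟩ := exists_good_radius (n := 6)
    (F := ![Φ, _, _, _, _, F1, F2])
    (A := ![Ca * (ENNReal.ofReal (1 / τ ^ d) * E), E, ENNReal.ofReal M * E, E,
      ENNReal.ofReal M * E, Cl * (ENNReal.ofReal (τ ^ 2) * E + D),
      Cl * (ENNReal.ofReal (τ * M) * (ENNReal.ofReal (τ ^ 2) * E + D))])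
    (by
      intro i
      fin_cases i
      exacts [hΦ, hmp1, hmp2, hmq1, hmq2, hF1, hF2])
    (by
      have hs : ENNReal.ofReal (τ ^ 2) * E + D ≠ ∞ :=
        ENNReal.add_ne_top.2 ⟨ENNReal.mul_ne_top ENNReal.ofReal_ne_top hEt, hDt⟩
      intro i
      fin_cases i
      exacts [ENNReal.mul_ne_top ENNReal.coe_ne_top (ENNReal.mul_ne_top ENNReal.ofReal_ne_top hEt),
        hEt, ENNReal.mul_ne_top ENNReal.ofReal_ne_top hEt,
        hEt, ENNReal.mul_ne_top ENNReal.ofReal_ne_top hEt,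
        ENNReal.mul_ne_top ENNReal.coe_ne_top hs,
        ENNReal.mul_ne_top ENNReal.coe_ne_top (ENNReal.mul_ne_top ENNReal.ofReal_ne_top hs)])
    (by
      intro i
      fin_cases i
      exacts [hiΦ, hp1, hp2, hq1, hq2, hi1, hi2]) haeΦ
  have b0 := hall 0
  have b1 := hall 1
  have b2 := hall 2
  have b3 := hall 3
  have b4 := hall 4
  have b5 := hall 5
  have b6 := hall 6
  simp only [Matrix.cons_val] at b0 b1 b2 b3 b4 b5 b6
  have h7 : (((6 + 1 : ℕ) : ℝ≥0∞)) = ENNReal.ofReal 7 := by norm_num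
  rw [h7] at b0 b1 b2 b3 b4 b5 b6
  have hnn : ∀ c : ℝ≥0, (c : ℝ≥0∞) = ENNReal.ofReal c := fun c => ENNReal.ofReal_coe_nnreal.symm
  have h16 : (16 : ℝ≥0∞) = ENNReal.ofReal 16 := by norm_num
  -- the two elementary bounds for the cumulated fluxes
  have hsqb : ∀ a : ℝ≥0∞, a ≤ ENNReal.ofReal 7 * E → Cf * a ≤ ENNReal.ofReal C * E := by
    intro a hab
    refine (mul_le_mul_right hab _).trans ?_
    rw [← mul_assoc, hnn Cf, ← ENNReal.ofReal_mul hf]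
    exact mul_le_mul_left (ENNReal.ofReal_le_ofReal (by linarith)) _
  have hWb : ∀ a : ℝ≥0∞, a ≤ ENNReal.ofReal 7 * (ENNReal.ofReal M * E) →
      16 * a ≤ ENNReal.ofReal C * E ^ (((d:ℝ) + 3) / ((d:ℝ) + 2)) := by
    intro a hab
    refine (mul_le_mul_right hab _).trans ?_
    rw [hMe, mul_assoc (ENNReal.ofReal C₀), hpow, ← mul_assoc, ← mul_assoc, h16,
      ← ENNReal.ofReal_mul (by norm_num), ← ENNReal.ofReal_mul (by norm_num)]
    exact mul_le_mul_left (ENNReal.ofReal_le_ofReal (by linarith)) _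
  obtain ⟨g, hg1, hg2⟩ := hg
  obtain ⟨ρp, hρp0, hρpM, hρp2, hρpW⟩ := hCf Ω G T M _ _ 0 1 hM0 hG cp R hR
  obtain ⟨ρm, hρm0, hρmM, hρm2, hρmW⟩ := hCf Ω G T M _ _ 0 1 hM0 hG cm R hR
  obtain ⟨ρl, hρl0, hρl2, hρlW⟩ := hρl R hR
  refine ⟨R, hR, ⟨g, hg1, ?_⟩, ρp, ρm, ρl, fun x _ => ⟨hρp0 x, hρm0 x, hρl0 x⟩,
    hρp2.trans (hsqb _ b1), hρm2.trans (hsqb _ b3), hρpW.trans (hWb _ b2),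
    hρmW.trans (hWb _ b4), ?_, ?_, ?_⟩
  · refine hg2.trans (b0.trans ?_)
    rw [← mul_assoc, ← mul_assoc, hnn Ca, ← ENNReal.ofReal_mul (by norm_num),
      ← ENNReal.ofReal_mul (mul_nonneg (by norm_num) ha), mul_one_div]
    have hτd : 0 < τ ^ d := pow_pos hτ.1 d
    exact mul_le_mul_left (ENNReal.ofReal_le_ofReal (by gcongr)) _
  · refine hρl2.trans (b5.trans ?_)
    rw [← mul_assoc, hnn Cl, ← ENNReal.ofReal_mul (by norm_num)]
    exact mul_le_mul_left (ENNReal.ofReal_le_ofReal hle4) _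
  · refine hρlW.trans (b6.trans ?_)
    have e : ENNReal.ofReal 7 * (Cl * (ENNReal.ofReal (τ * M) * (ENNReal.ofReal (τ ^ 2) * E + D))) =
        ENNReal.ofReal (7 * Cl * C₀) * (ENNReal.ofReal (τ ^ 3) *
          E ^ (((d:ℝ) + 3) / ((d:ℝ) + 2)) +
            ENNReal.ofReal τ * E ^ ((1:ℝ) / ((d:ℝ) + 2)) * D) := by
      rw [hnn Cl, ENNReal.ofReal_mul hτ.1.le, hMe, ← hpow, ENNReal.ofReal_pow hτ.1.le,
        ENNReal.ofReal_pow hτ.1.le, ENNReal.ofReal_mul (mul_nonneg (by norm_num) hl),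
        ENNReal.ofReal_mul (by norm_num)]
      ring
    rw [e]
    exact mul_le_mul_left (ENNReal.ofReal_le_ofReal hle5) _
  · have hfin : ∀ r : ℝ, r ≤ Cf * M → r ≤ C * (E.toReal ^ ((1:ℝ) / (d + 2))) := by
      intro r hr
      refine hr.trans ?_
      rw [hM, ← mul_assoc]
      exact mul_le_mul_of_nonneg_right hle6 (by positivity)
    exact fun x hx => ⟨hfin _ (hρpM x hx), hfin _ (hρmM x hx)⟩
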